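/- Let n ≥ 1 be an integer such that 2n is 'odd' (i.e., q−1 does not divide 2n). Then π̃, ζ(n) and ζ(n,n) are algebraically independent over k̄. -/

import Mathlib

/-!
Write `x = θ`, let `τ` raise the coefficients of a power series in `t` over `k_∞` to the `q`-th
power, and let `ω = ∏_{j ≥ 1} (1 - t / x ^ (q ^ j))`, so that `π̃ = η ^ q / ω(θ)` (`tprod_eq`).

**Deformation of the zeta values.**  Let `S_d(n)` be the sum of `a⁻ⁿ` over the monic `a` of degree
`d`.  For suitable `ℓ_d` and a nonzero `c ∈ 𝔽_q[θ]`, the number `c(θ) S_d(n) ℓ_d ^ n` is the value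
`V(θ, θ ^ (q ^ d))` of one polynomial `V` independent of `d` (`rep_psum`).  Hence there are
series `f₁`, `f₂` converging beyond `t = θ ^ q`, with values
`f₁(θ) = c(θ) ω(θ) ^ n ζ(n)` and `f₂(θ) = (c(θ) ω(θ) ^ n) ^ 2 ζ(n,n)`, such that
`τ f₁ = (-x ^ q) ^ n (f₁ - V ω ^ n)` and
`τ f₂ = (-x ^ q) ^ (2 n) (f₂ - V ω ^ n (f₁ - V ω ^ n))` (`exists_f`, `exists_pair`).

**Independence of the functions.**  Let `β = t - x ^ q` and `E = 𝔽_q(x, t)`.  The quotients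
`s₁ = f₁ / ω ^ n` and `s₂ = f₂ / ω ^ (2 n)` satisfy `τ s₁ = β ^ n (s₁ - V)` and
`τ s₂ = β ^ (2 n) (s₂ - V s₁ + V ^ 2)`.  The field `E` contains no nonzero solution of
`τ y = β ^ m y` with `m ≠ 0` (`rigid_ratField`).  An algebraic relation for `s₁` over such a field
leads to a semi-invariant polynomial, and from it either to a `p`-power of `s₁` lying in `E` or to
a nonzero solution of `τ y = β ^ (n p ^ i) y` (`Step.semi`).  The latter exists only if
`q - 1 ∣ n p ^ i` (`hom_zero`); this is where the oddness enters.  The former is impossible because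
`f₁(θ) ≠ 0`, whereas rationality of a `p`-power of `s₁` would force `f₁` to vanish at the zero
`t = θ ^ q` of `ω` and then at `t = θ` (`notMem_ratField`).  The same argument works one step up
for `s₂` over `E(s₁)`, with `f₁ ^ 2 - 2 f₂` in the role of `f₁` (`Step.second`); there the
condition is `q - 1 ∤ 2 n`.  Finally `ω ^ n` is transcendental over `E(s₁, s₂)` because that field
is rigid too (`Rigid.trOver`).  Thus `ω ^ n, f₁, f₂`, and likewise their `τ ^ k`-images, are
algebraically independent over `E` (`IsPair.algIndep_twk`).

**From functions to values.**  Monomials of bounded weight in `ω ^ n, f₁, f₂` form a vector `ψ`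
with `δ τ(ψ) = B ψ` for a polynomial `δ` and a polynomial matrix `B`.  By `lin_indep_values`, which
rests on an auxiliary linear form from Siegel's lemma and a comparison of an upper bound
(`upper_bound`) with a lower bound (`lower_bound`), linear independence of all the twists of `ψ`
over `𝔽_q[x, t]` implies that of the values `ψ(θ)` over `𝔽_q[θ]`.  So the values `ω(θ) ^ n`,
`f₁(θ)`, `f₂(θ)` satisfy no polynomial relation over `𝔽_q[θ]` (`IsPair.values`).

**Conclusion.**  Independence persists over `k̄` (`algIndep_kbar`), and the three values lie in the
field generated over `k̄` by `π̃`, `ζ(n)`, `ζ(n,n)`, which must therefore be algebraically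
independent as well (`algIndep_of_mem_adjoin`).
-/


/-!
Setting: `Fq` is a finite field with `q = Fintype.card Fq` elements and characteristic
`p = ringChar Fq`.  The field `k_∞ = 𝔽_q((1/θ))` is realized as `Kinf Fq`, the field of
formal Laurent series over `Fq` in the variable `u = θ⁻¹`; thus `theta Fq = u⁻¹` plays
the role of `θ` (it is the single Hahn series supported in degree `-1`), and polynomials
in `θ` are evaluated in `Kinf Fq` via `Polynomial.aeval (theta Fq)`.  `KinfBar Fq` is a
fixed algebraic closure `k̄_∞` of `k_∞`.
-/

set_option synthInstance.maxHeartbeats 1000000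
set_option maxHeartbeats 1000000

noncomputable section

variable (Fq : Type) [Field Fq] [Fintype Fq]

/-- `k_∞ = 𝔽_q((1/θ))`, with its `1/θ`-adic (valued) topology. -/
abbrev Kinf := LaurentSeries Fq

/-- `θ ∈ k_∞`, the inverse of the Laurent-series variable. -/
def theta : Kinf Fq := HahnSeries.single (-1 : ℤ) (1 : Fq)

/-- The multizeta value `ζ(n 0, …, n (d-1))`: the sum, over all `d`-tuples of monic
polynomials `a i ∈ 𝔽_q[θ]` with `deg (a 0) > deg (a 1) > … > deg (a (d-1)) ≥ 0`, of
`1 / (a 0 ^ n 0 ⋯ a (d-1) ^ n (d-1))`, computed in `k_∞`. -/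
def mzv (d : ℕ) (n : Fin d → ℕ) : Kinf Fq :=
  ∑' a : {a : Fin d → Polynomial Fq //
      (∀ i, (a i).Monic) ∧ ∀ i j : Fin d, i < j → (a j).degree < (a i).degree},
    (∏ i, Polynomial.aeval (theta Fq) (a.1 i) ^ n i)⁻¹

/-- A fixed algebraic closure `k̄_∞` of `k_∞`. -/
abbrev KinfBar := AlgebraicClosure (Kinf Fq)

/-- The image of `θ` in `k̄_∞`. -/
def thetaBar : KinfBar Fq := algebraMap (Kinf Fq) (KinfBar Fq) (theta Fq)

/-- The fundamental period `π̃ = (−θ)^{q/(q−1)} ∏_{i≥1} (1−θ^{1−qⁱ})⁻¹` of the Carlitz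
module, relative to a chosen `(q−1)`-st root `η` of `−θ` (so `(−θ)^{q/(q−1)} = η ^ q`);
the convergent product is computed in `k_∞` and mapped into `k̄_∞`. -/
def pitilde (η : KinfBar Fq) : KinfBar Fq :=
  η ^ Fintype.card Fq *
    algebraMap (Kinf Fq) (KinfBar Fq)
      (∏' i : ℕ, (1 - theta Fq ^ ((1 : ℤ) - (Fintype.card Fq : ℤ) ^ (i + 1)))⁻¹)

/-- `k = 𝔽_q(θ)`, as a subfield of `k̄_∞`. -/
def kSub : Subfield (KinfBar Fq) :=
  Subfield.closure
    (Set.range (fun a : Fq => algebraMap (Kinf Fq) (KinfBar Fq) (algebraMap Fq (Kinf Fq) a)) ∪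
      {thetaBar Fq})

/-- `k̄`, the algebraic closure of `k` inside `k̄_∞`. -/
def kbar : IntermediateField (kSub Fq) (KinfBar Fq) :=
  algebraicClosure (kSub Fq) (KinfBar Fq)

/-! ### Complete discretely valued fields -/

section CompleteFields

open WithZero

/-- A field with a `ℤᵐ⁰`-valued valuation `v` for which geometrically decaying series
converge.  The value `exp c` plays the role of "degree `c`". -/
class CVal (K : Type*) [Field K] where
  /-- The valuation. -/
  v : Valuation K (WithZero (Multiplicative ℤ))
  lim : ∀ (c : ℤ) (u : ℕ → K), (∀ i : ℕ, v (u i) ≤ exp (c - (i : ℤ))) →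
    ∃ s, ∀ N : ℕ, v (s - ∑ i ∈ Finset.range N, u i) ≤ exp (c - (N : ℤ))

variable {K : Type*} [Field K] [CVal K]

/-- `a` has degree at most `c`. -/
def DLe (a : K) (c : ℤ) : Prop := CVal.v a ≤ exp c

lemma DLe.mono {a : K} {c d : ℤ} (h : DLe a c) (hcd : c ≤ d) : DLe a d :=
  le_trans h (exp_le_exp.2 hcd)

lemma DLe.zero (c : ℤ) : DLe (0 : K) c := by simp [DLe]

lemma DLe.one : DLe (1 : K) 0 := by simp [DLe]

lemma DLe.add {a b : K} {c : ℤ} (ha : DLe a c) (hb : DLe b c) : DLe (a + b) c :=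
  CVal.v.map_add_le ha hb

lemma DLe.neg {a : K} {c : ℤ} (ha : DLe a c) : DLe (-a) c := by
  simpa [DLe, Valuation.map_neg] using ha

lemma DLe.sub {a b : K} {c : ℤ} (ha : DLe a c) (hb : DLe b c) : DLe (a - b) c :=
  CVal.v.map_sub_le ha hb

lemma DLe.mul {a b : K} {c d : ℤ} (ha : DLe a c) (hb : DLe b d) : DLe (a * b) (c + d) := by
  simp only [DLe, map_mul, exp_add]
  exact mul_le_mul' ha hb

lemma DLe.pow {a : K} {c : ℤ} (ha : DLe a c) (n : ℕ) : DLe (a ^ n) (n * c) := by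
  have : DLe (a ^ n) (n • c) := by
    simp only [DLe, map_pow, exp_nsmul]
    exact pow_le_pow_left' ha n
  simpa using this

lemma DLe.sum {ι : Type*} {s : Finset ι} {f : ι → K} {c : ℤ} (h : ∀ i ∈ s, DLe (f i) c) :
    DLe (∑ i ∈ s, f i) c := by
  classical
  induction s using Finset.induction_on with
  | empty => simpa using DLe.zero c
  | insert a s ha ih =>
    rw [Finset.sum_insert ha]
    exact (h a (by simp)).add (ih fun i hi => h i (by simp [hi]))

lemma DLe.prod {ι : Type*} {s : Finset ι} {f : ι → K} {c : ι → ℤ} (h : ∀ i ∈ s, DLe (f i) (c i)) :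
    DLe (∏ i ∈ s, f i) (∑ i ∈ s, c i) := by
  classical
  induction s using Finset.induction_on with
  | empty => simpa using DLe.one
  | insert a s ha ih =>
    rw [Finset.prod_insert ha, Finset.sum_insert ha]
    exact (h a (by simp)).mul (ih fun i hi => h i (by simp [hi]))

lemma dle_of_v_eq {a : K} {c : ℤ} (h : CVal.v a = exp c) : DLe a c := h.le

lemma dle_iff_of_v_eq {a : K} {c d : ℤ} (h : CVal.v a = exp c) : DLe a d ↔ c ≤ d := by
  rw [DLe, h, exp_le_exp]

lemma v_inv_eq {a : K} {c : ℤ} (h : CVal.v a = exp c) : CVal.v a⁻¹ = exp (-c) := by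
  rw [map_inv₀, h, exp_neg]

lemma v_mul_eq {a b : K} {c d : ℤ} (h : CVal.v a = exp c) (h' : CVal.v b = exp d) :
    CVal.v (a * b) = exp (c + d) := by
  rw [map_mul, h, h', exp_add]

lemma v_pow_eq {a : K} {c : ℤ} (h : CVal.v a = exp c) (n : ℕ) : CVal.v (a ^ n) = exp (n * c) := by
  rw [map_pow, h, ← exp_nsmul]; simp

lemma exists_v_eq {a : K} (h : a ≠ 0) : ∃ c : ℤ, CVal.v a = exp c :=
  ⟨WithZero.log (CVal.v a), (exp_log (by simpa using h)).symm⟩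

lemma eq_zero_of_dle {a : K} (h : ∀ N : ℕ, ∃ c : ℤ, c ≤ -(N : ℤ) ∧ DLe a c) : a = 0 := by
  by_contra h0
  obtain ⟨c, hc⟩ := exists_v_eq h0
  obtain ⟨d, hd, hd'⟩ := h (c.natAbs + 1)
  rw [dle_iff_of_v_eq hc] at hd'
  omega

lemma ne_zero_of_v_eq {a : K} {c : ℤ} (h : CVal.v a = exp c) : a ≠ 0 := by
  rintro rfl
  simp at h
  exact exp_ne_zero h.symm

/-- Adding a term of smaller degree does not change the degree. -/
lemma v_add_eq {a b : K} {c d : ℤ} (h : CVal.v a = exp c) (h' : DLe b d) (hd : d < c) :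
    CVal.v (a + b) = exp c := by
  rw [← h]
  apply Valuation.map_add_eq_of_lt_left
  rw [h]
  exact lt_of_le_of_lt h' (exp_lt_exp.2 hd)

/-- A bounded function on `ℕ`, not identically zero, attains its maximal degree. -/
lemma exists_max {f : ℕ → K} {c : ℤ} (h : ∀ m, DLe (f m) c) (hf : ∃ m, f m ≠ 0) :
    ∃ (e : ℤ) (m : ℕ), CVal.v (f m) = exp e ∧ ∀ m, DLe (f m) e := by
  classical
  obtain ⟨m₀, hm₀⟩ := hf
  obtain ⟨e₀, he₀⟩ := exists_v_eq hm₀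
  have hex : ∃ k : ℕ, ∃ m, CVal.v (f m) = exp (c - k) := by
    refine ⟨(c - e₀).toNat, m₀, ?_⟩
    have := (dle_iff_of_v_eq he₀).1 (h m₀)
    rw [he₀]; congr 1; omega
  obtain ⟨m, hm⟩ := Nat.find_spec hex
  refine ⟨_, m, hm, fun m' => ?_⟩
  by_cases h0 : f m' = 0
  · rw [h0]; exact DLe.zero _
  obtain ⟨e, he⟩ := exists_v_eq h0
  have h1 := (dle_iff_of_v_eq he).1 (h m')
  have : Nat.find hex ≤ (c - e).toNat := Nat.find_min' hex ⟨m', by rw [he]; congr 1; omega⟩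
  rw [dle_iff_of_v_eq he]; omega

/-- The sum of a geometrically decaying series (and `0` for other series). -/
noncomputable def lsum (u : ℕ → K) : K :=
  open Classical in
  if h : ∃ c : ℤ, ∀ i : ℕ, DLe (u i) (c - (i : ℤ)) then
    (CVal.lim h.choose u h.choose_spec).choose else 0

lemma lsum_tail {u : ℕ → K} {c : ℤ} {r : ℤ} (hr : 1 ≤ r) (h : ∀ i : ℕ, DLe (u i) (c - r * i))
    (N : ℕ) : DLe (lsum u - ∑ i ∈ Finset.range N, u i) (c - r * N) := by
  have hex : ∃ c : ℤ, ∀ i : ℕ, DLe (u i) (c - (i : ℤ)) :=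
    ⟨c, fun i => (h i).mono (by nlinarith [Int.natCast_nonneg i])⟩
  have hs : ∀ N : ℕ, DLe (lsum u - ∑ i ∈ Finset.range N, u i) (hex.choose - (N : ℤ)) := by
    rw [lsum, dif_pos hex]
    exact (CVal.lim hex.choose u hex.choose_spec).choose_spec
  -- Compare with a partial sum long enough for the bound coming from `lim` to be negligible.
  set M : ℕ := N + (hex.choose - (c - r * N)).toNat
  have h1 := (hs M).mono (d := c - r * N) (by omega)
  have h2 : lsum u - ∑ i ∈ Finset.range N, u i =
      (lsum u - ∑ i ∈ Finset.range M, u i) + ∑ i ∈ Finset.Ico N M, u i := by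
    rw [Finset.sum_Ico_eq_sub _ (by omega)]; ring
  rw [h2]
  refine h1.add (DLe.sum fun i hi => (h i).mono ?_)
  have : (N : ℤ) ≤ i := by exact_mod_cast (Finset.mem_Ico.1 hi).1
  nlinarith

lemma lsum_dle {u : ℕ → K} {c : ℤ} {r : ℤ} (hr : 1 ≤ r) (h : ∀ i : ℕ, DLe (u i) (c - r * i)) :
    DLe (lsum u) c := by
  simpa using lsum_tail hr h 0

lemma lsum_unique {u : ℕ → K} {c : ℤ} (h : ∀ i : ℕ, DLe (u i) (c - (i : ℤ))) {s : K} {d : ℤ}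
    (hs : ∀ N : ℕ, DLe (s - ∑ i ∈ Finset.range N, u i) (d - N)) : lsum u = s := by
  rw [← sub_eq_zero]
  apply eq_zero_of_dle
  intro N
  set M : ℕ := N + c.natAbs + d.natAbs
  refine ⟨-N, le_rfl, ?_⟩
  have h1 := (lsum_tail (r := 1) le_rfl (by simpa using h) M).mono (d := -N) (by omega)
  have h2 := (hs M).mono (d := -N) (by omega)
  have := h1.sub h2
  simpa using this

lemma lsum_succ {u : ℕ → K} {c : ℤ} (h : ∀ i : ℕ, DLe (u i) (c - (i : ℤ))) :
    lsum u = u 0 + lsum (fun i => u (i + 1)) := by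
  apply lsum_unique h (d := c)
  intro N
  have h' : ∀ i : ℕ, DLe (u (i + 1)) ((c - 1) - 1 * (i : ℤ)) := fun i =>
    (h (i + 1)).mono (by push_cast; omega)
  rcases N with _ | N
  · simpa using ((h 0).mono (by simp)).add ((lsum_dle le_rfl h').mono (by omega))
  · rw [Finset.sum_range_succ']
    have := lsum_tail le_rfl h' N
    have e : u 0 + lsum (fun i => u (i + 1)) - (∑ k ∈ Finset.range N, u (k + 1) + u 0) =
      lsum (fun i => u (i + 1)) - ∑ k ∈ Finset.range N, u (k + 1) := by ring
    rw [e]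
    exact this.mono (by push_cast; omega)

lemma lsum_mul_left {u : ℕ → K} {c : ℤ} (h : ∀ i : ℕ, DLe (u i) (c - (i : ℤ))) (a : K) :
    lsum (fun i => a * u i) = a * lsum u := by
  rcases eq_or_ne a 0 with rfl | ha
  · simp only [zero_mul]
    exact lsum_unique (c := 0) (d := 0) (fun i => DLe.zero _) (fun N => by simpa using DLe.zero _)
  obtain ⟨e, he⟩ := exists_v_eq ha
  refine lsum_unique (c := c + e) (d := e + c) ?_ ?_
  · intro i
    exact ((dle_of_v_eq he).mul (h i)).mono (by omega)
  · intro N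
    rw [← Finset.mul_sum, ← mul_sub]
    exact ((dle_of_v_eq he).mul (lsum_tail (r := 1) le_rfl (by simpa using h) N)).mono (by omega)

section Frobenius

variable (𝔽 : Type*) [Field 𝔽] [Fintype 𝔽] [Algebra 𝔽 K]

/-- The `q`-power Frobenius of an `𝔽_q`-algebra, as a ring homomorphism. -/
noncomputable def frob (R : Type*) [CommRing R] [Algebra 𝔽 R] : R →+* R :=
  (FiniteField.frobeniusAlgHom 𝔽 R).toRingHom

@[simp] lemma frob_apply {R : Type*} [CommRing R] [Algebra 𝔽 R] (a : R) :
    frob 𝔽 R a = a ^ Fintype.card 𝔽 := rfl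

lemma two_le_q : 2 ≤ Fintype.card 𝔽 := Fintype.one_lt_card

/-- The Artin–Schreier type equation `b = u + a⁻¹ b ^ q` has a solution no larger than `u`
when `u` is small relative to `a`. -/
lemma exists_solve {u a : K} {e α : ℤ} (hu : DLe u e) (ha : CVal.v a = exp α)
    (h : ((Fintype.card 𝔽 : ℤ) - 1) * e < α) :
    ∃ b : K, b = u + a⁻¹ * b ^ Fintype.card 𝔽 ∧ ∀ c : ℤ, c ≤ e → DLe u c → DLe b c := by
  set q := Fintype.card 𝔽 with hq
  have hq2 : (2 : ℤ) ≤ q := by exact_mod_cast two_le_q 𝔽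
  let T : ℕ → K := fun k => Nat.rec u (fun _ t => a⁻¹ * t ^ q) k
  have hT0 : T 0 = u := rfl
  have hTs : ∀ k, T (k + 1) = a⁻¹ * T k ^ q := fun k => rfl
  have hT : ∀ c : ℤ, c ≤ e → DLe u c → ∀ k : ℕ, DLe (T k) (c - k) := by
    intro c hc huc k
    induction k with
    | zero => simpa [hT0] using huc
    | succ k ih =>
      rw [hTs]
      refine ((dle_of_v_eq (v_inv_eq ha)).mul (ih.pow q)).mono ?_
      push_cast
      nlinarith [Int.natCast_nonneg k]
  have hTe := hT e le_rfl hu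
  refine ⟨lsum T, ?_, fun c hc huc => by
    simpa using lsum_dle (r := 1) le_rfl (by simpa using hT c hc huc)⟩
  rw [lsum_succ hTe]
  simp only [hTs, hT0]
  have hTq : ∀ k : ℕ, DLe (T k ^ q) ((α + e - 1) - k) := by
    intro k
    refine ((hTe k).pow q).mono ?_
    nlinarith [Int.natCast_nonneg k]
  rw [lsum_mul_left hTq]
  congr 2
  set b := u + a⁻¹ * lsum (fun k => T k ^ q) with hb
  have hbT : b = lsum T := by
    rw [lsum_succ hTe]; simp only [hTs, hT0]; rw [lsum_mul_left hTq]
  rw [hbT]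
  apply lsum_unique hTq (d := q * e)
  intro N
  have := (lsum_tail (r := 1) le_rfl (by simpa using hTe) N).pow q
  have e1 : (lsum T - ∑ i ∈ Finset.range N, T i) ^ q =
      lsum T ^ q - ∑ i ∈ Finset.range N, T i ^ q := by
    have := map_sub (frob 𝔽 K) (lsum T) (∑ i ∈ Finset.range N, T i)
    simpa [map_sum] using this
  rw [← e1]
  refine this.mono ?_
  nlinarith [Int.natCast_nonneg N]

end Frobenius

end CompleteFields

/-! ### Power series with geometric bounds and their evaluation -/

section BoundedSeries

open WithZero PowerSeries

variable {K : Type*} [Field K] [CVal K]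

/-- The `m`-th coefficient of `f` has degree at most `c - r m`. -/
def PB (f : K⟦X⟧) (c r : ℤ) : Prop := ∀ m : ℕ, DLe (coeff m f) (c - r * m)

/-- Some bound `PB f c r` holds. -/
def Conv (f : K⟦X⟧) (r : ℤ) : Prop := ∃ c, PB f c r

lemma PB.mono {f : K⟦X⟧} {c c' r : ℤ} (h : PB f c r) (hc : c ≤ c') : PB f c' r :=
  fun m => (h m).mono (by omega)

lemma PB.mono' {f : K⟦X⟧} {c c' r r' : ℤ} (h : PB f c r) (hc : c ≤ c') (hr : r' ≤ r) :
    PB f c' r' :=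
  fun m => (h m).mono (by nlinarith [Int.natCast_nonneg m])

lemma PB.add {f g : K⟦X⟧} {c r : ℤ} (hf : PB f c r) (hg : PB g c r) : PB (f + g) c r :=
  fun m => by rw [map_add]; exact (hf m).add (hg m)

lemma PB.neg {f : K⟦X⟧} {c r : ℤ} (hf : PB f c r) : PB (-f) c r :=
  fun m => by rw [map_neg]; exact (hf m).neg

lemma PB.sub {f g : K⟦X⟧} {c r : ℤ} (hf : PB f c r) (hg : PB g c r) : PB (f - g) c r :=
  fun m => by rw [map_sub]; exact (hf m).sub (hg m)

lemma PB.mul {f g : K⟦X⟧} {c d r : ℤ} (hf : PB f c r) (hg : PB g d r) : PB (f * g) (c + d) r := by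
  intro m
  rw [coeff_mul]
  refine DLe.sum fun p hp => ((hf _).mul (hg _)).mono ?_
  rw [← Finset.HasAntidiagonal.mem_antidiagonal.1 hp]
  push_cast
  nlinarith

lemma PB.zero (c r : ℤ) : PB (0 : K⟦X⟧) c r := fun m => by simpa using DLe.zero _

lemma PB.C {a : K} {c : ℤ} (h : DLe a c) (r : ℤ) : PB (C a) c r := by
  intro m
  rw [coeff_C]
  split_ifs with hm
  · subst hm; simpa using h
  · exact DLe.zero _

lemma PB.one (r : ℤ) : PB (1 : K⟦X⟧) 0 r := by
  rw [← map_one (PowerSeries.C (R := K))]; exact PB.C DLe.one r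

lemma PB.X (r : ℤ) : PB (X : K⟦X⟧) r r := by
  intro m
  rw [coeff_X]
  split_ifs with hm
  · subst hm; simpa using DLe.one
  · exact DLe.zero _

lemma PB.pow {f : K⟦X⟧} {c r : ℤ} (hf : PB f c r) (n : ℕ) : PB (f ^ n) (n * c) r := by
  induction n with
  | zero => simpa using PB.one r
  | succ n ih =>
    rw [pow_succ]
    exact (ih.mul hf).mono (by push_cast; nlinarith)

lemma PB.sum {ι : Type*} {s : Finset ι} {f : ι → K⟦X⟧} {c r : ℤ} (h : ∀ i ∈ s, PB (f i) c r) :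
    PB (∑ i ∈ s, f i) c r := by
  intro m
  rw [map_sum]
  exact DLe.sum fun i hi => h i hi m

lemma PB.inv {f : K⟦X⟧} {r : ℤ} (hf : PB f 0 r) (h1 : constantCoeff f = 1) : PB f⁻¹ 0 r := by
  intro m
  induction m using Nat.strong_induction_on with
  | _ m ih =>
    rw [PowerSeries.coeff_inv]
    split_ifs with hm
    · subst hm; simpa [h1] using DLe.one
    · simp only [h1, inv_one, neg_mul, one_mul]
      refine (DLe.sum fun p hp => ?_).neg
      split_ifs with hp2
      · refine ((hf _).mul (ih _ hp2)).mono ?_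
        rw [← Finset.HasAntidiagonal.mem_antidiagonal.1 hp]
        push_cast
        nlinarith
      · exact DLe.zero _

lemma Conv.add {f g : K⟦X⟧} {r : ℤ} (hf : Conv f r) (hg : Conv g r) : Conv (f + g) r := by
  obtain ⟨c, hc⟩ := hf
  obtain ⟨d, hd⟩ := hg
  exact ⟨max c d, (hc.mono (le_max_left _ _)).add (hd.mono (le_max_right _ _))⟩

lemma Conv.neg {f : K⟦X⟧} {r : ℤ} (hf : Conv f r) : Conv (-f) r :=
  hf.imp fun _ h => h.neg

lemma Conv.sub {f g : K⟦X⟧} {r : ℤ} (hf : Conv f r) (hg : Conv g r) : Conv (f - g) r := by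
  rw [sub_eq_add_neg]; exact hf.add hg.neg

lemma Conv.mul {f g : K⟦X⟧} {r : ℤ} (hf : Conv f r) (hg : Conv g r) : Conv (f * g) r := by
  obtain ⟨c, hc⟩ := hf
  obtain ⟨d, hd⟩ := hg
  exact ⟨c + d, hc.mul hd⟩

lemma Conv.pow {f : K⟦X⟧} {r : ℤ} (hf : Conv f r) (n : ℕ) : Conv (f ^ n) r := by
  obtain ⟨c, hc⟩ := hf
  exact ⟨_, hc.pow n⟩

lemma Conv.C (a : K) (r : ℤ) : Conv (C a) r := by
  rcases eq_or_ne a 0 with rfl | h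
  · exact ⟨0, by simpa using PB.zero 0 r⟩
  · obtain ⟨c, hc⟩ := exists_v_eq h
    exact ⟨c, PB.C (dle_of_v_eq hc) r⟩

lemma Conv.X (r : ℤ) : Conv (X : K⟦X⟧) r := ⟨r, PB.X r⟩

lemma Conv.one (r : ℤ) : Conv (1 : K⟦X⟧) r := ⟨0, PB.one r⟩

lemma Conv.zero (r : ℤ) : Conv (0 : K⟦X⟧) r := ⟨0, PB.zero 0 r⟩

lemma Conv.sum {ι : Type*} {s : Finset ι} {f : ι → K⟦X⟧} {r : ℤ} (h : ∀ i ∈ s, Conv (f i) r) :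
    Conv (∑ i ∈ s, f i) r := by
  classical
  induction s using Finset.induction_on with
  | empty => simpa using Conv.zero r
  | insert a s ha ih =>
    rw [Finset.sum_insert ha]
    exact (h a (by simp)).add (ih fun i hi => h i (by simp [hi]))

lemma Conv.mono {f : K⟦X⟧} {r r' : ℤ} (h : Conv f r) (hr : r' ≤ r) : Conv f r' := by
  obtain ⟨c, hc⟩ := h
  exact ⟨c, hc.mono' le_rfl hr⟩

/-- The value at `a` of a power series, meaningful when the series is `Conv f r` for some
`r` larger than the degree of `a`. -/
noncomputable def ev (a : K) (f : K⟦X⟧) : K := lsum fun m => coeff m f * a ^ m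

lemma PB.term_dle {f : K⟦X⟧} {c r : ℤ} {a : K} (hf : PB f c r) (ha : DLe a (r - 1)) (k m : ℕ) :
    DLe (coeff (k + m) f * a ^ m) (c - r * k - (m : ℤ)) := by
  refine ((hf _).mul (ha.pow m)).mono ?_
  push_cast
  nlinarith

/-- Division of a convergent series by `X - a`; the quotient has a better bound. -/
lemma PB.exists_div {f : K⟦X⟧} {c r : ℤ} {a : K} (hf : PB f c r) (ha : DLe a (r - 1)) :
    ∃ g : K⟦X⟧, PB g (c - r) r ∧ f = PowerSeries.C (ev a f) + (PowerSeries.X - PowerSeries.C a) * g := by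
  have key : ∀ k : ℕ, lsum (fun i => coeff (k + i) f * a ^ i) =
      coeff k f + a * lsum (fun i => coeff (k + 1 + i) f * a ^ i) := by
    intro k
    rw [lsum_succ (hf.term_dle ha k), ← lsum_mul_left (hf.term_dle ha (k + 1))]
    simp only [add_zero, pow_zero, mul_one, pow_succ]
    congr 2
    ext i
    rw [show k + 1 + i = k + (i + 1) by ring]; ring
  refine ⟨PowerSeries.mk fun m => lsum fun i => coeff (m + 1 + i) f * a ^ i, ?_, ?_⟩
  · intro m
    rw [coeff_mk]
    have := lsum_dle (r := 1) le_rfl (by simpa using hf.term_dle ha (m + 1))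
    refine this.mono ?_
    push_cast; nlinarith
  · ext m
    rcases m with _ | m
    · have := key 0
      simp only [zero_add] at this
      simp [sub_mul, ev, this]
    · have := key (m + 1)
      simp only [sub_mul, map_add, map_sub, coeff_C, coeff_succ_X_mul, coeff_C_mul, coeff_mk]
      rw [this]; simp

lemma div_unique {r c : ℤ} {a d : K} {g : K⟦X⟧} (hg : PB g c r) (ha : DLe a (r - 1))
    (h : C d = (X - C a) * g) : d = 0 := by
  have h0 : d = - (a * coeff 0 g) := by
    have := congrArg (coeff 0) h
    simpa [sub_mul, coeff_C] using this
  have hs : ∀ m, coeff m g = a * coeff (m + 1) g := by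
    intro m
    have := congrArg (coeff (m + 1)) h
    simp only [sub_mul, map_sub, coeff_C, coeff_succ_X_mul, coeff_C_mul] at this
    simpa [sub_eq_zero] using this.symm
  have hp : ∀ m, coeff 0 g = a ^ m * coeff m g := by
    intro m
    induction m with
    | zero => simp
    | succ m ih => rw [ih, hs m, pow_succ]; ring
  have : coeff 0 g = 0 := by
    apply eq_zero_of_dle
    intro N
    rw [hp (N + c.natAbs)]
    refine ⟨_, ?_, (ha.pow _).mul (hg _)⟩
    push_cast
    have : c ≤ |c| := le_abs_self c
    nlinarith
  rw [h0, this]; simp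

lemma Conv.exists_div {f : K⟦X⟧} {r : ℤ} {a : K} (hf : Conv f r) (ha : DLe a (r - 1)) :
    ∃ g : K⟦X⟧, Conv g r ∧ f = PowerSeries.C (ev a f) + (PowerSeries.X - PowerSeries.C a) * g := by
  obtain ⟨c, hc⟩ := hf
  obtain ⟨g, hg, h⟩ := hc.exists_div ha
  exact ⟨g, ⟨_, hg⟩, h⟩

lemma ev_eq {f g : K⟦X⟧} {r : ℤ} {a d : K} (hf : Conv f r) (ha : DLe a (r - 1)) (hg : Conv g r)
    (h : f = C d + (X - C a) * g) : ev a f = d := by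
  obtain ⟨g', hg', h'⟩ := hf.exists_div ha
  obtain ⟨c, hc⟩ := hg.sub hg'
  have : C (ev a f - d) = (X - C a) * (g - g') := by
    rw [map_sub]
    linear_combination h - h'
  exact sub_eq_zero.1 (div_unique hc ha this)

section
variable {f g : K⟦X⟧} {r : ℤ} {a : K}

lemma ev_C (r : ℤ) (ha : DLe a (r - 1)) (b : K) : ev a (C b) = b :=
  ev_eq (Conv.C b r) ha (Conv.zero r) (by simp)

lemma ev_X (r : ℤ) (ha : DLe a (r - 1)) : ev a X = a :=
  ev_eq (Conv.X r) ha (Conv.one r) (by simp)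

lemma ev_add (ha : DLe a (r - 1)) (hf : Conv f r) (hg : Conv g r) :
    ev a (f + g) = ev a f + ev a g := by
  obtain ⟨f', hf', h⟩ := hf.exists_div ha
  obtain ⟨g', hg', h'⟩ := hg.exists_div ha
  refine ev_eq (hf.add hg) ha (hf'.add hg') ?_
  rw [map_add]; linear_combination h + h'

lemma ev_mul (ha : DLe a (r - 1)) (hf : Conv f r) (hg : Conv g r) :
    ev a (f * g) = ev a f * ev a g := by
  obtain ⟨f', hf', h⟩ := hf.exists_div ha
  obtain ⟨g', hg', h'⟩ := hg.exists_div ha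
  refine ev_eq (hf.mul hg) ha ((hf'.mul hg).add ((Conv.C (ev a f) r).mul hg')) ?_
  rw [map_mul]; linear_combination g * h + C (ev a f) * h'

lemma ev_neg (ha : DLe a (r - 1)) (hf : Conv f r) : ev a (-f) = - ev a f := by
  obtain ⟨f', hf', h⟩ := hf.exists_div ha
  refine ev_eq hf.neg ha hf'.neg ?_
  rw [map_neg]; linear_combination - h

lemma ev_sub (ha : DLe a (r - 1)) (hf : Conv f r) (hg : Conv g r) :
    ev a (f - g) = ev a f - ev a g := by
  rw [sub_eq_add_neg, ev_add ha hf hg.neg, ev_neg ha hg, sub_eq_add_neg]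

lemma ev_one (r : ℤ) (ha : DLe a (r - 1)) : ev a (1 : K⟦X⟧) = 1 := by
  rw [← map_one (C (R := K)), ev_C r ha]

lemma ev_zero (r : ℤ) (ha : DLe a (r - 1)) : ev a (0 : K⟦X⟧) = 0 := by
  rw [← map_zero (C (R := K)), ev_C r ha]

lemma ev_pow (ha : DLe a (r - 1)) (hf : Conv f r) (n : ℕ) : ev a (f ^ n) = ev a f ^ n := by
  induction n with
  | zero => simpa using ev_one r ha
  | succ n ih => rw [pow_succ, pow_succ, ev_mul ha (hf.pow n) hf, ih]

lemma ev_sum {ι : Type*} {s : Finset ι} {F : ι → K⟦X⟧} (ha : DLe a (r - 1))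
    (h : ∀ i ∈ s, Conv (F i) r) : ev a (∑ i ∈ s, F i) = ∑ i ∈ s, ev a (F i) := by
  classical
  induction s using Finset.induction_on with
  | empty => simpa using ev_zero r ha
  | insert b s hb ih =>
    rw [Finset.sum_insert hb, Finset.sum_insert hb, ev_add ha (h b (by simp))
      (Conv.sum fun i hi => h i (by simp [hi])), ih fun i hi => h i (by simp [hi])]

/-- Evaluation does not increase degrees. -/
lemma PB.ev_dle {c : ℤ} (hf : PB f c r) (ha : DLe a (r - 1)) : DLe (ev a f) c := by
  have := lsum_dle (r := 1) le_rfl (by simpa using hf.term_dle ha 0)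
  simpa [ev] using this

end

/-- Division by a product of linear factors, one zero at a time. -/
lemma PB.exists_div_prod {f : K⟦X⟧} {c r : ℤ} (hf : PB f c r) (y : ℕ → K) (N : ℕ)
    (hy : ∀ j < N, DLe (y j) (r - 1)) (hinj : ∀ i < N, ∀ j < N, y i = y j → i = j)
    (h0 : ∀ j < N, ev (y j) f = 0) :
    ∃ g : K⟦X⟧, PB g (c - r * N) r ∧
      f = (∏ j ∈ Finset.range N, (PowerSeries.X - PowerSeries.C (y j))) * g := by
  induction N with
  | zero => exact ⟨f, by simpa using hf, by simp⟩
  | succ N ih =>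
    obtain ⟨g, hg, h⟩ := ih (fun j hj => hy j (by omega))
      (fun i hi j hj => hinj i (by omega) j (by omega)) (fun j hj => h0 j (by omega))
    have hN := hy N (by omega)
    have hprod : ∀ M : ℕ, M ≤ N →
        Conv (∏ j ∈ Finset.range M, (PowerSeries.X - PowerSeries.C (y j))) r ∧
        ev (y N) (∏ j ∈ Finset.range M, (PowerSeries.X - PowerSeries.C (y j))) =
          ∏ j ∈ Finset.range M, (y N - y j) := by
      intro M hM
      induction M with
      | zero => simpa using ⟨Conv.one r, ev_one r hN⟩
      | succ M ihM =>
        obtain ⟨h1, h2⟩ := ihM (by omega)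
        have h3 : Conv (PowerSeries.X - PowerSeries.C (y M)) r := (Conv.X r).sub (Conv.C _ r)
        rw [Finset.prod_range_succ, Finset.prod_range_succ]
        refine ⟨h1.mul h3, ?_⟩
        rw [ev_mul hN h1 h3, h2, ev_sub hN (Conv.X r) (Conv.C _ r), ev_X r hN, ev_C r hN]
    obtain ⟨h1, h2⟩ := hprod N le_rfl
    have h3 := h0 N (by omega)
    rw [h, ev_mul hN h1 ⟨_, hg⟩, h2, mul_eq_zero, Finset.prod_eq_zero_iff] at h3
    have h4 : ev (y N) g = 0 := by
      refine h3.resolve_left ?_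
      rintro ⟨j, hj, hj'⟩
      have hj := Finset.mem_range.1 hj
      have := hinj N (by omega) j (by omega) (sub_eq_zero.1 hj')
      omega
    obtain ⟨g', hg', h'⟩ := hg.exists_div hN
    refine ⟨g', hg'.mono (by push_cast; nlinarith), ?_⟩
    rw [h4, map_zero, zero_add] at h'
    rw [Finset.prod_range_succ, h, mul_assoc, ← h']

section Frobenius

variable (𝔽 : Type*) [Field 𝔽] [Fintype 𝔽] [Algebra 𝔽 K]

/-- The coefficientwise Frobenius twist of power series. -/
noncomputable def tw : K⟦X⟧ →+* K⟦X⟧ := PowerSeries.map (frob 𝔽 K)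

@[simp] lemma coeff_tw (f : K⟦X⟧) (m : ℕ) : coeff m (tw 𝔽 f) = coeff m f ^ Fintype.card 𝔽 := by
  simp [tw]

@[simp] lemma tw_C (a : K) : tw 𝔽 (C a) = C (a ^ Fintype.card 𝔽) := by simp [tw]

@[simp] lemma tw_X : tw 𝔽 (X : K⟦X⟧) = X := by simp [tw]

lemma PB.tw {f : K⟦X⟧} {c r : ℤ} (hf : PB f c r) :
    PB (tw 𝔽 f) (Fintype.card 𝔽 * c) (Fintype.card 𝔽 * r) := by
  intro m
  rw [coeff_tw]
  exact ((hf m).pow _).mono (by nlinarith)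

lemma Conv.tw {f : K⟦X⟧} {r : ℤ} (hf : Conv f r) : Conv (tw 𝔽 f) (Fintype.card 𝔽 * r) := by
  obtain ⟨c, hc⟩ := hf
  exact ⟨_, hc.tw 𝔽⟩

lemma tw_injective : Function.Injective (tw 𝔽 : K⟦X⟧ →+* K⟦X⟧) := by
  intro f g h
  ext m
  have := congrArg (coeff m) h
  simp only [coeff_tw] at this
  exact (frob 𝔽 K).injective this

lemma ev_tw {f : K⟦X⟧} {r : ℤ} {a : K} (ha : DLe a (r - 1)) (hf : Conv f r) :
    ev (a ^ Fintype.card 𝔽) (tw 𝔽 f) = ev a f ^ Fintype.card 𝔽 := by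
  obtain ⟨f', hf', h⟩ := hf.exists_div ha
  refine ev_eq (hf.tw 𝔽) ?_ (hf'.tw 𝔽) ?_
  · have : (2 : ℤ) ≤ Fintype.card 𝔽 := by exact_mod_cast two_le_q 𝔽
    exact (ha.pow _).mono (by nlinarith)
  · conv_lhs => rw [h]
    simp

/-- The `k`-fold twist. -/
noncomputable def twk (k : ℕ) : K⟦X⟧ →+* K⟦X⟧ := (tw 𝔽 : K⟦X⟧ →+* K⟦X⟧) ^ k

lemma twk_zero (f : K⟦X⟧) : twk 𝔽 0 f = f := rfl

lemma twk_succ (k : ℕ) (f : K⟦X⟧) : twk 𝔽 (k + 1) f = tw 𝔽 (twk 𝔽 k f) := by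
  rw [twk, pow_succ']; rfl

lemma twk_succ' (k : ℕ) (f : K⟦X⟧) : twk 𝔽 (k + 1) f = twk 𝔽 k (tw 𝔽 f) := by
  rw [twk, pow_succ]; rfl

lemma twk_add (k l : ℕ) (f : K⟦X⟧) : twk 𝔽 (k + l) f = twk 𝔽 k (twk 𝔽 l f) := by
  rw [twk, pow_add]; rfl

@[simp] lemma coeff_twk (k : ℕ) (f : K⟦X⟧) (m : ℕ) :
    coeff m (twk 𝔽 k f) = coeff m f ^ Fintype.card 𝔽 ^ k := by
  induction k with
  | zero => simp [twk_zero]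
  | succ k ih => rw [twk_succ, coeff_tw, ih, ← pow_mul, pow_succ]

lemma twk_injective (k : ℕ) : Function.Injective (twk 𝔽 k : K⟦X⟧ →+* K⟦X⟧) := by
  induction k with
  | zero => exact fun a b h => h
  | succ k ih =>
    intro f g h
    rw [twk_succ, twk_succ] at h
    exact ih (tw_injective 𝔽 h)

lemma PB.twk {f : K⟦X⟧} {c r : ℤ} (hf : PB f c r) (k : ℕ) :
    PB (twk 𝔽 k f) ((Fintype.card 𝔽 : ℤ) ^ k * c) ((Fintype.card 𝔽 : ℤ) ^ k * r) := by
  intro m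
  rw [coeff_twk]
  exact ((hf m).pow _).mono (by push_cast; nlinarith)

lemma Conv.twk {f : K⟦X⟧} {r : ℤ} (hf : Conv f r) (k : ℕ) :
    Conv (twk 𝔽 k f) ((Fintype.card 𝔽 : ℤ) ^ k * r) := by
  obtain ⟨c, hc⟩ := hf
  exact ⟨_, hc.twk 𝔽 k⟩

lemma ev_twk {f : K⟦X⟧} {r : ℤ} {a : K} (ha : DLe a (r - 1)) (hf : Conv f r) (k : ℕ) :
    ev (a ^ Fintype.card 𝔽 ^ k) (twk 𝔽 k f) = ev a f ^ Fintype.card 𝔽 ^ k := by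
  induction k with
  | zero => simp [twk_zero]
  | succ k ih =>
    rw [twk_succ, pow_succ, pow_mul, pow_mul, ← ih]
    refine ev_tw 𝔽 (r := (Fintype.card 𝔽 : ℤ) ^ k * r) ?_ (hf.twk 𝔽 k)
    refine (ha.pow _).mono ?_
    have : (1 : ℤ) ≤ (Fintype.card 𝔽 : ℤ) ^ k :=
      one_le_pow₀ (by exact_mod_cast (two_le_q 𝔽).trans' one_le_two)
    push_cast
    nlinarith

end Frobenius

end BoundedSeries

/-! ### Bivariate polynomials as power series -/

section Bivariate

open WithZero PowerSeries

variable {K : Type*} [Field K] [CVal K]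
variable {𝔽 : Type*} [Field 𝔽] [Fintype 𝔽] [Algebra 𝔽 K]

/-- Nonzero constants have degree `0`. -/
lemma v_algebraMap {c : 𝔽} (hc : c ≠ 0) : CVal.v (algebraMap 𝔽 K c) = exp 0 := by
  have h0 : algebraMap 𝔽 K c ≠ 0 := by simpa using hc
  obtain ⟨e, he⟩ := exists_v_eq h0
  have h1 : algebraMap 𝔽 K c ^ (Fintype.card 𝔽 - 1) = 1 := by
    rw [← map_pow, FiniteField.pow_card_sub_one_eq_one c hc, map_one]
  have h2 := v_pow_eq he (Fintype.card 𝔽 - 1)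
  rw [h1, map_one, ← exp_zero, exp_inj] at h2
  have := two_le_q 𝔽
  have h3 : ((Fintype.card 𝔽 - 1 : ℕ) : ℤ) ≠ 0 := by omega
  have : e = 0 := by
    rcases mul_eq_zero.1 h2.symm with h | h
    · exact absurd h h3
    · exact h
  rw [he, this]

lemma dle_algebraMap (c : 𝔽) : DLe (algebraMap 𝔽 K c) 0 := by
  rcases eq_or_ne c 0 with rfl | h
  · simpa using DLe.zero 0
  · exact dle_of_v_eq (v_algebraMap h)

variable {x : K}

lemma dle_aeval {a : K} {e : ℤ} (he : 0 ≤ e) (ha : DLe a e) (p : Polynomial 𝔽) {n : ℕ}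
    (hn : p.natDegree ≤ n) : DLe (Polynomial.aeval a p) (n * e) := by
  rw [Polynomial.aeval_eq_sum_range]
  refine DLe.sum fun i hi => ?_
  rw [Algebra.smul_def]
  refine ((dle_algebraMap _).mul (ha.pow i)).mono ?_
  have : (i : ℤ) ≤ n := by
    have := Finset.mem_range.1 hi
    omega
  nlinarith

lemma v_aeval (hx : CVal.v x = exp 1) {p : Polynomial 𝔽} (hp : p ≠ 0) :
    CVal.v (Polynomial.aeval x p) = exp (p.natDegree : ℤ) := by
  rw [Polynomial.aeval_eq_sum_range, Finset.sum_range_succ, add_comm]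
  have h1 : CVal.v (p.coeff p.natDegree • x ^ p.natDegree) = exp (p.natDegree : ℤ) := by
    rw [Algebra.smul_def]
    have := v_mul_eq (v_algebraMap (K := K) (Polynomial.leadingCoeff_ne_zero.2 hp))
      (v_pow_eq hx p.natDegree)
    simpa using this
  refine v_add_eq (d := p.natDegree - 1) h1 ?_ (by omega)
  refine DLe.sum fun i hi => ?_
  rw [Algebra.smul_def]
  refine ((dle_algebraMap _).mul ((dle_of_v_eq hx).pow i)).mono ?_
  have := Finset.mem_range.1 hi
  omega

lemma aeval_inj (hx : CVal.v x = exp 1) {p : Polynomial 𝔽} (h : Polynomial.aeval x p = 0) :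
    p = 0 := by
  by_contra hp
  exact ne_zero_of_v_eq (v_aeval hx hp) h

/-- The embedding of `𝔽[t][x]` into power series in `t`: the inner variable goes to the power
series variable, the outer one to the constant `x`. -/
noncomputable def emb (x : K) : Polynomial (Polynomial 𝔽) →+* K⟦X⟧ :=
  Polynomial.eval₂RingHom (Polynomial.aeval (X : K⟦X⟧)).toRingHom (C x)

/-- Evaluation of a bivariate polynomial: inner variable at `a`, outer variable at `b`. -/
noncomputable def evp (a b : K) : Polynomial (Polynomial 𝔽) →+* K :=
  Polynomial.eval₂RingHom (Polynomial.aeval a).toRingHom b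

lemma coeff_aeval_X (p : Polynomial 𝔽) (m : ℕ) :
    coeff m (Polynomial.aeval (X : K⟦X⟧) p) = algebraMap 𝔽 K (p.coeff m) := by
  have h : Polynomial.aeval (X : K⟦X⟧) p = ((p.map (algebraMap 𝔽 K) : Polynomial K) : K⟦X⟧) := by
    induction p using Polynomial.induction_on' with
    | add p q hp hq => simp [hp, hq]
    | monomial n a =>
      simp only [Polynomial.aeval_monomial, Polynomial.map_monomial, Polynomial.coe_monomial]
      rw [PowerSeries.algebraMap_apply]
      ext m
      rw [coeff_C_mul, coeff_X_pow, PowerSeries.coeff_monomial]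
      simp
  rw [h]; simp

lemma coeff_emb (P : Polynomial (Polynomial 𝔽)) (m : ℕ) :
    coeff m (emb x P) = ∑ i ∈ Finset.range (P.natDegree + 1),
      algebraMap 𝔽 K ((P.coeff i).coeff m) * x ^ i := by
  simp only [emb, Polynomial.coe_eval₂RingHom, Polynomial.eval₂_eq_sum_range, map_sum]
  refine Finset.sum_congr rfl fun i _ => ?_
  rw [← map_pow, mul_comm, coeff_C_mul, mul_comm]
  congr 1
  exact coeff_aeval_X _ _

/-- The coefficient of `t ^ m`, a polynomial in the outer variable. -/
noncomputable def slice (m : ℕ) (P : Polynomial (Polynomial 𝔽)) : Polynomial 𝔽 :=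
  ∑ i ∈ Finset.range (P.natDegree + 1), Polynomial.monomial i ((P.coeff i).coeff m)

lemma slice_coeff (m : ℕ) (P : Polynomial (Polynomial 𝔽)) (i : ℕ) :
    (slice m P).coeff i = (P.coeff i).coeff m := by
  simp only [slice, Polynomial.finsetSum_coeff, Polynomial.coeff_monomial]
  rw [Finset.sum_ite_eq' ]
  split_ifs with h
  · rfl
  · rw [Polynomial.coeff_eq_zero_of_natDegree_lt (n := i) (by simpa using h), Polynomial.coeff_zero]

lemma coeff_emb' (P : Polynomial (Polynomial 𝔽)) (m : ℕ) :
    coeff m (emb x P) = Polynomial.aeval x (slice m P) := by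
  rw [coeff_emb, slice, map_sum]
  simp [Polynomial.aeval_monomial]

lemma emb_inj (hx : CVal.v x = exp 1) : Function.Injective (emb (𝔽 := 𝔽) x) := by
  rw [injective_iff_map_eq_zero]
  intro P h
  ext i m
  have h1 := aeval_inj hx (by rw [← coeff_emb', h]; simp : Polynomial.aeval x (slice m P) = 0)
  rw [← slice_coeff, h1]; simp

lemma dle_coeff_emb (hx : CVal.v x = exp 1) (P : Polynomial (Polynomial 𝔽)) (m : ℕ) :
    DLe (coeff m (emb x P)) P.natDegree := by
  rw [coeff_emb']
  have : (slice m P).natDegree ≤ P.natDegree := by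
    rw [Polynomial.natDegree_le_iff_coeff_eq_zero]
    intro i hi
    rw [slice_coeff, Polynomial.coeff_eq_zero_of_natDegree_lt hi]; simp
  simpa using dle_aeval zero_le_one (dle_of_v_eq hx) _ this

/-- The degree in the inner variable is at most `D`. -/
def TLe (P : Polynomial (Polynomial 𝔽)) (D : ℕ) : Prop := ∀ i, (P.coeff i).natDegree ≤ D

lemma TLe.mono {P : Polynomial (Polynomial 𝔽)} {D D' : ℕ} (h : TLe P D) (hD : D ≤ D') :
    TLe P D' := fun i => (h i).trans hD

lemma TLe.mul {P Q : Polynomial (Polynomial 𝔽)} {D D' : ℕ} (h : TLe P D) (h' : TLe Q D') :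
    TLe (P * Q) (D + D') := by
  intro i
  rw [Polynomial.coeff_mul]
  refine Polynomial.natDegree_sum_le_of_forall_le _ _ fun p _ => ?_
  exact Polynomial.natDegree_mul_le.trans (add_le_add (h _) (h' _))

lemma TLe.sum {ι : Type*} {s : Finset ι} {P : ι → Polynomial (Polynomial 𝔽)} {D : ℕ}
    (h : ∀ i ∈ s, TLe (P i) D) : TLe (∑ i ∈ s, P i) D := by
  intro j
  rw [Polynomial.finsetSum_coeff]
  exact Polynomial.natDegree_sum_le_of_forall_le _ _ fun i hi => h i hi j

lemma exists_TLe (P : Polynomial (Polynomial 𝔽)) : ∃ D, TLe P D := by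
  refine ⟨∑ i ∈ P.support, (P.coeff i).natDegree, fun i => ?_⟩
  by_cases hi : i ∈ P.support
  · exact Finset.single_le_sum (f := fun i => (P.coeff i).natDegree) (fun _ _ => Nat.zero_le _) hi
  · rw [Polynomial.notMem_support_iff.1 hi]; simp

lemma TLe.pb_emb (hx : CVal.v x = exp 1) {P : Polynomial (Polynomial 𝔽)} {D : ℕ} (h : TLe P D)
    {r : ℤ} (hr : 0 ≤ r) : PB (emb x P) (P.natDegree + r * D) r := by
  intro m
  by_cases hm : m ≤ D
  · refine (dle_coeff_emb hx P m).mono ?_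
    have : (m : ℤ) ≤ D := by exact_mod_cast hm
    nlinarith
  · rw [coeff_emb']
    have : slice m P = 0 := by
      ext i
      rw [slice_coeff, Polynomial.coeff_eq_zero_of_natDegree_lt (lt_of_le_of_lt (h i) (by omega))]
      simp
    rw [this, map_zero]; exact DLe.zero _

lemma conv_emb (hx : CVal.v x = exp 1) (P : Polynomial (Polynomial 𝔽)) (r : ℤ) :
    Conv (emb x P) r := by
  obtain ⟨D, hD⟩ := exists_TLe P
  exact Conv.mono ⟨_, hD.pb_emb hx (r := |r|) (abs_nonneg r)⟩ (le_abs_self r)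

lemma ev_emb (hx : CVal.v x = exp 1) {a : K} {r : ℤ} (ha : DLe a (r - 1))
    (P : Polynomial (Polynomial 𝔽)) : ev a (emb x P) = evp a x P := by
  have h1 : ∀ p : Polynomial 𝔽, ev a (Polynomial.aeval (X : K⟦X⟧) p) = Polynomial.aeval a p ∧
      Conv (Polynomial.aeval (X : K⟦X⟧) p) r := by
    intro p
    induction p using Polynomial.induction_on' with
    | add p q hp hq =>
      rw [map_add, ev_add ha hp.2 hq.2, hp.1, hq.1, map_add]
      exact ⟨rfl, hp.2.add hq.2⟩
    | monomial n c =>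
      rw [Polynomial.aeval_monomial, Polynomial.aeval_monomial, PowerSeries.algebraMap_apply]
      exact ⟨by rw [ev_mul ha (Conv.C _ _) ((Conv.X r).pow n), ev_C r ha, ev_pow ha (Conv.X r),
        ev_X r ha]; , (Conv.C _ _).mul ((Conv.X r).pow n)⟩
  induction P using Polynomial.induction_on' with
  | add p q hp hq =>
    rw [map_add, ev_add ha (conv_emb hx _ r) (conv_emb hx _ r), hp, hq, map_add]
  | monomial n p =>
    simp only [emb, evp, Polynomial.coe_eval₂RingHom, Polynomial.eval₂_monomial]
    have := h1 p
    have e : (Polynomial.aeval (X : K⟦X⟧)).toRingHom p = Polynomial.aeval (X : K⟦X⟧) p := rfl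
    rw [e, ev_mul ha this.2 ((Conv.C x r).pow n), ev_pow ha (Conv.C x r), ev_C r ha, this.1]
    rfl

/-- The twist `x ↦ x ^ (q ^ k)` of bivariate polynomials. -/
noncomputable def sg (k : ℕ) :
    Polynomial (Polynomial 𝔽) →+* Polynomial (Polynomial 𝔽) :=
  (Polynomial.expand (Polynomial 𝔽) (Fintype.card 𝔽 ^ k)).toRingHom

lemma qpow_pos (k : ℕ) : 0 < Fintype.card 𝔽 ^ k :=
  pow_pos (by have := two_le_q 𝔽; omega) k

lemma natDegree_sg (k : ℕ) (P : Polynomial (Polynomial 𝔽)) :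
    (sg k P).natDegree = P.natDegree * Fintype.card 𝔽 ^ k :=
  Polynomial.natDegree_expand _ _

lemma TLe.sg {P : Polynomial (Polynomial 𝔽)} {D : ℕ} (h : TLe P D) (k : ℕ) : TLe (sg k P) D := by
  intro i
  have : (_root_.sg k P).coeff i = if Fintype.card 𝔽 ^ k ∣ i then P.coeff (i / Fintype.card 𝔽 ^ k) else 0 :=
    Polynomial.coeff_expand (qpow_pos k) _ _
  rw [this]
  split_ifs
  · exact h _
  · simp

lemma sg_ne_zero {k : ℕ} {P : Polynomial (Polynomial 𝔽)} (h : P ≠ 0) : sg k P ≠ 0 :=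
  (Polynomial.expand_ne_zero (qpow_pos k)).2 h

lemma twk_C (k : ℕ) (a : K) : twk 𝔽 k (C a) = C (a ^ Fintype.card 𝔽 ^ k) := by
  ext m
  rw [coeff_twk, coeff_C, coeff_C]
  split_ifs
  · rfl
  · rw [zero_pow (qpow_pos k).ne']

lemma twk_X (k : ℕ) : twk 𝔽 k (X : K⟦X⟧) = X := by
  ext m
  rw [coeff_twk, coeff_X]
  split_ifs
  · simp
  · rw [zero_pow (qpow_pos k).ne']

lemma emb_sg (k : ℕ) (P : Polynomial (Polynomial 𝔽)) : emb x (sg k P) = twk 𝔽 k (emb x P) := by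
  have : (emb (𝔽 := 𝔽) x).comp (sg k) = (twk 𝔽 k).comp (emb x) := by
    apply Polynomial.ringHom_ext
    · intro p
      have h1 : emb x (sg k (Polynomial.C p)) = Polynomial.aeval (X : K⟦X⟧) p := by
        simp [sg, emb]
      have h2 : emb x (Polynomial.C p) = Polynomial.aeval (X : K⟦X⟧) p := by
        simp [emb]
      simp only [RingHom.comp_apply, h1, h2]
      ext m
      rw [coeff_twk, coeff_aeval_X, ← map_pow, FiniteField.pow_card_pow]
    · simp [sg, emb, twk_C]
  exact congrArg (fun f => f P) this

/-- Specialization `t = x ^ N` of a bivariate polynomial. -/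
noncomputable def sp (N : ℕ) : Polynomial (Polynomial 𝔽) →+* Polynomial 𝔽 :=
  Polynomial.eval₂RingHom (Polynomial.expand 𝔽 N).toRingHom Polynomial.X

lemma aeval_sp (N : ℕ) (P : Polynomial (Polynomial 𝔽)) :
    Polynomial.aeval x (sp N P) = evp (x ^ N) x P := by
  have : (Polynomial.aeval x).toRingHom.comp (sp (𝔽 := 𝔽) N) = evp (x ^ N) x := by
    apply Polynomial.ringHom_ext
    · intro p
      simp [sp, evp, Polynomial.expand_aeval]
    · simp [sp, evp]
  exact congrArg (fun f => f P) this

lemma natDegree_sp_le {P : Polynomial (Polynomial 𝔽)} {D : ℕ} (h : TLe P D) (N : ℕ) :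
    (sp N P).natDegree ≤ P.natDegree + D * N := by
  simp only [sp, Polynomial.coe_eval₂RingHom, Polynomial.eval₂_eq_sum_range]
  refine Polynomial.natDegree_sum_le_of_forall_le _ _ fun i hi => ?_
  refine Polynomial.natDegree_mul_le.trans ?_
  have h1 : ((Polynomial.expand 𝔽 N).toRingHom (P.coeff i)).natDegree = (P.coeff i).natDegree * N :=
    Polynomial.natDegree_expand _ _
  rw [h1, Polynomial.natDegree_X_pow]
  have h2 := Finset.mem_range.1 hi
  have h3 := Nat.mul_le_mul_right N (h i)
  omega

/-- The Gauss lemma: the maximal degree of the coefficients is additive under products. -/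
lemma gauss {f g : K⟦X⟧} {e e' : ℤ} (hf : ∀ m, DLe (coeff m f) e)
    (hf' : ∃ m, CVal.v (coeff m f) = exp e) (hg : ∀ m, DLe (coeff m g) e')
    (hg' : ∃ m, CVal.v (coeff m g) = exp e') : ∃ m, CVal.v (coeff m (f * g)) = exp (e + e') := by
  classical
  have aux : ∀ {f : K⟦X⟧} {e : ℤ} (hf : ∀ m, DLe (coeff m f) e)
    (hf' : ∃ m, CVal.v (coeff m f) = exp e), ∀ i < Nat.find hf', DLe (coeff i f) (e - 1) := by
    intro f e hf hf' i hi
    by_cases h0 : coeff i f = 0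
    · rw [h0]; exact DLe.zero _
    obtain ⟨d, hd⟩ := exists_v_eq h0
    have h1 := (dle_iff_of_v_eq hd).1 (hf i)
    have h2 := Nat.find_min hf' hi
    rw [dle_iff_of_v_eq hd]
    rw [hd, exp_inj] at h2
    omega
  set m₀ := Nat.find hf' with hm₀
  set m₁ := Nat.find hg' with hm₁
  refine ⟨m₀ + m₁, ?_⟩
  have hmem : (m₀, m₁) ∈ Finset.HasAntidiagonal.antidiagonal (m₀ + m₁) := by simp
  rw [coeff_mul, ← Finset.add_sum_erase _ _ hmem]
  refine v_add_eq (d := e + e' - 1) (v_mul_eq (Nat.find_spec hf') (Nat.find_spec hg')) ?_ (by omega)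
  refine DLe.sum fun p hp => ?_
  obtain ⟨hne, hp⟩ := Finset.mem_erase.1 hp
  have hp : p.1 + p.2 = m₀ + m₁ := by simpa using hp
  have : p.1 < m₀ ∨ p.2 < m₁ := by
    by_contra hcon
    apply hne
    ext <;> simp <;> omega
  rcases this with h | h
  · exact ((aux hf hf' _ h).mul (hg _)).mono (by omega)
  · exact ((hf _).mul (aux hg hg' _ h)).mono (by omega)

/-- Multiplication by a nonzero bivariate polynomial does not decrease the maximal degree of the
coefficients. -/
lemma gauss_emb (hx : CVal.v x = exp 1) {P : Polynomial (Polynomial 𝔽)} (hP : P ≠ 0) {g : K⟦X⟧}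
    {e : ℤ} (hg : ∀ m, DLe (coeff m g) e) (hg' : ∃ m, CVal.v (coeff m g) = exp e) :
    ∃ m, ∃ e' : ℤ, e ≤ e' ∧ CVal.v (coeff m (emb x P * g)) = exp e' := by
  have h0 : ∃ m, coeff m (emb x P) ≠ 0 := by
    by_contra! h
    apply hP
    apply emb_inj hx
    ext m; simp [h m]
  obtain ⟨e₀, m, hm, hmax⟩ := exists_max (dle_coeff_emb hx P) h0
  obtain ⟨m', hm'⟩ := gauss hmax ⟨m, hm⟩ hg hg'
  refine ⟨m', _, ?_, hm'⟩
  have : 0 ≤ e₀ := by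
    rw [coeff_emb'] at hm
    have hs : slice m P ≠ 0 := by
      intro h
      rw [h] at hm; simp at hm; exact exp_ne_zero hm.symm
    rw [v_aeval hx hs, exp_inj] at hm
    omega
  omega

end Bivariate

/-! ### A linear independence criterion for values of Frobenius-difference systems -/

section Criterion

open WithZero PowerSeries

/-- Siegel's lemma in its crudest form: a homogeneous linear system over `R[X]` with coefficients
of degree at most `T` has a nonzero solution of degree less than `S` when there are enough
unknowns. -/
lemma siegel {R : Type*} [CommRing R] [Nontrivial R] {α β : Type*} [Fintype α] [Fintype β]
    (M : α → β → Polynomial R) {T S : ℕ} (hM : ∀ a b, (M a b).natDegree ≤ T)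
    (hcard : Fintype.card β * (S + T) < Fintype.card α * S) :
    ∃ P : α → Polynomial R, P ≠ 0 ∧ (∀ a, (P a).natDegree < S) ∧ ∀ b, ∑ a, P a * M a b = 0 := by
  classical
  have hS : 0 < S := by
    rcases Nat.eq_zero_or_pos S with rfl | h
    · simp at hcard
    · exact h
  let pol : (α × Fin S → R) → α → Polynomial R := fun c a =>
    ∑ s : Fin S, Polynomial.monomial (s : ℕ) (c (a, s))
  have pol_add : ∀ c d a, pol (c + d) a = pol c a + pol d a := by
    intro c d a; simp [pol, Finset.sum_add_distrib]
  have pol_smul : ∀ (r : R) c a, pol (r • c) a = Polynomial.C r * pol c a := by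
    intro r c a; simp [pol, Finset.mul_sum, Polynomial.C_mul_monomial]
  have pol_deg : ∀ c a, (pol c a).natDegree ≤ S - 1 := by
    intro c a
    refine Polynomial.natDegree_sum_le_of_forall_le _ _ fun s _ => ?_
    exact (Polynomial.natDegree_monomial_le _).trans (by omega)
  have pol_coeff : ∀ c a (s : Fin S), (pol c a).coeff s = c (a, s) := by
    intro c a s
    simp only [pol, Polynomial.finsetSum_coeff, Polynomial.coeff_monomial]
    rw [Finset.sum_eq_single s]
    · simp
    · intro b _ hb
      rw [if_neg]; exact fun h => hb (Fin.ext h)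
    · simp
  let f : (α × Fin S → R) →ₗ[R] (β × Fin (S + T) → R) :=
    { toFun := fun c b => (∑ a, pol c a * M a b.1).coeff b.2
      map_add' := by
        intro c d; ext b
        simp [pol_add, add_mul, Finset.sum_add_distrib]
      map_smul' := by
        intro r c; ext b
        simp [pol_smul, mul_assoc, ← Finset.mul_sum] }
  have hnot : ¬ Function.Injective f := by
    intro h
    have := card_le_of_injective R f h
    simp only [Fintype.card_prod, Fintype.card_fin] at this
    omega
  obtain ⟨c, hc, hc0⟩ : ∃ c, f c = 0 ∧ c ≠ 0 := by
    by_contra! h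
    exact hnot ((injective_iff_map_eq_zero f).2 h)
  refine ⟨pol c, ?_, fun a => by have := pol_deg c a; omega, fun b => ?_⟩
  · intro h
    apply hc0
    ext ⟨a, s⟩
    rw [← pol_coeff c a s, h]; simp
  · ext s
    by_cases hs : s < S + T
    · have := congrFun hc (b, ⟨s, hs⟩)
      simpa [f] using this
    · rw [Polynomial.coeff_eq_zero_of_natDegree_lt, Polynomial.coeff_zero]
      refine lt_of_le_of_lt (b := S - 1 + T) ?_ (by omega)
      refine Polynomial.natDegree_sum_le_of_forall_le _ _ fun a _ => ?_
      exact Polynomial.natDegree_mul_le.trans (add_le_add (pol_deg c a) (hM a b))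

variable {K : Type*} [Field K] [CVal K]
variable {𝔽 : Type*} [Field 𝔽] [Fintype 𝔽] [Algebra 𝔽 K]
variable {ι : Type*} [Fintype ι] [DecidableEq ι]

/-- The product `∏_{i<M} δ^{(i)}` of twists. -/
noncomputable def dM (δ : Polynomial (Polynomial 𝔽)) : ℕ → Polynomial (Polynomial 𝔽)
  | 0 => 1
  | M + 1 => sg M δ * dM δ M

/-- The product `B^{(M-1)} ⋯ B^{(1)} B` of twists. -/
noncomputable def bM (B : Matrix ι ι (Polynomial (Polynomial 𝔽))) :
    ℕ → Matrix ι ι (Polynomial (Polynomial 𝔽))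
  | 0 => 1
  | M + 1 => (B.map (sg M)) * bM B M

section
variable {δ : Polynomial (Polynomial 𝔽)} {B : Matrix ι ι (Polynomial (Polynomial 𝔽))}

lemma natDegree_dM {β : ℕ} (h : δ.natDegree ≤ β) (M : ℕ) :
    (dM δ M).natDegree ≤ β * Fintype.card 𝔽 ^ M := by
  induction M with
  | zero => simp [dM]
  | succ M ih =>
    refine Polynomial.natDegree_mul_le.trans ?_
    rw [natDegree_sg, pow_succ]
    have h1 := Nat.mul_le_mul_right (Fintype.card 𝔽 ^ M) h
    have h2 := Nat.mul_le_mul_left (β * Fintype.card 𝔽 ^ M) (two_le_q 𝔽)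
    nlinarith

lemma natDegree_bM {β : ℕ} (h : ∀ i j, (B i j).natDegree ≤ β) (M : ℕ) (i j : ι) :
    (bM B M i j).natDegree ≤ β * Fintype.card 𝔽 ^ M := by
  induction M generalizing i j with
  | zero =>
    simp only [bM, Matrix.one_apply]
    split_ifs <;> simp
  | succ M ih =>
    simp only [bM, Matrix.mul_apply, Matrix.map_apply]
    refine Polynomial.natDegree_sum_le_of_forall_le _ _ fun l _ => ?_
    refine Polynomial.natDegree_mul_le.trans ?_
    rw [natDegree_sg, pow_succ]
    have h1 := Nat.mul_le_mul_right (Fintype.card 𝔽 ^ M) (h i l)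
    have h2 := Nat.mul_le_mul_left (β * Fintype.card 𝔽 ^ M) (two_le_q 𝔽)
    have h3 := ih l j
    nlinarith

lemma TLe_bM {β : ℕ} (h : ∀ i j, TLe (B i j) β) (M : ℕ) (i j : ι) : TLe (bM B M i j) (β * M) := by
  induction M generalizing i j with
  | zero =>
    intro n
    simp only [bM, Matrix.one_apply]
    split_ifs
    · rw [Polynomial.coeff_one]; split_ifs <;> simp
    · simp
  | succ M ih =>
    simp only [bM, Matrix.mul_apply, Matrix.map_apply]
    refine TLe.sum fun l _ => ?_
    exact (((h i l).sg M).mul (ih l j)).mono (by rw [Nat.mul_succ]; omega)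

variable {x : K} {ψ : ι → K⟦X⟧}

lemma system_iterate (hB : ∀ i, emb x δ * tw 𝔽 (ψ i) = ∑ j, emb x (B i j) * ψ j) (M : ℕ) (i : ι) :
    emb x (dM δ M) * twk 𝔽 M (ψ i) = ∑ j, emb x (bM B M i j) * ψ j := by
  induction M generalizing i with
  | zero => simp [dM, bM, twk_zero, Matrix.one_apply, apply_ite (emb x), ite_mul]
  | succ M ih =>
    have h1 := congrArg (twk 𝔽 M) (hB i)
    simp only [map_mul, map_sum, ← emb_sg] at h1
    rw [← twk_succ'] at h1
    simp only [dM, bM, Matrix.mul_apply, Matrix.map_apply, map_mul, map_sum, Finset.sum_mul]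
    rw [mul_right_comm, h1, Finset.sum_mul, Finset.sum_comm]
    refine Finset.sum_congr rfl fun l _ => ?_
    rw [mul_assoc, mul_comm (twk 𝔽 M (ψ l)), ih l, Finset.mul_sum]
    simp only [mul_assoc]

end


lemma sum_pow_qpow (j : ℕ) {α : Type*} (s : Finset α) (f : α → K) :
    (∑ i ∈ s, f i) ^ Fintype.card 𝔽 ^ j = ∑ i ∈ s, f i ^ Fintype.card 𝔽 ^ j := by
  induction j generalizing f with
  | zero => simp
  | succ j ih =>
    have h := map_sum (frob 𝔽 K) f s
    simp only [frob_apply] at h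
    simp only [pow_succ', pow_mul, h, ih]

/-- The auxiliary linear form: small height, and coefficients so small that they contradict the
lower bound `lower_bound` when `M` is large. -/
lemma upper_bound {x : K} (hx : CVal.v x = exp 1) {ψ : ι → K⟦X⟧} {β : ℕ}
    (hψ : ∀ i, PB (ψ i) β 2) {δ : Polynomial (Polynomial 𝔽)}
    {B : Matrix ι ι (Polynomial (Polynomial 𝔽))}
    (hδ : ∀ i : ℕ, evp x x (sg i δ) ≠ 0)
    (hB : ∀ i, emb x δ * tw 𝔽 (ψ i) = ∑ j, emb x (B i j) * ψ j)
    (hβB : ∀ i j, (B i j).natDegree ≤ β) (hβT : ∀ i j, TLe (B i j) β)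
    {ρ : ι → Polynomial 𝔽} (hβρ : ∀ i, (ρ i).natDegree ≤ β)
    (hρ : ∑ i, Polynomial.aeval x (ρ i) * ev x (ψ i) = 0) {l₀ : ι} (hl₀ : ρ l₀ ≠ 0)
    (M : ℕ) (hM : 0 < M) :
    ∃ (k : ℕ) (h : ι → Polynomial (Polynomial 𝔽)), h ≠ 0 ∧
      (∀ i, (h i).natDegree ≤ 2 * Fintype.card ι * (3 * β + 1) * Fintype.card 𝔽 ^ k) ∧
      ∀ m, DLe (coeff m (∑ i, emb x (h i) * twk 𝔽 k (ψ i)))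
        ((Fintype.card 𝔽 : ℤ) ^ k *
          (1 + 2 * Fintype.card ι * (3 * β + 1) + β - M)) := by
  have hl : 0 < Fintype.card ι := Fintype.card_pos_iff.2 ⟨l₀⟩
  set l := Fintype.card ι with hldef
  set q := Fintype.card 𝔽 with hqdef
  have hq2 : 2 ≤ q := two_le_q 𝔽
  -- The form has `x`-degree bounded by a multiple of `Q = q ^ k` and `t`-degree below `D`, and
  -- vanishes at `N` points.  One relation `ρ` among the `l` values leaves `(l - 1) N` conditions
  -- for `l D` unknown polynomials, and `N - D = M` is the gain over the trivial estimate.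
  set N := 2 * l * M with hN
  set D := (2 * l - 1) * M with hD
  set k := 2 * N with hk
  set Q := q ^ k with hQ
  have hDN : D ≤ N := Nat.mul_le_mul_right M (by omega)
  have hNq : N < q ^ N := Nat.lt_pow_self hq2
  have hQQ : Q = q ^ N * q ^ N := by rw [hQ, hk, two_mul, pow_add]
  have hN0 : 0 < N := by positivity
  have hqk : ∀ j < N, q ^ j * q ^ (k - j) = Q := by
    intro j hj; rw [← pow_add]; congr 1; omega
  have hqj : ∀ j < N, q ^ j ≤ q ^ N := fun j hj => Nat.pow_le_pow_right (by omega) hj.le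
  have hQ1 : q ^ N ≤ Q := by rw [hQQ]; exact Nat.le_mul_of_pos_left _ (by positivity)
  let b : ℕ → ι → ι → Polynomial 𝔽 := fun j i l => sp 1 (bM B (k - j) i l)
  have hb : ∀ j < N, ∀ i l, (b j i l ^ q ^ j).natDegree ≤ 2 * β * Q := by
    intro j hj i l
    refine Polynomial.natDegree_pow_le.trans ?_
    have h1 := natDegree_sp_le (TLe_bM hβT (k - j) i l) 1
    have h2 := natDegree_bM hβB (k - j) i l
    have h3 : k - j < q ^ (k - j) := Nat.lt_pow_self hq2
    have h4 : (b j i l).natDegree ≤ 2 * β * q ^ (k - j) := by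
      refine h1.trans ?_
      have := Nat.mul_le_mul_left β h3.le
      nlinarith
    calc q ^ j * (b j i l).natDegree ≤ q ^ j * (2 * β * q ^ (k - j)) := Nat.mul_le_mul_left _ h4
      _ = 2 * β * (q ^ j * q ^ (k - j)) := by ring
      _ = _ := by rw [hqk j hj]
  let Mx : ι × Fin D → {l : ι // l ≠ l₀} × Fin N → Polynomial 𝔽 := fun a e =>
    Polynomial.X ^ ((a.2 : ℕ) * q ^ (e.2 : ℕ)) *
      (ρ l₀ ^ q ^ (e.2 : ℕ) * b e.2 a.1 e.1 ^ q ^ (e.2 : ℕ) -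
        ρ e.1 ^ q ^ (e.2 : ℕ) * b e.2 a.1 l₀ ^ q ^ (e.2 : ℕ))
  have hMx : ∀ a e, (Mx a e).natDegree ≤ (3 * β + 1) * Q := by
    rintro ⟨i, d⟩ ⟨⟨l, hl⟩, j⟩
    have hρq : ∀ i, (ρ i ^ q ^ (j : ℕ)).natDegree ≤ β * Q := by
      intro i
      refine Polynomial.natDegree_pow_le.trans ?_
      rw [mul_comm]
      exact Nat.mul_le_mul (hβρ i) ((hqj j j.2).trans hQ1)
    refine Polynomial.natDegree_mul_le.trans ?_
    have h1 : ((Polynomial.X : Polynomial 𝔽) ^ ((d : ℕ) * q ^ (j : ℕ))).natDegree ≤ Q := by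
      rw [Polynomial.natDegree_X_pow, hQQ]
      exact Nat.mul_le_mul (by omega) (hqj j j.2)
    have h2 : (ρ l₀ ^ q ^ (j : ℕ) * b j i l ^ q ^ (j : ℕ) -
        ρ l ^ q ^ (j : ℕ) * b j i l₀ ^ q ^ (j : ℕ)).natDegree ≤ 3 * β * Q := by
      refine (Polynomial.natDegree_sub_le _ _).trans (max_le ?_ ?_)
      · refine Polynomial.natDegree_mul_le.trans ?_
        have := hρq l₀
        have := hb j j.2 i l
        nlinarith
      · refine Polynomial.natDegree_mul_le.trans ?_
        have := hρq l
        have := hb j j.2 i l₀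
        nlinarith
    calc _ ≤ Q + 3 * β * Q := add_le_add h1 h2
      _ = _ := by ring
  have hcount : Fintype.card ({l : ι // l ≠ l₀} × Fin N) *
      (2 * l * (3 * β + 1) * Q + (3 * β + 1) * Q) <
      Fintype.card (ι × Fin D) * (2 * l * (3 * β + 1) * Q) := by
    rw [Fintype.card_prod, Fintype.card_prod, Fintype.card_fin, Fintype.card_fin,
      Fintype.card_subtype_compl, Fintype.card_subtype_eq, ← hldef, hN, hD]
    obtain ⟨l', hl'⟩ : ∃ l', l = l' + 1 := ⟨l - 1, by omega⟩
    rw [hl']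
    have e1 : 2 * (l' + 1) - 1 = 2 * l' + 1 := by omega
    rw [e1, Nat.add_sub_cancel]
    have hpos : 0 < 2 * (l' + 1) * M * ((3 * β + 1) * Q) := by positivity
    nlinarith
  obtain ⟨P, hP0, hPdeg, hP⟩ := siegel Mx hMx hcount
  set S := 2 * l * (3 * β + 1) * Q with hS
  let h : ι → Polynomial (Polynomial 𝔽) := fun i =>
    ∑ d : Fin D, Polynomial.C (Polynomial.X ^ (d : ℕ)) * (P (i, d)).map Polynomial.C
  have hcoeff : ∀ i s m, ((h i).coeff s).coeff m =
      if hm : m < D then (P (i, ⟨m, hm⟩)).coeff s else 0 := by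
    intro i s m
    simp only [h, Polynomial.finsetSum_coeff, Polynomial.coeff_C_mul, Polynomial.coeff_map]
    simp only [Polynomial.coeff_mul_C, Polynomial.coeff_X_pow]
    split_ifs with hm
    · rw [Finset.sum_eq_single ⟨m, hm⟩]
      · simp
      · intro d _ hd
        rw [if_neg, zero_mul]
        intro h; apply hd; ext; exact h.symm
      · simp
    · refine Finset.sum_eq_zero fun d _ => ?_
      rw [if_neg, zero_mul]
      have := d.2
      omega
  have hdeg : ∀ i, (h i).natDegree ≤ S := by
    intro i
    rw [Polynomial.natDegree_le_iff_coeff_eq_zero]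
    intro s hs
    ext m
    rw [hcoeff, Polynomial.coeff_zero]
    split_ifs with hm
    · exact Polynomial.coeff_eq_zero_of_natDegree_lt ((hPdeg _).trans hs)
    · rfl
  have hT : ∀ i, TLe (h i) D := by
    intro i s
    rw [Polynomial.natDegree_le_iff_coeff_eq_zero]
    intro m hm
    rw [hcoeff, dif_neg (by omega)]
  have hsp : ∀ (j : ℕ) i, sp (q ^ j) (h i) =
      ∑ d : Fin D, Polynomial.X ^ ((d : ℕ) * q ^ j) * P (i, d) := by
    intro j i
    simp only [h, map_sum, map_mul]
    refine Finset.sum_congr rfl fun d _ => ?_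
    congr 1
    · simp only [sp, Polynomial.coe_eval₂RingHom, Polynomial.eval₂_C]
      simp [← pow_mul, mul_comm]
    · have e2 : (Polynomial.expand 𝔽 (q ^ j)).toRingHom.comp Polynomial.C = Polynomial.C := by
        ext a; simp
      simp only [sp, Polynomial.coe_eval₂RingHom, Polynomial.eval₂_map, e2]
      exact Polynomial.eval₂_C_X
  refine ⟨k, h, ?_, hdeg, ?_⟩
  · intro h0
    apply hP0
    ext ⟨i, d⟩ s
    have := hcoeff i s d
    rw [h0, dif_pos d.2] at this
    simpa using this.symm
  set E := ∑ i, emb x (h i) * twk 𝔽 k (ψ i) with hE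
  have hQpos : (0 : ℤ) < Q := by exact_mod_cast qpow_pos k
  have hEPB : PB E (S + Q * D + Q * β) Q := by
    refine PB.sum fun i _ => ?_
    refine (((hT i).pb_emb hx hQpos.le).mul (((hψ i).mono' le_rfl (r' := 1) (by norm_num)).twk 𝔽 k
      |>.mono' le_rfl (r' := (Q : ℤ)) ?_)).mono ?_
    · rw [hQ]; push_cast; rw [mul_one]
    · have := hdeg i
      zify at this
      rw [← hqdef]
      push_cast [hQ] at this ⊢
      linarith
  -- `E` vanishes at the points `x ^ (q ^ j)`
  have hxj : ∀ j, CVal.v (x ^ q ^ j) = WithZero.exp ((q : ℤ) ^ j) := by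
    intro j
    have := v_pow_eq hx (q ^ j)
    simpa using this
  have hDj : ∀ n, evp x x (dM δ n) ≠ 0 := by
    intro n
    induction n with
    | zero => simp [dM]
    | succ n ih => rw [dM, map_mul]; exact mul_ne_zero (hδ n) ih
  have hx2 : DLe x (2 - 1) := dle_of_v_eq hx
  have hzero : ∀ j < N, ev (x ^ q ^ j) E = 0 := by
    intro j hj
    have hy : DLe (x ^ q ^ j) (Q - 1) := by
      refine (dle_of_v_eq (hxj j)).mono ?_
      have : q ^ j < Q := Nat.pow_lt_pow_right (by omega) (by omega)
      have : ((q ^ j : ℕ) : ℤ) < Q := by exact_mod_cast this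
      push_cast at this
      omega
    have hconv : ∀ i n, Conv (twk 𝔽 n (ψ i)) ((q : ℤ) ^ n * 2) :=
      fun i n => Conv.twk 𝔽 ⟨_, hψ i⟩ n
    have hconv2 : ∀ i n, Conv (twk 𝔽 n (ψ i)) 2 := fun i n => (hconv i n).mono (by
      have : (1 : ℤ) ≤ (q : ℤ) ^ n := one_le_pow₀ (by omega)
      omega)
    have hconvQ : ∀ i, Conv (twk 𝔽 k (ψ i)) Q := fun i => (hconv i k).mono (by
      rw [hQ] at hQpos ⊢
      push_cast at hQpos ⊢
      omega)
    have h1 : ev (x ^ q ^ j) E = ∑ i, Polynomial.aeval x (sp (q ^ j) (h i)) *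
        ev x (twk 𝔽 (k - j) (ψ i)) ^ q ^ j := by
      rw [hE, ev_sum hy fun i _ => (conv_emb hx _ _).mul (hconvQ i)]
      refine Finset.sum_congr rfl fun i _ => ?_
      rw [ev_mul hy (conv_emb hx _ _) (hconvQ i), ev_emb hx hy, aeval_sp]
      congr 1
      rw [← ev_twk 𝔽 hx2 (hconv2 i _), ← twk_add]
      congr 3
      omega
    have h2 : ∀ i, evp x x (dM δ (k - j)) * ev x (twk 𝔽 (k - j) (ψ i)) =
        ∑ l, Polynomial.aeval x (b j i l) * ev x (ψ l) := by
      intro i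
      have := congrArg (ev x) (system_iterate hB (k - j) i)
      rw [ev_mul hx2 (conv_emb hx _ _) (hconv2 i _), ev_emb hx hx2,
        ev_sum hx2 fun l _ => (conv_emb hx _ _).mul ⟨_, hψ l⟩] at this
      rw [this]
      refine Finset.sum_congr rfl fun l _ => ?_
      rw [ev_mul hx2 (conv_emb hx _ _) ⟨_, hψ l⟩, ev_emb hx hx2]
      simp only [b, aeval_sp, pow_one]
    let w : ι → Polynomial 𝔽 := fun l => ∑ i, sp (q ^ j) (h i) * b j i l ^ q ^ j
    have hw : ∀ l, ρ l₀ ^ q ^ j * w l = ρ l ^ q ^ j * w l₀ := by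
      intro l
      by_cases hll : l = l₀
      · rw [hll]
      have := hP (⟨l, hll⟩, ⟨j, hj⟩)
      rw [Fintype.sum_prod_type] at this
      rw [← sub_eq_zero, ← this]
      simp only [w, Finset.mul_sum, ← Finset.sum_sub_distrib, hsp, Finset.sum_mul, Mx]
      refine Finset.sum_congr rfl fun i _ => Finset.sum_congr rfl fun d _ => ?_
      ring
    have h3 : evp x x (dM δ (k - j)) ^ q ^ j * ev (x ^ q ^ j) E =
        ∑ l, Polynomial.aeval x (w l) * ev x (ψ l) ^ q ^ j := by
      rw [h1, Finset.mul_sum]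
      have : ∀ i, evp x x (dM δ (k - j)) ^ q ^ j * (Polynomial.aeval x (sp (q ^ j) (h i)) *
          ev x (twk 𝔽 (k - j) (ψ i)) ^ q ^ j) = ∑ l, Polynomial.aeval x (sp (q ^ j) (h i)) *
            Polynomial.aeval x (b j i l) ^ q ^ j * ev x (ψ l) ^ q ^ j := by
        intro i
        rw [mul_left_comm, ← mul_pow, h2, sum_pow_qpow (𝔽 := 𝔽), Finset.mul_sum]
        simp only [mul_pow, mul_assoc]
        rfl
      simp only [this]
      rw [Finset.sum_comm]
      refine Finset.sum_congr rfl fun l _ => ?_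
      simp only [w, map_sum, map_mul, map_pow, Finset.sum_mul]
    have h4 : Polynomial.aeval x (ρ l₀) ^ q ^ j *
        (evp x x (dM δ (k - j)) ^ q ^ j * ev (x ^ q ^ j) E) = 0 := by
      rw [h3, Finset.mul_sum]
      have : ∀ l, Polynomial.aeval x (ρ l₀) ^ q ^ j * (Polynomial.aeval x (w l) *
          ev x (ψ l) ^ q ^ j) = Polynomial.aeval x (w l₀) *
            (Polynomial.aeval x (ρ l) * ev x (ψ l)) ^ q ^ j := by
        intro l
        have := congrArg (Polynomial.aeval x) (hw l)
        simp only [map_mul, map_pow] at this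
        rw [mul_pow]
        linear_combination ev x (ψ l) ^ q ^ j * this
      simp only [this]
      rw [← Finset.mul_sum, ← sum_pow_qpow (𝔽 := 𝔽), hρ, zero_pow (qpow_pos j).ne', mul_zero]
    rcases mul_eq_zero.1 h4 with h5 | h5
    · exact absurd (aeval_inj hx (pow_eq_zero_iff (qpow_pos j).ne' |>.1 h5)) hl₀
    rcases mul_eq_zero.1 h5 with h6 | h6
    · exact absurd (pow_eq_zero_iff (qpow_pos j).ne' |>.1 h6) (hDj _)
    · exact h6
  obtain ⟨g, hg, hEg⟩ := hEPB.exists_div_prod (fun j => x ^ q ^ j) N (fun j hj => by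
      refine (dle_of_v_eq (hxj j)).mono ?_
      have : q ^ j < Q := Nat.pow_lt_pow_right (by omega) (by omega)
      have : ((q ^ j : ℕ) : ℤ) < Q := by exact_mod_cast this
      push_cast at this
      omega) (fun i _ j _ hij => by
      have h1 := hxj i
      have hij' : x ^ q ^ i = x ^ q ^ j := hij
      rw [hij', hxj j, WithZero.exp_inj] at h1
      have : q ^ j = q ^ i := by exact_mod_cast h1
      exact (Nat.pow_right_injective hq2 this).symm) hzero
  intro m
  have hprod : PB (∏ j ∈ Finset.range N, (PowerSeries.X - PowerSeries.C (x ^ q ^ j))) Q 0 := by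
    have : ∀ n ≤ N, PB (∏ j ∈ Finset.range n, (PowerSeries.X - PowerSeries.C (x ^ q ^ j)))
        ((q : ℤ) ^ n) 0 := by
      intro n hn
      induction n with
      | zero => simpa using (PB.one 0).mono zero_le_one
      | succ n ih =>
        rw [Finset.prod_range_succ]
        have h1 : (1 : ℤ) ≤ (q : ℤ) ^ n := one_le_pow₀ (by omega)
        refine ((ih (by omega)).mul (((PB.X 0).mono ?_).sub
          (PB.C (dle_of_v_eq (hxj n)) 0))).mono ?_
        · omega
        · rw [pow_succ]; nlinarith
    refine (this N le_rfl).mono ?_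
    have : ((q ^ N : ℕ) : ℤ) ≤ Q := by exact_mod_cast hQ1
    simpa using this
  have hg0 : PB g (S + Q * D + Q * β - Q * N) 0 := hg.mono' le_rfl hQpos.le
  rw [hEg]
  refine (hprod.mul hg0 m).mono ?_
  have e1 : (N : ℤ) = D + M := by
    have : N = D + M := by
      rw [hN, hD]
      obtain ⟨l', hl'⟩ : ∃ l', l = l' + 1 := ⟨l - 1, by omega⟩
      rw [hl', show 2 * (l' + 1) - 1 = 2 * l' + 1 by omega]; ring
    exact_mod_cast this
  rw [e1, hS]
  push_cast [hQ]
  apply le_of_eq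
  ring

/-- A nonzero linear form in the `ψ^{(k)}` with coefficients of degree `O(q^k)` is not too small. -/
lemma lower_bound {x : K} (hx : CVal.v x = exp 1) {ψ : ι → K⟦X⟧} {β : ℕ}
    {δ : Polynomial (Polynomial 𝔽)}
    {B : Matrix ι ι (Polynomial (Polynomial 𝔽))} (hδ : δ ≠ 0)
    (hB : ∀ i, emb x δ * tw 𝔽 (ψ i) = ∑ j, emb x (B i j) * ψ j)
    (hβδ : δ.natDegree ≤ β) (hβB : ∀ i j, (B i j).natDegree ≤ β)
    {C k : ℕ} {h : ι → Polynomial (Polynomial 𝔽)}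
    (hh : ∀ i, (h i).natDegree ≤ C * Fintype.card 𝔽 ^ k)
    (hE : ∑ i, emb x (h i) * twk 𝔽 k (ψ i) ≠ 0)
    (hsmall : ∀ m, DLe (coeff m (∑ i, emb x (h i) * twk 𝔽 k (ψ i)))
      (-((Fintype.card ι * (Fintype.card 𝔽 ^ Fintype.card ι * (C + β)) +
        β * Fintype.card 𝔽 ^ Fintype.card ι : ℕ) * (Fintype.card 𝔽 : ℤ) ^ k) - 1)) : False := by
  set E := ∑ i, emb x (h i) * twk 𝔽 k (ψ i) with hEdef
  set l := Fintype.card ι with hldef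
  set q := Fintype.card 𝔽 with hqdef
  have hq2 : 2 ≤ q := two_le_q 𝔽
  set Q := q ^ k with hQ
  set T := q ^ l * (C + β) * Q with hT
  let u : Fin (l + 1) → ι → Polynomial (Polynomial 𝔽) := fun i j =>
    ∑ j', sg i (h j') * sg k (bM B i j' j)
  have hqi : ∀ i : Fin (l + 1), q ^ (i : ℕ) ≤ q ^ l := fun i =>
    Nat.pow_le_pow_right (by omega) (by omega)
  have hu : ∀ i j, (u i j).natDegree ≤ T := by
    intro i j
    refine Polynomial.natDegree_sum_le_of_forall_le _ _ fun j' _ => ?_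
    refine Polynomial.natDegree_mul_le.trans ?_
    rw [natDegree_sg, natDegree_sg]
    calc _ ≤ (C * Q) * q ^ l + (β * q ^ l) * Q := by
          refine add_le_add (Nat.mul_le_mul (hh j') (hqi i)) (Nat.mul_le_mul_right _ ?_)
          exact (natDegree_bM hβB i j' j).trans (Nat.mul_le_mul_left _ (hqi i))
      _ = T := by rw [hT]; ring
  obtain ⟨a, ha0, hadeg, ha⟩ := siegel u (S := l * T + 1) hu (by
    rw [Fintype.card_fin, ← hldef]; nlinarith)
  have hit : ∀ i : Fin (l + 1), emb x (sg k (dM δ i)) * twk 𝔽 i E =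
      ∑ j, emb x (u i j) * twk 𝔽 k (ψ j) := by
    intro i
    rw [hEdef, map_sum, Finset.mul_sum]
    have : ∀ j', emb x (sg k (dM δ i)) * twk 𝔽 i (emb x (h j') * twk 𝔽 k (ψ j')) =
        ∑ j, emb x (sg i (h j') * sg k (bM B i j' j)) * twk 𝔽 k (ψ j) := by
      intro j'
      have h1 := congrArg (twk 𝔽 k) (system_iterate hB i j')
      simp only [map_mul, map_sum, ← emb_sg, ← twk_add] at h1
      simp only [map_mul, ← emb_sg, ← twk_add, mul_assoc, ← Finset.mul_sum]
      rw [mul_left_comm, add_comm (i : ℕ) k, h1]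
    simp only [this]
    rw [Finset.sum_comm]
    simp only [u, map_sum, Finset.sum_mul]
  have hrel : ∑ i, emb x (a i * sg k (dM δ i)) * twk 𝔽 i E = 0 := by
    simp only [map_mul, mul_assoc, hit, Finset.mul_sum]
    rw [Finset.sum_comm]
    refine Finset.sum_eq_zero fun j _ => ?_
    have := congrArg (emb x) (ha j)
    simp only [map_sum, map_mul, map_zero] at this
    simp only [← mul_assoc, ← Finset.sum_mul, this, zero_mul]
  -- the sup norm of `E` is `exp e`
  obtain ⟨e, m₀, hm₀, hmax⟩ := exists_max hsmall (by
    by_contra! h; exact hE (PowerSeries.ext fun m => by simp [h m]))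
  have he := (dle_iff_of_v_eq hm₀).1 (hsmall m₀)
  have hex : ∃ i, a i ≠ 0 := by
    by_contra! h; exact ha0 (funext h)
  obtain ⟨i₀, hi₀, hmin⟩ := WellFounded.has_min (wellFounded_lt (α := Fin (l + 1)))
    {i | a i ≠ 0} hex
  have hd0 : ∀ i, dM δ i ≠ 0 := by
    intro i
    induction i with
    | zero => simp [dM]
    | succ i ih => exact mul_ne_zero (sg_ne_zero hδ) ih
  have htw : ∀ i m, DLe (coeff m (twk 𝔽 i E)) ((q : ℤ) ^ i * e) := by
    intro i m
    rw [coeff_twk]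
    simpa using (hmax m).pow (q ^ i)
  obtain ⟨m, e', hee', hm⟩ := gauss_emb hx (mul_ne_zero hi₀ (sg_ne_zero (k := k) (hd0 i₀)))
    (htw i₀) ⟨m₀, by rw [coeff_twk]; simpa using v_pow_eq hm₀ (q ^ (i₀ : ℕ))⟩
  rw [← Finset.add_sum_erase _ _ (Finset.mem_univ i₀), add_eq_zero_iff_eq_neg] at hrel
  have hrm := congrArg (coeff m) hrel
  have hbd : DLe (coeff m (emb x (a i₀ * sg k (dM δ i₀)) * twk 𝔽 i₀ E)) (e' - 1) := by
    rw [hrm, map_neg, map_sum]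
    refine DLe.neg (DLe.sum fun i hi => ?_)
    have hii := Finset.ne_of_mem_erase hi
    by_cases hai : a i = 0
    · simp [hai, DLe.zero]
    have hlt : i₀ < i := lt_of_le_of_ne (not_lt.1 (hmin i hai)) (Ne.symm hii)
    have hP : PB (emb x (a i * sg k (dM δ i))) ((l * T + β * q ^ l * Q : ℕ) : ℤ) 0 := by
      intro m
      rw [zero_mul, sub_zero]
      refine (dle_coeff_emb hx _ m).mono ?_
      have h1 := hadeg i
      have h2 : (sg k (dM δ i)).natDegree ≤ β * q ^ l * Q := by
        rw [natDegree_sg]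
        exact Nat.mul_le_mul_right _ ((natDegree_dM hβδ i).trans (Nat.mul_le_mul_left _ (hqi i)))
      have h3 := Polynomial.natDegree_mul_le (p := a i) (q := sg k (dM δ i))
      exact_mod_cast (show _ ≤ _ by omega)
    have hQ' : PB (twk 𝔽 i E) ((q : ℤ) ^ (i : ℕ) * e) 0 := fun m => by simpa using htw i m
    have := (hP.mul hQ') m
    rw [zero_mul, sub_zero] at this
    refine this.mono ?_
    have e1 : ((l * T + β * q ^ l * Q : ℕ) : ℤ) =
        ((l * (q ^ l * (C + β)) + β * q ^ l : ℕ) : ℤ) * (q : ℤ) ^ k := by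
      rw [hT, hQ]; push_cast; ring
    rw [e1]
    have hZ : 0 ≤ ((l * (q ^ l * (C + β)) + β * q ^ l : ℕ) : ℤ) * (q : ℤ) ^ k := by positivity
    generalize ((l * (q ^ l * (C + β)) + β * q ^ l : ℕ) : ℤ) * (q : ℤ) ^ k = Z at he hZ
    obtain ⟨d, hd⟩ : ∃ d, (i : ℕ) = i₀ + 1 + d := ⟨i - i₀ - 1, by
      have : (i₀ : ℕ) < i := hlt
      omega⟩
    have hq0 : (1 : ℤ) ≤ (q : ℤ) ^ (i₀ : ℕ) := one_le_pow₀ (by omega)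
    have hqd : (1 : ℤ) ≤ (q : ℤ) ^ d := one_le_pow₀ (by omega)
    have h5 : 2 * (q : ℤ) ^ (i₀ : ℕ) ≤ (q : ℤ) ^ (i : ℕ) := by
      rw [hd, pow_add, pow_succ]
      have : (2 : ℤ) ≤ q := by exact_mod_cast hq2
      have h6 : 2 * (q : ℤ) ^ (i₀ : ℕ) ≤ (q : ℤ) ^ (i₀ : ℕ) * q := by nlinarith
      exact h6.trans (le_mul_of_one_le_right (by positivity) hqd)
    have h0e : e < 0 := by omega
    nlinarith
  rw [DLe, hm, WithZero.exp_le_exp] at hbd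
  omega

/-- The values at `t = x` of a solution `ψ` of `δ ψ^{(1)} = B ψ` are linearly independent over
`𝔽[x]` as soon as all twists of `ψ` are linearly independent over `𝔽[x, t]`.

A linear relation between the values produces, by Siegel's lemma, a nonzero linear form `E` in
`ψ^{(k)}` with small coefficients that vanishes at many points `x ^ (q ^ j)`; hence `E` is very
small.  On the other hand `E` satisfies a `τ`-difference equation of controlled height, which
bounds its size from below. -/
theorem lin_indep_values {x : K} (hx : CVal.v x = exp 1) {ψ : ι → K⟦X⟧} {c : ℤ}
    (hψ : ∀ i, PB (ψ i) c 2) {δ : Polynomial (Polynomial 𝔽)}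
    {B : Matrix ι ι (Polynomial (Polynomial 𝔽))}
    (hδ : ∀ i : ℕ, evp x x (sg i δ) ≠ 0)
    (hB : ∀ i, emb x δ * tw 𝔽 (ψ i) = ∑ j, emb x (B i j) * ψ j)
    (hlin : ∀ (k : ℕ) (h : ι → Polynomial (Polynomial 𝔽)),
      ∑ i, emb x (h i) * twk 𝔽 k (ψ i) = 0 → h = 0)
    (ρ : ι → Polynomial 𝔽) (hρ : ∑ i, Polynomial.aeval x (ρ i) * ev x (ψ i) = 0) : ρ = 0 := by
  by_contra hne
  obtain ⟨l₀, hl₀⟩ : ∃ l, ρ l ≠ 0 := by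
    by_contra! h
    exact hne (funext h)
  have hl : 0 < Fintype.card ι := Fintype.card_pos_iff.2 ⟨l₀⟩
  set l := Fintype.card ι with hldef
  set q := Fintype.card 𝔽 with hqdef
  have hq2 : 2 ≤ q := two_le_q 𝔽
  -- a common bound for all degrees occurring in the data
  obtain ⟨β, hβB, hβT, hβδ, hβρ, hβc⟩ : ∃ β : ℕ, (∀ i j, (B i j).natDegree ≤ β) ∧
      (∀ i j, TLe (B i j) β) ∧ δ.natDegree ≤ β ∧ (∀ i, (ρ i).natDegree ≤ β) ∧ c ≤ β := by
    choose D hD using fun p : ι × ι => exists_TLe (B p.1 p.2)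
    refine ⟨(∑ p : ι × ι, (B p.1 p.2).natDegree) + (∑ p, D p) + δ.natDegree +
      (∑ i, (ρ i).natDegree) + c.natAbs, fun i j => ?_, fun i j => ?_, by omega, fun i => ?_, ?_⟩
    · have : (B i j).natDegree ≤ ∑ p : ι × ι, (B p.1 p.2).natDegree :=
        Finset.single_le_sum (f := fun p : ι × ι => (B p.1 p.2).natDegree)
          (fun _ _ => Nat.zero_le _) (Finset.mem_univ (i, j))
      omega
    · have := Finset.single_le_sum (f := D) (fun _ _ => Nat.zero_le _) (Finset.mem_univ (i, j))
      exact (hD (i, j)).mono (by omega)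
    · have : (ρ i).natDegree ≤ ∑ i, (ρ i).natDegree :=
        Finset.single_le_sum (f := fun i => (ρ i).natDegree)
          (fun _ _ => Nat.zero_le _) (Finset.mem_univ i)
      omega
    · have h1 := Int.le_natAbs (a := c)
      refine h1.trans ?_
      exact_mod_cast Nat.le_add_left _ _
  have hδ0 : δ ≠ 0 := by
    rintro rfl
    exact hδ 0 (by simp)
  set C := 2 * l * (3 * β + 1) with hC
  set C₄ := l * (q ^ l * (C + β)) + β * q ^ l with hC₄
  obtain ⟨k, h, hh0, hdeg, hsm⟩ := upper_bound hx (fun i => (hψ i).mono hβc) hδ hB hβB hβT hβρ hρ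
    hl₀ (1 + C + β + C₄ + 1) (by omega)
  refine lower_bound hx hδ0 hB hβδ hβB hdeg (fun h0 => hh0 (hlin k h h0)) fun m => (hsm m).mono ?_
  have hQ : (1 : ℤ) ≤ (q : ℤ) ^ k := one_le_pow₀ (by omega)
  rw [← hldef, ← hqdef, ← hC, ← hC₄]
  push_cast [hC]
  nlinarith

end Criterion

/-! ### The functions `ω`, `f₁`, `f₂` deforming the period and the zeta values -/

section Functions

open WithZero PowerSeries

variable {K : Type*} [Field K] [CVal K]
variable (𝔽 : Type*) [Field 𝔽] [Fintype 𝔽] [Algebra 𝔽 K]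

lemma neg_pow_qpow (d : ℕ) (y : K) : (-y) ^ Fintype.card 𝔽 ^ d = -(y ^ Fintype.card 𝔽 ^ d) := by
  induction d with
  | zero => simp
  | succ d ih =>
    have h := map_neg (frob 𝔽 K) (y ^ Fintype.card 𝔽 ^ d)
    rw [frob_apply, frob_apply] at h
    rw [pow_succ, pow_mul, ih, h, pow_mul]

/-- `ω` is the normalized Anderson–Thakur type function: `ω = ∏_{j ≥ 1} (1 - t / x^{q^j})`,
characterized by its `τ`-difference equation. -/
structure IsOm (x : K) (ω : K⟦X⟧) : Prop where
  eq : ω = (1 - C (x ^ Fintype.card 𝔽)⁻¹ * X) * tw 𝔽 ω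
  c0 : coeff 0 ω = 1
  pb : PB ω 0 (Fintype.card 𝔽)
  conv : Conv ω (Fintype.card 𝔽 + 1)

lemma coeff_succ_om (a : K) (g : K⟦X⟧) (m : ℕ) :
    coeff (m + 1) ((1 - C a * X) * g) = coeff (m + 1) g - a * coeff m g := by
  rw [sub_mul, one_mul, map_sub, mul_assoc, coeff_C_mul, coeff_succ_X_mul]

lemma coeff_zero_om (a : K) (g : K⟦X⟧) : coeff 0 ((1 - C a * X) * g) = coeff 0 g := by
  simp [sub_mul, mul_assoc]

lemma exists_omega {x : K} (hx : CVal.v x = exp 1) : ∃ ω : K⟦X⟧, IsOm 𝔽 x ω := by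
  set q := Fintype.card 𝔽 with hq
  have hq2 : 2 ≤ q := two_le_q 𝔽
  have hq2' : (2 : ℤ) ≤ q := by exact_mod_cast hq2
  have hxq : DLe ((x ^ q)⁻¹) (-q) := by
    apply dle_of_v_eq
    have := v_inv_eq (v_pow_eq hx q)
    simpa using this
  have step : ∀ b : K, DLe b 0 → ∃ b' : K, b' = -(x ^ q)⁻¹ * b ^ q + b' ^ q ∧ DLe b' 0 ∧
      ∀ c : ℤ, c ≤ 0 → DLe b c → DLe b' (q * c - q) := by
    intro b hb
    have hu : ∀ c : ℤ, DLe b c → DLe (-(x ^ q)⁻¹ * b ^ q) (q * c - q) := by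
      intro c hc
      exact (hxq.neg.mul (hc.pow q)).mono (by linarith)
    have hu0 : DLe (-(x ^ q)⁻¹ * b ^ q) (-1) := (hu 0 hb).mono (by omega)
    obtain ⟨b', h1, h2⟩ := exists_solve 𝔽 hu0 (a := 1) (α := 0) (by simp)
      (by rw [← hq]; nlinarith)
    refine ⟨b', by simpa using h1, (h2 _ le_rfl hu0).mono (by norm_num), fun c hc hbc => ?_⟩
    exact h2 _ (by nlinarith) (hu c hbc)
  choose! g hg1 hg2 hg3 using step
  let b : ℕ → K := fun m => Nat.rec 1 (fun _ b => g b) m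
  have hb0 : b 0 = 1 := rfl
  have hbs : ∀ m, b (m + 1) = g (b m) := fun m => rfl
  have hbd : ∀ m, DLe (b m) 0 := by
    intro m
    induction m with
    | zero => exact DLe.one
    | succ m ih => exact hg2 _ ih
  have hpb : ∀ m : ℕ, DLe (b m) (0 - q * m) := by
    intro m
    induction m with
    | zero => simpa using hbd 0
    | succ m ih =>
      rw [hbs]
      refine (hg3 _ (hbd m) _ (by nlinarith [Int.natCast_nonneg m]) ih).mono ?_
      push_cast
      nlinarith [mul_nonneg (Int.natCast_nonneg m) (mul_nonneg (show (0:ℤ) ≤ q by omega) (show (0:ℤ) ≤ q - 1 by omega))]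
  have hpb1 : ∀ m : ℕ, DLe (b m) (1 - (q + 1) * m) := by
    intro m
    rcases m with _ | m
    · simpa using (hbd 0).mono zero_le_one
    rcases m with _ | m
    · exact (hpb 1).mono (by push_cast; omega)
    · rw [show b (m + 1 + 1) = g (b (m + 1)) from rfl]
      have hneg : (0 : ℤ) - q * (m + 1 : ℕ) ≤ 0 := by
        have : (0 : ℤ) ≤ q * (m + 1 : ℕ) := by positivity
        omega
      refine (hg3 _ (hbd (m + 1)) _ hneg (hpb (m + 1))).mono ?_
      push_cast
      have := Int.natCast_nonneg m
      nlinarith [mul_nonneg this (show (0:ℤ) ≤ q by omega), mul_nonneg (mul_nonneg this (show (0:ℤ) ≤ q by omega)) (show (0:ℤ) ≤ q - 2 by omega)]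
  refine ⟨PowerSeries.mk b, ?_, by simp [hb0], fun m => by simpa using hpb m, 1,
    fun m => by simpa using hpb1 m⟩
  ext m
  rcases m with _ | m
  · rw [coeff_zero_om, coeff_tw, coeff_mk, hb0, one_pow]
  · rw [coeff_succ_om, coeff_tw, coeff_tw]
    simp only [coeff_mk]
    have := hg1 (b m) (hbd m)
    rw [← hbs] at this
    rw [← hq]
    linear_combination this

/-- `κ_d = ∏_{j=1}^d (-x^{q^j})⁻¹`. -/
noncomputable def kap (x : K) (d : ℕ) : K :=
  ∏ j ∈ Finset.range d, (-(x ^ Fintype.card 𝔽 ^ (j + 1)))⁻¹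

/-- `ℓ_d = ∏_{j=1}^d (x - x^{q^j})`. -/
noncomputable def ell (x : K) (d : ℕ) : K :=
  ∏ j ∈ Finset.range d, (x - x ^ Fintype.card 𝔽 ^ (j + 1))

lemma v_xq {x : K} (hx : CVal.v x = exp 1) (j : ℕ) :
    CVal.v (x ^ Fintype.card 𝔽 ^ j) = WithZero.exp ((Fintype.card 𝔽 : ℤ) ^ j) := by
  simpa using v_pow_eq hx (Fintype.card 𝔽 ^ j)

lemma v_kap {x : K} (hx : CVal.v x = exp 1) (d : ℕ) : ∃ s : ℤ, CVal.v (kap 𝔽 x d) = exp (-s) ∧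
    ((Fintype.card 𝔽 : ℤ) - 1) * s = (Fintype.card 𝔽 : ℤ) ^ (d + 1) - Fintype.card 𝔽 := by
  induction d with
  | zero => exact ⟨0, by simp [kap]⟩
  | succ d ih =>
    obtain ⟨s, h1, h2⟩ := ih
    refine ⟨s + (Fintype.card 𝔽 : ℤ) ^ (d + 1), ?_, ?_⟩
    · rw [kap, Finset.prod_range_succ, ← kap]
      have h3 := v_inv_eq (a := -(x ^ Fintype.card 𝔽 ^ (d + 1)))
        ((Valuation.map_neg _ _).trans (v_xq 𝔽 hx (d + 1)))
      rw [v_mul_eq h1 h3]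
      congr 1; ring
    · rw [mul_add, h2]; ring

lemma kap_ne_zero {x : K} (hx : CVal.v x = exp 1) (d : ℕ) : kap 𝔽 x d ≠ 0 := by
  obtain ⟨s, hs, -⟩ := v_kap 𝔽 hx d
  exact ne_zero_of_v_eq hs

lemma x_ne_zero {x : K} (hx : CVal.v x = exp 1) : x ≠ 0 := ne_zero_of_v_eq hx

lemma dle_x {x : K} (hx : CVal.v x = exp 1) : DLe x ((2 : ℤ) - 1) := dle_of_v_eq hx

lemma conv_twk {f : K⟦X⟧} (hf : Conv f 2) (d : ℕ) : Conv (twk 𝔽 d f) 2 :=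
  (hf.twk 𝔽 d).mono (by
    have : (1 : ℤ) ≤ (Fintype.card 𝔽 : ℤ) ^ d :=
      one_le_pow₀ (by have := two_le_q 𝔽; omega)
    omega)

section Omega

variable {𝔽} {x : K} {ω : K⟦X⟧}

lemma IsOm.conv2 (h : IsOm 𝔽 x ω) : Conv ω 2 :=
  h.conv.mono (by have := two_le_q 𝔽; omega)

lemma IsOm.iter (h : IsOm 𝔽 x ω) (d : ℕ) :
    ω = (∏ j ∈ Finset.range d, (1 - C (x ^ Fintype.card 𝔽 ^ (j + 1))⁻¹ * X)) * twk 𝔽 d ω := by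
  induction d with
  | zero => simp [twk_zero]
  | succ d ih =>
    rw [Finset.prod_range_succ, mul_assoc]
    have h1 := congrArg (twk 𝔽 d) h.eq
    rw [map_mul, ← twk_succ', map_sub, map_one, map_mul, twk_C, twk_X, inv_pow, ← pow_mul,
      ← pow_succ'] at h1
    rw [← h1, ← ih]

lemma IsOm.ev_iter (hx : CVal.v x = exp 1) (h : IsOm 𝔽 x ω) (d : ℕ) :
    ev x ω = (∏ j ∈ Finset.range d, (1 - (x ^ Fintype.card 𝔽 ^ (j + 1))⁻¹ * x)) *
      ev x (twk 𝔽 d ω) := by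
  have hx2 := dle_x hx
  induction d with
  | zero => simp [twk_zero]
  | succ d ih =>
    have h1 := congrArg (twk 𝔽 d) h.eq
    rw [map_mul, ← twk_succ', map_sub, map_one, map_mul, twk_C, twk_X, inv_pow, ← pow_mul,
      ← pow_succ'] at h1
    have h2 := congrArg (ev x) h1
    rw [ev_mul hx2 ((Conv.one 2).sub ((Conv.C _ 2).mul (Conv.X 2))) (conv_twk 𝔽 h.conv2 _),
      ev_sub hx2 (Conv.one 2) ((Conv.C _ 2).mul (Conv.X 2)), ev_one 2 hx2,
      ev_mul hx2 (Conv.C _ 2) (Conv.X 2), ev_C 2 hx2, ev_X 2 hx2] at h2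
    rw [Finset.prod_range_succ, mul_assoc, ← h2, ← ih]

lemma IsOm.near (hx : CVal.v x = exp 1) (h : IsOm 𝔽 x ω) (d : ℕ) :
    DLe (ev x (twk 𝔽 d ω) - 1) (2 - (Fintype.card 𝔽 : ℤ) ^ (d + 1)) := by
  have hx2 := dle_x hx
  have hpb : PB (twk 𝔽 d ω - 1) (2 - (Fintype.card 𝔽 : ℤ) ^ (d + 1)) 2 := by
    intro m
    rcases m with _ | m
    · rw [map_sub, coeff_twk, h.c0, one_pow, coeff_zero_one, sub_self]
      exact DLe.zero _
    · rw [map_sub, coeff_one, if_neg (Nat.succ_ne_zero m), sub_zero]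
      refine (h.pb.twk 𝔽 d (m + 1)).mono ?_
      have h2 : (2 : ℤ) ≤ Fintype.card 𝔽 := by exact_mod_cast two_le_q 𝔽
      have h1 : (1 : ℤ) ≤ (Fintype.card 𝔽 : ℤ) ^ d := one_le_pow₀ (by omega)
      rw [pow_succ]
      push_cast
      have := Int.natCast_nonneg m
      have h3 : 2 ≤ (Fintype.card 𝔽 : ℤ) ^ d * (Fintype.card 𝔽 : ℤ) := by nlinarith
      nlinarith
  have := hpb.ev_dle hx2
  rwa [ev_sub hx2 (conv_twk 𝔽 h.conv2 _) (Conv.one 2), ev_one 2 hx2] at this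

lemma IsOm.v_ev (hq : 3 ≤ Fintype.card 𝔽) (hx : CVal.v x = exp 1) (h : IsOm 𝔽 x ω) :
    CVal.v (ev x ω) = exp 0 := by
  have h1 := h.near hx 0
  rw [twk_zero] at h1
  have h2 := v_add_eq (a := (1 : K)) (c := 0) (by simp) h1 (by
    have : (3 : ℤ) ≤ Fintype.card 𝔽 := by exact_mod_cast hq
    rw [zero_add, pow_one]; omega)
  rwa [add_sub_cancel] at h2

lemma IsOm.kap_ell (hx : CVal.v x = exp 1) (h : IsOm 𝔽 x ω) (d : ℕ) :
    kap 𝔽 x d * ev x (twk 𝔽 d ω) * ell 𝔽 x d = ev x ω := by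
  have : ∀ d, kap 𝔽 x d * ell 𝔽 x d =
      ∏ j ∈ Finset.range d, (1 - (x ^ Fintype.card 𝔽 ^ (j + 1))⁻¹ * x) := by
    intro d
    rw [kap, ell, ← Finset.prod_mul_distrib]
    refine Finset.prod_congr rfl fun j _ => ?_
    have := pow_ne_zero (Fintype.card 𝔽 ^ (j + 1)) (x_ne_zero hx)
    field_simp
    ring
  rw [h.ev_iter hx d, ← this d]; ring

end Omega

/-- Convergence to `0`. -/
def Null (T : ℕ → K) : Prop := ∀ N : ℕ, ∃ d₀ : ℕ, ∀ d, d₀ ≤ d → DLe (T d) (-(N : ℤ))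

/-- Solution of `f^{(1)} = (-x^q)^n (f - w)` together with the telescoping expansion
`f(x) = ∑_d κ_d^n w^{(d)}(x)`. -/
lemma exists_sol {x : K} (hx : CVal.v x = exp 1) {n D : ℕ}
    (h : (Fintype.card 𝔽 - 1) * D < n * Fintype.card 𝔽) {w : K⟦X⟧} (hw0 : PB w D 0)
    (hw : Conv w (Fintype.card 𝔽 + 1)) :
    ∃ f : K⟦X⟧, tw 𝔽 f = C ((-(x ^ Fintype.card 𝔽)) ^ n) * (f - w) ∧ PB f D 0 ∧
      Conv f (Fintype.card 𝔽 + 1) ∧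
      (∀ d, kap 𝔽 x d ^ n * ev x (twk 𝔽 d f) - kap 𝔽 x (d + 1) ^ n * ev x (twk 𝔽 (d + 1) f) =
        kap 𝔽 x d ^ n * ev x (twk 𝔽 d w)) ∧
      Null fun d => kap 𝔽 x d ^ n * ev x (twk 𝔽 d f) := by
  set q := Fintype.card 𝔽 with hq
  have hq2 : 2 ≤ q := two_le_q 𝔽
  have hq2' : (2 : ℤ) ≤ q := by exact_mod_cast hq2
  obtain ⟨c, hc⟩ := hw
  set a := (-(x ^ q)) ^ n with ha
  have hva : CVal.v a = exp (n * q : ℤ) := by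
    refine v_pow_eq ?_ n
    rw [Valuation.map_neg]
    simpa using v_pow_eq hx q
  have ha0 : a ≠ 0 := ne_zero_of_v_eq hva
  have h' : ((q : ℤ) - 1) * D < n * q := by
    have : ((q - 1 : ℕ) : ℤ) = q - 1 := by push_cast [show 1 ≤ q by omega]; ring
    rw [← this]; exact_mod_cast h
  have hsol : ∀ m, ∃ b, b = coeff m w + a⁻¹ * b ^ q ∧
      ∀ c : ℤ, c ≤ D → DLe (coeff m w) c → DLe b c := fun m =>
    exists_solve 𝔽 (by simpa using hw0 m) hva h'
  choose b hb1 hb2 using hsol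
  set f := PowerSeries.mk b with hf
  have hfeq : tw 𝔽 f = C a * (f - w) := by
    ext m
    rw [coeff_tw, coeff_C_mul, map_sub, hf, coeff_mk]
    have := hb1 m
    field_simp at this
    linear_combination -this
  have hf0 : ∀ m, DLe (b m) D := fun m => hb2 m _ le_rfl (by simpa using hw0 m)
  have hfc : ∀ m : ℕ, DLe (b m) (c - (q + 1) * m) := by
    intro m
    by_cases hm : c - (q + 1) * m ≤ D
    · exact hb2 m _ hm (hc m)
    · exact (hf0 m).mono (by omega)
  have hfconv : Conv f (q + 1) := ⟨c, fun m => by simpa [hf] using hfc m⟩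
  have hf2 : Conv f 2 := hfconv.mono (by omega)
  have hw2 : Conv w 2 := Conv.mono ⟨c, hc⟩ (by omega)
  have hx2 := dle_x hx
  refine ⟨f, hfeq, fun m => by simpa [hf] using hf0 m, hfconv, fun d => ?_, fun N => ?_⟩
  · have h1 := congrArg (fun g => ev x (twk 𝔽 d g)) hfeq
    simp only [← twk_succ', map_mul, map_sub, twk_C] at h1
    rw [ev_mul hx2 (Conv.C _ 2) ((conv_twk 𝔽 hf2 d).sub (conv_twk 𝔽 hw2 d)), ev_C 2 hx2,
      ev_sub hx2 (conv_twk 𝔽 hf2 d) (conv_twk 𝔽 hw2 d)] at h1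
    have h2 : kap 𝔽 x (d + 1) ^ n * a ^ q ^ d = kap 𝔽 x d ^ n := by
      rw [kap, Finset.prod_range_succ, ← kap, ha, ← pow_mul, mul_comm n, pow_mul,
        neg_pow_qpow 𝔽, ← pow_mul, ← pow_succ', mul_pow, mul_assoc, ← mul_pow, inv_mul_cancel₀,
        one_pow, mul_one]
      exact neg_ne_zero.2 (pow_ne_zero _ (x_ne_zero hx))
    rw [h1, ← mul_assoc, h2]; ring
  · set c' := c.natAbs with hc'
    have hcc : c ≤ c' := Int.le_natAbs
    refine ⟨n * q + (q - 1) * (2 * c' + N), fun d hd => ?_⟩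
    have hQ1 : (1 : ℤ) ≤ (q : ℤ) ^ d := one_le_pow₀ (by omega)
    have hdq : (d : ℤ) ≤ (q : ℤ) ^ d := by exact_mod_cast (Nat.lt_pow_self hq2).le
    have hpb : PB (twk 𝔽 d f) ((q : ℤ) ^ d * D + 2 * c') 2 := by
      intro m
      rw [coeff_twk, hf, coeff_mk]
      by_cases hm : m ≤ c'
      · refine ((hf0 m).pow _).mono ?_
        push_cast
        rw [← hq]
        omega
      · refine ((hfc m).pow _).mono ?_
        push_cast
        rw [← hq]
        have hm' : (c' : ℤ) < m := by exact_mod_cast (not_le.1 hm)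
        have e1 : c - (q + 1) * m ≤ -2 * (m : ℤ) := by nlinarith
        have e2 : (q : ℤ) ^ d * (c - (q + 1) * m) ≤ c - (q + 1) * m := by nlinarith
        have e3 : (0 : ℤ) ≤ (q : ℤ) ^ d * D := by positivity
        linarith [Int.natCast_nonneg c']
    have h1 := hpb.ev_dle hx2
    obtain ⟨s, hs, hs'⟩ := v_kap 𝔽 hx d
    have h2 := ((dle_of_v_eq hs).pow n).mul h1
    refine h2.mono ?_
    rw [← hq] at hs'
    have hd' : (n * q + (q - 1) * (2 * c' + N) : ℤ) ≤ d := by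
      have : ((q - 1 : ℕ) : ℤ) = q - 1 := by push_cast [show 1 ≤ q by omega]; ring
      rw [← this]; exact_mod_cast hd
    have key : ((q : ℤ) - 1) * (n * -s + ((q : ℤ) ^ d * D + 2 * c')) ≤ ((q : ℤ) - 1) * (-N) := by
      have e1 : ((q : ℤ) - 1) * (n * -s) = - n * ((q : ℤ) ^ (d + 1) - q) := by rw [← hs']; ring
      have e2 : ((q : ℤ) ^ d) * (((q : ℤ) - 1) * D) ≤ ((q : ℤ) ^ d) * (n * q - 1) := by
        apply mul_le_mul_of_nonneg_left _ (by positivity); omega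
      rw [mul_add, e1, pow_succ]
      nlinarith
    exact le_of_mul_le_mul_left key (by omega)

lemma ev_twk_emb {x : K} (hx : CVal.v x = exp 1) (P : Polynomial (Polynomial 𝔽)) (d : ℕ) :
    ev x (twk 𝔽 d (emb x P)) = evp x (x ^ Fintype.card 𝔽 ^ d) P := by
  rw [← emb_sg, ev_emb hx (dle_x hx)]
  have : (evp (𝔽 := 𝔽) x x).comp (sg d) = evp x (x ^ Fintype.card 𝔽 ^ d) := by
    apply Polynomial.ringHom_ext
    · intro p; simp [sg, evp]
    · simp [sg, evp]
  exact congrArg (fun g => g P) this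

lemma Null.const_mul {T : ℕ → K} (h : Null T) (a : K) : Null fun d => a * T d := by
  rcases eq_or_ne a 0 with rfl | ha
  · exact fun N => ⟨0, fun d _ => by simpa using DLe.zero _⟩
  obtain ⟨e, he⟩ := exists_v_eq ha
  intro N
  obtain ⟨d₀, hd⟩ := h (N + e.natAbs)
  refine ⟨d₀, fun d hd' => ((dle_of_v_eq he).mul (hd d hd')).mono ?_⟩
  have := le_abs_self e
  push_cast
  linarith

/-- The functions `f₁`, `f₂` and their values at `t = x`: if `c(x) S_d ℓ_d^n = V(x, x^{q^d})`, then
`f₁(x)` and `f₂(x)` are, up to the factor `ω(x)^n c(x)` and its square, the sums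
`∑_d S_d` and `∑_{d < e} S_d S_e`. -/
lemma exists_f {x : K} (hq : 3 ≤ Fintype.card 𝔽) (hx : CVal.v x = exp 1) {ω : K⟦X⟧}
    (hω : IsOm 𝔽 x ω) {n : ℕ} {V : Polynomial (Polynomial 𝔽)}
    (hV : (Fintype.card 𝔽 - 1) * V.natDegree < n * Fintype.card 𝔽) {c : Polynomial 𝔽} (hc : c ≠ 0)
    {S : ℕ → K} (hS : ∀ d, Polynomial.aeval x c * S d * ell 𝔽 x d ^ n =
      evp x (x ^ Fintype.card 𝔽 ^ d) V) :
    ∃ f₁ f₂ : K⟦X⟧, Conv f₁ (Fintype.card 𝔽 + 1) ∧ Conv f₂ (Fintype.card 𝔽 + 1) ∧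
      tw 𝔽 f₁ = C ((-(x ^ Fintype.card 𝔽)) ^ n) * (f₁ - emb x V * ω ^ n) ∧
      tw 𝔽 f₂ = C ((-(x ^ Fintype.card 𝔽)) ^ (2 * n)) *
        (f₂ - emb x V * ω ^ n * (f₁ - emb x V * ω ^ n)) ∧
      ∃ T U : ℕ → K, Null T ∧ Null U ∧ (∀ d, T d - T (d + 1) = S d) ∧
        (∀ d, U d - U (d + 1) = S d * T (d + 1)) ∧
        ev x f₁ = (ev x ω ^ n * Polynomial.aeval x c) * T 0 ∧
        ev x f₂ = (ev x ω ^ n * Polynomial.aeval x c) ^ 2 * U 0 := by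
  set q := Fintype.card 𝔽 with hqdef
  set D := V.natDegree with hD
  set w := emb x V * ω ^ n with hw
  have hx2 := dle_x hx
  have hwc : Conv w (q + 1) := (conv_emb hx V _).mul (hω.conv.pow n)
  have hωpb : PB ω 0 0 := hω.pb.mono' le_rfl (by positivity)
  have hwpb : PB w D 0 := by
    have h1 : PB (emb x V) D 0 := fun m => by simpa using dle_coeff_emb hx V m
    simpa using h1.mul (hωpb.pow n)
  obtain ⟨f₁, e1, pb1, cv1, T1, N1⟩ := exists_sol 𝔽 hx hV hwpb hwc
  have hpb2 : PB (w * (f₁ - w)) ((2 * D : ℕ) : ℤ) 0 := by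
    refine (hwpb.mul (pb1.sub hwpb)).mono ?_
    push_cast; omega
  obtain ⟨f₂, e2, pb2, cv2, T2, N2⟩ := exists_sol 𝔽 hx (n := 2 * n) (D := 2 * D) (by
    rw [← hqdef]; nlinarith) hpb2 (hwc.mul (cv1.sub hwc))
  set G := ev x ω ^ n * Polynomial.aeval x c with hG
  have hG0 : G ≠ 0 := mul_ne_zero (pow_ne_zero _ (ne_zero_of_v_eq (hω.v_ev hq hx)))
    fun h => hc (aeval_inj hx h)
  have hω2 := hω.conv2
  have hw2 : Conv w 2 := hwc.mono (by omega)
  have hf2 : Conv f₁ 2 := cv1.mono (by omega)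
  have hev : ∀ d, kap 𝔽 x d ^ n * ev x (twk 𝔽 d w) = G * S d := by
    intro d
    rw [hw, map_mul, map_pow, ev_mul hx2 (conv_twk 𝔽 (conv_emb hx V 2) d)
      ((conv_twk 𝔽 hω2 d).pow n), ev_pow hx2 (conv_twk 𝔽 hω2 d), ev_twk_emb 𝔽 hx, ← hqdef, ← hS d,
      hG, ← hω.kap_ell hx d]
    ring
  refine ⟨f₁, f₂, cv1, cv2, e1, e2, fun d => G⁻¹ * (kap 𝔽 x d ^ n * ev x (twk 𝔽 d f₁)),
    fun d => (G ^ 2)⁻¹ * (kap 𝔽 x d ^ (2 * n) * ev x (twk 𝔽 d f₂)), N1.const_mul _,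
    N2.const_mul _, fun d => ?_, fun d => ?_, ?_, ?_⟩
  · rw [← mul_sub, T1, hev, inv_mul_cancel_left₀ hG0]
  · have h3 : kap 𝔽 x d ^ n * (ev x (twk 𝔽 d f₁) - ev x (twk 𝔽 d w)) =
        kap 𝔽 x (d + 1) ^ n * ev x (twk 𝔽 (d + 1) f₁) := by
      linear_combination T1 d
    rw [← mul_sub, T2, map_mul, map_sub, ev_mul hx2 (conv_twk 𝔽 hw2 d)
      ((conv_twk 𝔽 hf2 d).sub (conv_twk 𝔽 hw2 d)), ev_sub hx2 (conv_twk 𝔽 hf2 d)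
      (conv_twk 𝔽 hw2 d), two_mul, pow_add, mul_mul_mul_comm, hev, h3]
    field_simp
  · simp [kap, twk_zero, hG0]
  · simp [kap, twk_zero, hG0]

end Functions

/-! ### Power sums over monic polynomials of fixed degree -/

section PowerSums

open WithZero

variable {K : Type*} [Field K] [CVal K]
variable (𝔽 : Type*) [Field 𝔽] [Fintype 𝔽] [Algebra 𝔽 K]

open Classical in
/-- The finite set of monic polynomials of degree `d`. -/
noncomputable def monics (d : ℕ) : Finset (Polynomial 𝔽) :=
  Finset.univ.image fun f : Fin d → 𝔽 =>
    Polynomial.X ^ d + ∑ i : Fin d, Polynomial.C (f i) * Polynomial.X ^ (i : ℕ)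

lemma degree_lowpart {d : ℕ} (f : Fin d → 𝔽) :
    Polynomial.degree (∑ i : Fin d, Polynomial.C (f i) * Polynomial.X ^ (i : ℕ)) <
      (d : WithBot ℕ) := by
  refine lt_of_le_of_lt (Polynomial.degree_sum_le _ _) ?_
  rw [Finset.sup_lt_iff (by exact_mod_cast WithBot.bot_lt_coe d)]
  intro i _
  exact lt_of_le_of_lt (Polynomial.degree_C_mul_X_pow_le _ _) (by exact_mod_cast i.2)

lemma coeff_lowpart {d : ℕ} (f : Fin d → 𝔽) (i : Fin d) :
    Polynomial.coeff (∑ i : Fin d, Polynomial.C (f i) * Polynomial.X ^ (i : ℕ)) i = f i := by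
  simp only [Polynomial.finsetSum_coeff, Polynomial.coeff_C_mul_X_pow]
  rw [Finset.sum_eq_single i]
  · simp
  · intro j _ hj
    rw [if_neg]
    exact fun h => hj (Fin.ext h.symm)
  · simp

variable {𝔽}

lemma mem_monics {d : ℕ} {a : Polynomial 𝔽} : a ∈ monics 𝔽 d ↔ a.Monic ∧ a.natDegree = d := by
  simp only [monics, Finset.mem_image, Finset.mem_univ, true_and]
  constructor
  · rintro ⟨f, rfl⟩
    refine ⟨Polynomial.monic_X_pow_add (degree_lowpart 𝔽 f), ?_⟩
    apply Polynomial.natDegree_eq_of_degree_eq_some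
    rw [Polynomial.degree_add_eq_left_of_degree_lt, Polynomial.degree_X_pow]
    rw [Polynomial.degree_X_pow]
    exact degree_lowpart 𝔽 f
  · rintro ⟨h1, h2⟩
    refine ⟨fun i => a.coeff i, ?_⟩
    conv_rhs => rw [h1.as_sum, h2]
    rw [Finset.sum_range]

lemma card_monics (d : ℕ) : (monics 𝔽 d).card = Fintype.card 𝔽 ^ d := by
  classical
  rw [monics, Finset.card_image_of_injective]
  · simp
  · intro f g h
    have h := add_left_cancel h
    funext i
    rw [← coeff_lowpart 𝔽 f i, ← coeff_lowpart 𝔽 g i, h]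

/-- The power sum `S_d(n) = ∑ a(x)⁻ⁿ` over the monic `a` of degree `d`. -/
noncomputable def psum (𝔽 : Type*) [Field 𝔽] [Fintype 𝔽] [Algebra 𝔽 K] (x : K) (d n : ℕ) : K :=
  ∑ a ∈ monics 𝔽 d, (Polynomial.aeval x a ^ n)⁻¹

/-- The weight `∏_{j ≤ d, j ≠ i} (x^{q^i} - x^{q^j})⁻¹`, and `0` for `i > d`. -/
noncomputable def wt (𝔽 : Type*) [Fintype 𝔽] (x : K) (d i : ℕ) : K :=
  if i ≤ d then (∏ j ∈ (Finset.range (d + 1)).erase i,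
    (x ^ Fintype.card 𝔽 ^ i - x ^ Fintype.card 𝔽 ^ j))⁻¹ else 0

variable {x : K}

lemma v_monic (hx : CVal.v x = exp 1) {d : ℕ} {a : Polynomial 𝔽} (ha : a ∈ monics 𝔽 d) :
    CVal.v (Polynomial.aeval x a) = exp (d : ℤ) := by
  obtain ⟨h1, h2⟩ := mem_monics.1 ha
  rw [v_aeval hx h1.ne_zero, h2]

lemma monic_ne_zero (hx : CVal.v x = exp 1) {d : ℕ} {a : Polynomial 𝔽} (ha : a ∈ monics 𝔽 d) :
    Polynomial.aeval x a ≠ 0 := ne_zero_of_v_eq (v_monic hx ha)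

lemma dle_psum (hx : CVal.v x = exp 1) (d n : ℕ) : DLe (psum 𝔽 x d n) (-(n * d : ℤ)) := by
  refine DLe.sum fun a ha => dle_of_v_eq ?_
  exact v_inv_eq (v_pow_eq (v_monic hx ha) n)

lemma psum_zero (n : ℕ) : psum 𝔽 x 0 n = 1 := by
  have : monics 𝔽 0 = {1} := by
    ext a
    rw [mem_monics, Finset.mem_singleton]
    constructor
    · rintro ⟨h1, h2⟩
      exact h1.natDegree_eq_zero.1 h2
    · rintro rfl; simp
  simp [psum, this]

lemma aeval_pow_qpow (a : Polynomial 𝔽) (y : K) (i : ℕ) :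
    Polynomial.aeval y a ^ Fintype.card 𝔽 ^ i = Polynomial.aeval (y ^ Fintype.card 𝔽 ^ i) a := by
  rw [Polynomial.aeval_eq_sum_range, Polynomial.aeval_eq_sum_range, sum_pow_qpow (𝔽 := 𝔽)]
  refine Finset.sum_congr rfl fun j _ => ?_
  rw [Algebra.smul_def, Algebra.smul_def, mul_pow, ← map_pow, FiniteField.pow_card_pow, ← pow_mul,
    ← pow_mul, mul_comm j]

lemma xq_inj (hx : CVal.v x = exp 1) {i j : ℕ}
    (h : x ^ Fintype.card 𝔽 ^ i = x ^ Fintype.card 𝔽 ^ j) : i = j := by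
  have h1 := v_xq 𝔽 hx i
  rw [h, v_xq 𝔽 hx j, WithZero.exp_inj] at h1
  have : Fintype.card 𝔽 ^ j = Fintype.card 𝔽 ^ i := by exact_mod_cast h1
  exact (Nat.pow_right_injective (two_le_q 𝔽) this).symm

/-- The `𝔽`-linear polynomial `∑ w_i z^{q^i}` takes the value `1` at monic polynomials of
degree `d`. -/
lemma sum_wt (hx : CVal.v x = exp 1) {d : ℕ} {a : Polynomial 𝔽} (ha : a ∈ monics 𝔽 d) :
    ∑ i ∈ Finset.range (d + 1), wt 𝔽 x d i * Polynomial.aeval x a ^ Fintype.card 𝔽 ^ i = 1 := by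
  obtain ⟨h1, h2⟩ := mem_monics.1 ha
  have h := Lagrange.coeff_eq_sum (s := Finset.range (d + 1))
    (v := fun i => x ^ Fintype.card 𝔽 ^ i) (fun i _ j _ h => xq_inj hx h)
    (P := a.map (algebraMap 𝔽 K)) (by
      rw [Polynomial.degree_map, Polynomial.degree_eq_natDegree h1.ne_zero, h2, Finset.card_range]
      exact_mod_cast Nat.lt_succ_self d)
  rw [Finset.card_range, Nat.add_sub_cancel, Polynomial.coeff_map, ← h2, h1.coeff_natDegree,
    map_one] at h
  rw [← h2, h]
  refine Finset.sum_congr rfl fun i hi => ?_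
  rw [wt, if_pos (by rw [Finset.mem_range] at hi; omega), aeval_pow_qpow, Polynomial.eval_map,
    ← Polynomial.aeval_def, div_eq_inv_mul]

lemma card_eq_zero : (Fintype.card 𝔽 : K) = 0 := by
  have : (Fintype.card 𝔽 : 𝔽) = 0 := FiniteField.cast_card_eq_zero 𝔽
  have h := congrArg (algebraMap 𝔽 K) this
  rwa [map_natCast, map_zero] at h

/-- Lagrange interpolation at the monic polynomials of degree `d` gives the generating identity
for power sums. -/
lemma sum_wt_pow (hx : CVal.v x = exp 1) (d m : ℕ) :
    ∑ a ∈ monics 𝔽 d, ∑ i ∈ Finset.range (d + 1),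
      (if m < Fintype.card 𝔽 ^ i then
        wt 𝔽 x d i * Polynomial.aeval x a ^ (Fintype.card 𝔽 ^ i - 1 - m) else 0) =
      if m = 0 then wt 𝔽 x d 0 else 0 := by
  set q := Fintype.card 𝔽 with hq
  have hq2 : 2 ≤ q := two_le_q 𝔽
  let Q : Polynomial 𝔽 → Polynomial K := fun a => ∑ i ∈ Finset.range (d + 1),
    Polynomial.C (wt 𝔽 x d i) * ∑ k ∈ Finset.range (q ^ i),
      Polynomial.X ^ k * Polynomial.C (Polynomial.aeval x a) ^ (q ^ i - 1 - k)
  have hQ : ∑ a ∈ monics 𝔽 d, Q a = Polynomial.C (wt 𝔽 x d 0) := by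
    refine Polynomial.eq_of_degrees_lt_of_eval_index_eq (monics 𝔽 d)
      (v := fun a => Polynomial.aeval x a) ?_ ?_ ?_ ?_
    · intro a _ b _ hab
      have : Polynomial.aeval x (a - b) = 0 := by rw [map_sub, sub_eq_zero]; exact hab
      exact sub_eq_zero.1 (aeval_inj hx this)
    · rw [card_monics, ← hq, ← Polynomial.mem_degreeLT]
      refine Submodule.sum_mem _ fun a _ => Submodule.sum_mem _ fun i hi => ?_
      rw [← Polynomial.smul_eq_C_mul]
      refine Submodule.smul_mem _ _ (Submodule.sum_mem _ fun k hk => ?_)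
      rw [mul_comm, ← map_pow, ← Polynomial.smul_eq_C_mul]
      refine Submodule.smul_mem _ _ ?_
      rw [Polynomial.mem_degreeLT, Polynomial.degree_X_pow]
      have h1 : q ^ i ≤ q ^ d :=
        Nat.pow_le_pow_right (by omega) (by rw [Finset.mem_range] at hi; omega)
      have h2 := Finset.mem_range.1 hk
      exact_mod_cast h2.trans_le h1
    · rw [card_monics]
      refine lt_of_le_of_lt Polynomial.degree_C_le ?_
      exact_mod_cast qpow_pos d
    · intro b hb
      rw [Polynomial.eval_finsetSum, Polynomial.eval_C, Finset.sum_eq_single b]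
      · simp only [Q, Polynomial.eval_finsetSum, Polynomial.eval_mul, Polynomial.eval_C,
          Polynomial.eval_pow, Polynomial.eval_X]
        rw [Finset.sum_eq_single 0]
        · simp
        · intro i _ hi
          have : ∀ k ∈ Finset.range (q ^ i), Polynomial.aeval x b ^ k *
              Polynomial.aeval x b ^ (q ^ i - 1 - k) = Polynomial.aeval x b ^ (q ^ i - 1) := by
            intro k hk
            rw [Finset.mem_range] at hk
            rw [← pow_add]; congr 1; omega
          rw [Finset.sum_congr rfl this, Finset.sum_const, Finset.card_range, nsmul_eq_mul]
          rw [hq]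
          push_cast
          rw [card_eq_zero, zero_pow hi]; simp
        · simp
      · intro a ha hab
        have h1 : (Q a).eval (Polynomial.aeval x b) *
            (Polynomial.aeval x b - Polynomial.aeval x a) = 0 := by
          simp only [Q, Polynomial.eval_finsetSum, Polynomial.eval_mul, Polynomial.eval_C,
            Polynomial.eval_pow, Polynomial.eval_X]
          have h0 : (∑ i ∈ Finset.range (d + 1), wt 𝔽 x d i * Polynomial.aeval x b ^ q ^ i) -
              ∑ i ∈ Finset.range (d + 1), wt 𝔽 x d i * Polynomial.aeval x a ^ q ^ i = 0 :=
            sub_eq_zero.2 ((sum_wt hx hb).trans (sum_wt hx ha).symm)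
          rw [← Finset.sum_sub_distrib] at h0
          rw [← h0, Finset.sum_mul]
          refine Finset.sum_congr rfl fun i _ => ?_
          rw [mul_assoc, (Commute.all _ _).geom_sum₂_mul, mul_sub]
        rcases mul_eq_zero.1 h1 with h | h
        · exact h
        · exfalso
          apply hab
          rw [← map_sub] at h
          exact (sub_eq_zero.1 (aeval_inj hx h)).symm
      · exact fun h => absurd hb h
  have h := congrArg (fun P => Polynomial.coeff P m) hQ
  simp only [Polynomial.finsetSum_coeff, Polynomial.coeff_C] at h
  rw [← h]
  refine Finset.sum_congr rfl fun a _ => ?_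
  simp only [Q, Polynomial.finsetSum_coeff, Polynomial.coeff_C_mul, ← map_pow,
    Polynomial.coeff_mul_C, Polynomial.coeff_X_pow]
  refine Finset.sum_congr rfl fun i _ => ?_
  simp only [ite_mul, one_mul, zero_mul, Finset.sum_ite_eq, Finset.mem_range]
  split_ifs <;> simp

/-- The recursion for power sums. -/
lemma psum_rec (hx : CVal.v x = exp 1) (d m : ℕ) :
    psum 𝔽 x d (m + 1) = (∑ i ∈ (Finset.range (m + 1)).filter (fun i => Fintype.card 𝔽 ^ i ≤ m),
      wt 𝔽 x d i * psum 𝔽 x d (m + 1 - Fintype.card 𝔽 ^ i)) +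
      if m = 0 then wt 𝔽 x d 0 else 0 := by
  set q := Fintype.card 𝔽 with hq
  have hq2 : 2 ≤ q := two_le_q 𝔽
  rw [← sum_wt_pow hx d m]
  have h1 : ∀ a ∈ monics 𝔽 d, (Polynomial.aeval x a ^ (m + 1))⁻¹ =
      ∑ i ∈ Finset.range (d + 1), ((if q ^ i ≤ m then
        wt 𝔽 x d i * (Polynomial.aeval x a ^ (m + 1 - q ^ i))⁻¹ else 0) +
        (if m < q ^ i then wt 𝔽 x d i * Polynomial.aeval x a ^ (q ^ i - 1 - m) else 0)) := by
    intro a ha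
    have h0 := monic_ne_zero hx ha
    rw [← mul_one (Polynomial.aeval x a ^ (m + 1))⁻¹, ← sum_wt hx ha, Finset.mul_sum]
    refine Finset.sum_congr rfl fun i _ => ?_
    by_cases hi : q ^ i ≤ m
    · rw [if_pos hi, if_neg (by omega), add_zero, ← hq]
      obtain ⟨s, hs⟩ : ∃ s, m + 1 = q ^ i + s := ⟨m + 1 - q ^ i, by omega⟩
      rw [hs, Nat.add_sub_cancel_left, pow_add]
      field_simp
    · rw [if_neg hi, if_pos (by omega), zero_add, ← hq]
      obtain ⟨s, hs⟩ : ∃ s, q ^ i = m + 1 + s := ⟨q ^ i - (m + 1), by omega⟩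
      rw [hs, show m + 1 + s - 1 - m = s by omega, pow_add]
      field_simp
      ring
  rw [psum, Finset.sum_congr rfl h1]
  simp only [Finset.sum_add_distrib]
  congr 1
  rw [Finset.sum_comm]
  simp only [psum, Finset.mul_sum]
  rw [Finset.sum_filter]
  -- both sums run over `i` with `i ≤ d` and `q ^ i ≤ m`
  have h2 : ∀ i, (∑ a ∈ monics 𝔽 d, if q ^ i ≤ m then
      wt 𝔽 x d i * (Polynomial.aeval x a ^ (m + 1 - q ^ i))⁻¹ else 0) =
      if q ^ i ≤ m then ∑ a ∈ monics 𝔽 d,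
        wt 𝔽 x d i * (Polynomial.aeval x a ^ (m + 1 - q ^ i))⁻¹ else 0 := by
    intro i; split_ifs <;> simp
  simp only [h2]
  have h3 : ∀ N, d ≤ N → m ≤ N → (∑ i ∈ Finset.range (d + 1), if q ^ i ≤ m then
      ∑ a ∈ monics 𝔽 d, wt 𝔽 x d i * (Polynomial.aeval x a ^ (m + 1 - q ^ i))⁻¹ else 0) =
      ∑ i ∈ Finset.range (N + 1), if q ^ i ≤ m then
      ∑ a ∈ monics 𝔽 d, wt 𝔽 x d i * (Polynomial.aeval x a ^ (m + 1 - q ^ i))⁻¹ else 0 := by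
    intro N hN _
    refine Finset.sum_subset (Finset.range_mono (by omega)) fun i _ hi => ?_
    rw [Finset.mem_range] at hi
    simp [wt, show ¬ i ≤ d by omega]
  have h4 : ∀ N, d ≤ N → m ≤ N → (∑ i ∈ Finset.range (m + 1), if q ^ i ≤ m then
      ∑ a ∈ monics 𝔽 d, wt 𝔽 x d i * (Polynomial.aeval x a ^ (m + 1 - q ^ i))⁻¹ else 0) =
      ∑ i ∈ Finset.range (N + 1), if q ^ i ≤ m then
      ∑ a ∈ monics 𝔽 d, wt 𝔽 x d i * (Polynomial.aeval x a ^ (m + 1 - q ^ i))⁻¹ else 0 := by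
    intro N hN _
    refine Finset.sum_subset (Finset.range_mono (by omega)) fun i _ hi => ?_
    rw [Finset.mem_range] at hi
    rw [if_neg]
    have : i < q ^ i := Nat.lt_pow_self hq2
    omega
  rw [h3 (d + m) (by omega) (by omega), h4 (d + m) (by omega) (by omega)]

variable (𝔽) in
/-- `s d`, up to a fixed factor `c(x)`, is the value at `(x, x^{q^d})` of a fixed polynomial
`V(t, y)` with `(q - 1) deg_y V ≤ B`. -/
def QRep (x : K) (s : ℕ → K) (B : ℕ) : Prop :=
  ∃ (c : Polynomial 𝔽) (V : Polynomial (Polynomial 𝔽)), c ≠ 0 ∧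
    (Fintype.card 𝔽 - 1) * V.natDegree ≤ B ∧
    ∀ d, Polynomial.aeval x c * s d = evp x (x ^ Fintype.card 𝔽 ^ d) V

lemma evp_C (a b : K) (c : Polynomial 𝔽) : evp a b (Polynomial.C c) = Polynomial.aeval a c := by
  simp [evp]

lemma evp_X (a b : K) : evp a b (Polynomial.X : Polynomial (Polynomial 𝔽)) = b := by
  simp [evp]

lemma QRep.zero (B : ℕ) : QRep 𝔽 x (fun _ => 0) B :=
  ⟨1, 0, one_ne_zero, by simp, by simp⟩

lemma QRep.add {s s' : ℕ → K} {B : ℕ} (h : QRep 𝔽 x s B) (h' : QRep 𝔽 x s' B) :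
    QRep 𝔽 x (fun d => s d + s' d) B := by
  obtain ⟨c, V, hc, hV, e⟩ := h
  obtain ⟨c', V', hc', hV', e'⟩ := h'
  refine ⟨c * c', Polynomial.C c' * V + Polynomial.C c * V', mul_ne_zero hc hc', ?_, fun d => ?_⟩
  · have h1 : (Polynomial.C c' * V + Polynomial.C c * V').natDegree ≤
        max V.natDegree V'.natDegree :=
      (Polynomial.natDegree_add_le _ _).trans
        (max_le_max (Polynomial.natDegree_C_mul_le _ _) (Polynomial.natDegree_C_mul_le _ _))
    rcases max_cases V.natDegree V'.natDegree with ⟨h, _⟩ | ⟨h, _⟩ <;> rw [h] at h1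
    · exact (Nat.mul_le_mul_left _ h1).trans hV
    · exact (Nat.mul_le_mul_left _ h1).trans hV'
  · simp only [map_add, map_mul, evp_C, ← e, ← e']; ring

lemma QRep.mul {s s' : ℕ → K} {B B' : ℕ} (h : QRep 𝔽 x s B) (h' : QRep 𝔽 x s' B') :
    QRep 𝔽 x (fun d => s d * s' d) (B + B') := by
  obtain ⟨c, V, hc, hV, e⟩ := h
  obtain ⟨c', V', hc', hV', e'⟩ := h'
  refine ⟨c * c', V * V', mul_ne_zero hc hc', ?_, fun d => ?_⟩
  · exact (Nat.mul_le_mul_left _ Polynomial.natDegree_mul_le).trans (by rw [mul_add]; omega)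
  · rw [map_mul, map_mul, ← e, ← e']; ring

lemma QRep.mono {s : ℕ → K} {B B' : ℕ} (h : QRep 𝔽 x s B) (hB : B ≤ B') : QRep 𝔽 x s B' := by
  obtain ⟨c, V, hc, hV, e⟩ := h
  exact ⟨c, V, hc, hV.trans hB, e⟩

lemma QRep.sum {ι : Type*} {I : Finset ι} {s : ι → ℕ → K} {B : ℕ}
    (h : ∀ i ∈ I, QRep 𝔽 x (s i) B) : QRep 𝔽 x (fun d => ∑ i ∈ I, s i d) B := by
  classical
  induction I using Finset.induction_on with
  | empty => simpa using QRep.zero B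
  | insert i I hi ih =>
    simp only [Finset.sum_insert hi]
    exact (h i (Finset.mem_insert_self _ _)).add
      (ih fun j hj => h j (Finset.mem_insert_of_mem hj))

lemma ell_pow (d i : ℕ) : ell 𝔽 x d ^ Fintype.card 𝔽 ^ i =
    ∏ j ∈ Finset.range d, (x ^ Fintype.card 𝔽 ^ i - x ^ Fintype.card 𝔽 ^ (i + j + 1)) := by
  rw [ell, ← Finset.prod_pow]
  refine Finset.prod_congr rfl fun j _ => ?_
  have h := sum_pow_qpow (𝔽 := 𝔽) i (Finset.univ : Finset (Fin 2)) ![x, - x ^ Fintype.card 𝔽 ^ (j + 1)]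
  simp only [Fin.sum_univ_two, Matrix.cons_val_zero, Matrix.cons_val_one] at h
  rw [sub_eq_add_neg, h, neg_pow_qpow 𝔽, ← pow_mul, ← pow_add, ← sub_eq_add_neg]
  congr 3; ring

/-- `D_i w_i(d) ℓ_d^{q^i} = ∏_{k=1}^{i} (x^{q^i} - x^{q^{d+k}})`. -/
lemma wt_ell (hx : CVal.v x = exp 1) (d i : ℕ) :
    (∏ j ∈ Finset.range i, (x ^ Fintype.card 𝔽 ^ i - x ^ Fintype.card 𝔽 ^ j)) *
      (wt 𝔽 x d i * ell 𝔽 x d ^ Fintype.card 𝔽 ^ i) =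
    ∏ k ∈ Finset.range i, (x ^ Fintype.card 𝔽 ^ i - x ^ Fintype.card 𝔽 ^ (d + k + 1)) := by
  by_cases hi : i ≤ d
  · obtain ⟨e, rfl⟩ := Nat.exists_eq_add_of_le hi
    rw [wt, if_pos hi]
    have h1 : (Finset.range (i + e + 1)).erase i =
        Finset.range i ∪ (Finset.range e).image (fun j => i + j + 1) := by
      ext j
      simp only [Finset.mem_erase, Finset.mem_range, Finset.mem_union, Finset.mem_image]
      constructor
      · rintro ⟨h1, h2⟩
        rcases lt_or_gt_of_ne h1 with h | h
        · exact Or.inl h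
        · exact Or.inr ⟨j - i - 1, by omega, by omega⟩
      · rintro (h | ⟨k, hk, rfl⟩) <;> omega
    have h2 : Disjoint (Finset.range i) ((Finset.range e).image (fun j => i + j + 1)) := by
      rw [Finset.disjoint_left]
      intro j hj hj'
      simp only [Finset.mem_range, Finset.mem_image] at hj hj'
      omega
    rw [h1, Finset.prod_union h2, Finset.prod_image (by intro a _ b _ h; simpa using h), ell_pow,
      show i + e = e + i by ring, Finset.prod_range_add]
    have n1 : ∏ j ∈ Finset.range i, (x ^ Fintype.card 𝔽 ^ i - x ^ Fintype.card 𝔽 ^ j) ≠ 0 := by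
      rw [Finset.prod_ne_zero_iff]
      intro j hj h
      have := xq_inj hx (sub_eq_zero.1 h)
      rw [Finset.mem_range] at hj; omega
    have n2 : ∏ j ∈ Finset.range e,
        (x ^ Fintype.card 𝔽 ^ i - x ^ Fintype.card 𝔽 ^ (i + j + 1)) ≠ 0 := by
      rw [Finset.prod_ne_zero_iff]
      intro j hj h
      have := xq_inj hx (sub_eq_zero.1 h)
      omega
    rw [mul_inv]
    field_simp
    refine Finset.prod_congr rfl fun k _ => ?_
    congr 3; ring
  · rw [wt, if_neg hi, zero_mul, mul_zero, eq_comm, Finset.prod_eq_zero_iff]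
    refine ⟨i - d - 1, by rw [Finset.mem_range]; omega, ?_⟩
    rw [show d + (i - d - 1) + 1 = i by omega, sub_self]

lemma rep_wt (hx : CVal.v x = exp 1) (i : ℕ) :
    QRep 𝔽 x (fun d => wt 𝔽 x d i * ell 𝔽 x d ^ Fintype.card 𝔽 ^ i)
      (Fintype.card 𝔽 * (Fintype.card 𝔽 ^ i - 1)) := by
  set q := Fintype.card 𝔽 with hq
  have hq2 : 2 ≤ q := two_le_q 𝔽
  refine ⟨∏ j ∈ Finset.range i, (Polynomial.X ^ q ^ i - Polynomial.X ^ q ^ j),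
    ∏ k ∈ Finset.range i, (Polynomial.C (Polynomial.X ^ q ^ i) - Polynomial.X ^ q ^ (k + 1)),
    ?_, ?_, fun d => ?_⟩
  · intro h
    have h := congrArg (Polynomial.aeval x) h
    rw [map_zero, map_prod, Finset.prod_eq_zero_iff] at h
    obtain ⟨j, hj, h⟩ := h
    simp only [map_sub, map_pow, Polynomial.aeval_X] at h
    have := xq_inj hx (sub_eq_zero.1 h)
    rw [Finset.mem_range] at hj; omega
  · have h1 : (∏ k ∈ Finset.range i, (Polynomial.C (Polynomial.X ^ q ^ i) -
        Polynomial.X ^ q ^ (k + 1)) : Polynomial (Polynomial 𝔽)).natDegree ≤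
        ∑ k ∈ Finset.range i, q ^ (k + 1) := by
      refine (Polynomial.natDegree_prod_le _ _).trans (Finset.sum_le_sum fun k _ => ?_)
      refine (Polynomial.natDegree_sub_le _ _).trans ?_
      rw [Polynomial.natDegree_C, Polynomial.natDegree_X_pow]; simp
    refine (Nat.mul_le_mul_left _ h1).trans (le_of_eq ?_)
    obtain ⟨r, hr⟩ : ∃ r, q = r + 1 := ⟨q - 1, by omega⟩
    have h2 : ∀ i, r * ∑ k ∈ Finset.range i, q ^ (k + 1) + q = q * q ^ i := by
      intro i
      induction i with
      | zero => simp
      | succ i ih =>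
        rw [Finset.sum_range_succ, mul_add, add_right_comm, ih, hr]; ring
    have h3 := h2 i
    have h4 : 1 ≤ q ^ i := Nat.one_le_pow _ _ (by omega)
    rw [Nat.mul_sub, ← h3, mul_one, Nat.add_sub_cancel, show Fintype.card 𝔽 - 1 = r by omega]
  · simp only [map_prod, map_sub, map_pow, Polynomial.aeval_X, evp_C, evp_X]
    rw [wt_ell hx]
    refine Finset.prod_congr rfl fun k _ => ?_
    rw [← pow_mul, ← pow_add, add_assoc]

/-- The power sums `S_d(n)`, multiplied by `ℓ_d ^ n`, are given by one polynomial in `x` and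
`x^{q^d}` of small degree in the latter (the Anderson–Thakur phenomenon). -/
theorem rep_psum (hx : CVal.v x = exp 1) (m : ℕ) :
    QRep 𝔽 x (fun d => psum 𝔽 x d (m + 1) * ell 𝔽 x d ^ (m + 1)) (Fintype.card 𝔽 * m) := by
  induction m using Nat.strong_induction_on with
  | _ m ih =>
  have hq2 : 2 ≤ Fintype.card 𝔽 := two_le_q 𝔽
  have e : (fun d => psum 𝔽 x d (m + 1) * ell 𝔽 x d ^ (m + 1)) = fun d =>
      (∑ i ∈ (Finset.range (m + 1)).filter (fun i => Fintype.card 𝔽 ^ i ≤ m),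
        (wt 𝔽 x d i * ell 𝔽 x d ^ Fintype.card 𝔽 ^ i) *
        (psum 𝔽 x d (m - Fintype.card 𝔽 ^ i + 1) * ell 𝔽 x d ^ (m - Fintype.card 𝔽 ^ i + 1))) +
      if m = 0 then wt 𝔽 x d 0 * ell 𝔽 x d ^ Fintype.card 𝔽 ^ 0 else 0 := by
    funext d
    rw [psum_rec hx, add_mul, Finset.sum_mul]
    congr 1
    · refine Finset.sum_congr rfl fun i hi => ?_
      have hi := (Finset.mem_filter.1 hi).2
      obtain ⟨s, hs⟩ := Nat.exists_eq_add_of_le hi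
      rw [hs, Nat.add_sub_cancel_left, show Fintype.card 𝔽 ^ i + s + 1 - Fintype.card 𝔽 ^ i = s + 1
        by omega]
      ring
    · split_ifs with h
      · subst h; simp
      · simp
  rw [e]
  refine QRep.add (QRep.sum fun i hi => ?_) ?_
  · have hi := (Finset.mem_filter.1 hi).2
    have h1 : 0 < Fintype.card 𝔽 ^ i := qpow_pos i
    refine ((rep_wt hx i).mul (ih (m - Fintype.card 𝔽 ^ i) (by omega))).mono ?_
    rw [← mul_add]
    exact Nat.mul_le_mul_left _ (by omega)
  · by_cases h : m = 0
    · simp only [if_pos h]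
      exact (rep_wt hx 0).mono (by simp)
    · simp only [if_neg h]; exact QRep.zero _

end PowerSums

/-! ### Difference algebra: transcendence over a field without semi-invariants -/

section Difference

open Polynomial

lemma choose_two_mul_qpow {F : Type*} [Field F] (p : ℕ) [Fact p.Prime] [CharP F p] (i : ℕ) :
    ((2 * p ^ i).choose (p ^ i) : F) = 2 := by
  have h0 : 0 < p ^ i := pow_pos (Fact.out : p.Prime).pos i
  have h : ((X + 1 : F[X]) ^ (2 * p ^ i)) = X ^ (2 * p ^ i) + C 2 * X ^ (p ^ i) + 1 := by
    rw [mul_comm 2, pow_mul, add_pow_char_pow, one_pow, pow_mul, map_ofNat]; ring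
  have h := congrArg (fun P => coeff P (p ^ i)) h
  simp only [coeff_X_add_one_pow, coeff_add, coeff_X_pow, coeff_C_mul, coeff_one] at h
  rw [h, if_neg (by omega), if_pos trivial, if_neg (by omega)]; ring

lemma eq_qpow_of_choose {F : Type*} [Field F] (p : ℕ) [Fact p.Prime] [CharP F p] (d : ℕ)
    (hd : 1 ≤ d) (h : ∀ k, 0 < k → k < d → (d.choose k : F) = 0) : ∃ i, d = p ^ i := by
  have hp : p.Prime := Fact.out
  induction d using Nat.strong_induction_on with
  | _ d ih =>
  rcases hd.eq_or_lt with h1 | h1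
  · exact ⟨0, by simp [← h1]⟩
  · have h2 := h 1 one_pos h1
    rw [Nat.choose_one_right, CharP.cast_eq_zero_iff F p] at h2
    obtain ⟨e, rfl⟩ := h2
    have he : 0 < e := Nat.pos_of_ne_zero (by rintro rfl; simp at hd)
    have hlt : e < p * e := by nlinarith [hp.two_le]
    obtain ⟨i, rfl⟩ := ih e hlt he fun k hk hke => by
      rw [← h (p * k) (Nat.mul_pos hp.pos hk) (Nat.mul_lt_mul_of_pos_left hke hp.pos)]
      have e1 : ((X + 1 : F[X]) ^ (p * e)) = expand F p ((X + 1) ^ e) := by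
        rw [pow_mul, add_pow_char, one_pow]; simp
      rw [← coeff_X_add_one_pow F (p * e) (p * k), e1, mul_comm p k,
        coeff_expand_mul hp.pos, coeff_X_add_one_pow]
    exact ⟨i + 1, by rw [pow_succ, mul_comm]⟩

variable {F : Type*} [Field F] (τ : F →+* F) (β : F)

/-- A subfield `E` of the difference field `(F, τ)` is *rigid* with respect to `β ∈ E` if it is
stable under `τ` and the equation `τ y = β ^ m y` has no nonzero solution in `E` for `m ≠ 0`. -/
structure Rigid (E : Subfield F) : Prop where
  stable : ∀ y ∈ E, τ y ∈ E
  mem : β ∈ E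
  triv : ∀ y ∈ E, ∀ m : ℤ, τ y = β ^ m * y → y = 0 ∨ m = 0

/-- The coefficients of `A` lie in `E`. -/
def CE (E : Subfield F) (A : F[X]) : Prop := ∀ k, A.coeff k ∈ E

/-- The endomorphism of `F[X]` extending `τ` with `X ↦ b (X - u)`. -/
noncomputable def phi (b u : F) : F[X] →+* F[X] := eval₂RingHom (C.comp τ) (C b * (X - C u))

variable {τ β} {E : Subfield F}

lemma phi_C (b u y : F) : phi τ b u (C y) = C (τ y) := by simp [phi]

lemma phi_X (b u : F) : phi τ b u X = C b * (X - C u) := by simp [phi]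

lemma CE.liftsRing_iff {A : F[X]} : CE E A ↔ A ∈ liftsRing E.subtype := by
  change _ ↔ A ∈ lifts E.subtype
  rw [lifts_iff_coeff_lifts]
  simp [CE]

lemma CE.map (A : E[X]) : CE E (A.map E.subtype) := fun k => by simp

lemma CE.C {y : F} (hy : y ∈ E) : CE E (C y) := fun k => by
  rw [coeff_C]; split_ifs
  · exact hy
  · exact E.zero_mem

lemma CE.X : CE E X := fun k => by
  rw [coeff_X]; split_ifs
  · exact E.one_mem
  · exact E.zero_mem

lemma CE.add {A B : F[X]} (hA : CE E A) (hB : CE E B) : CE E (A + B) := fun k => by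
  rw [coeff_add]; exact E.add_mem (hA k) (hB k)

lemma CE.sub {A B : F[X]} (hA : CE E A) (hB : CE E B) : CE E (A - B) := fun k => by
  rw [coeff_sub]; exact E.sub_mem (hA k) (hB k)

lemma CE.mul {A B : F[X]} (hA : CE E A) (hB : CE E B) : CE E (A * B) := by
  rw [CE.liftsRing_iff] at *; exact mul_mem hA hB

lemma CE.pow {A : F[X]} (hA : CE E A) (n : ℕ) : CE E (A ^ n) := by
  rw [CE.liftsRing_iff] at *; exact pow_mem hA n

lemma CE.hasse {A : F[X]} (hA : CE E A) (k : ℕ) : CE E (hasseDeriv k A) := fun j => by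
  rw [hasseDeriv_coeff]; exact E.mul_mem (natCast_mem E _) (hA _)

lemma CE.eval {A : F[X]} (hA : CE E A) {y : F} (hy : y ∈ E) : A.eval y ∈ E := by
  rw [eval_eq_sum_range]
  exact sum_mem fun i _ => E.mul_mem (hA i) (pow_mem hy i)

lemma CE.phi {b u : F} (hE : Rigid τ β E) (hb : b ∈ E) (hu : u ∈ E) {A : F[X]} (hA : CE E A) :
    CE E (phi τ b u A) := by
  rw [_root_.phi, coe_eval₂RingHom, eval₂_eq_sum_range, CE.liftsRing_iff]
  refine sum_mem fun i _ => ?_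
  rw [← CE.liftsRing_iff]
  exact (CE.C (hE.stable _ (hA i))).mul (((CE.C hb).mul (CE.X.sub (CE.C hu))).pow i)

lemma eval_phi {b u s : F} (hs : τ s = b * (s - u)) (A : F[X]) :
    (phi τ b u A).eval s = τ (A.eval s) := by
  have : (evalRingHom s).comp (phi τ b u) = τ.comp (evalRingHom s) := by
    ext y
    · simp [phi_C]
    · simp [phi_X, hs]
  exact RingHom.congr_fun this A

lemma phi_eq_comp (b u : F) (A : F[X]) : phi τ b u A = (A.map τ).comp (C b * (X - C u)) := by
  rw [phi, coe_eval₂RingHom, comp, eval₂_map]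

lemma natDegree_lin {b : F} (hb : b ≠ 0) (u : F) : (C b * (X - C u)).natDegree = 1 := by
  rw [natDegree_C_mul hb, natDegree_X_sub_C]

lemma natDegree_phi {b : F} (hb : b ≠ 0) (u : F) (A : F[X]) :
    (phi τ b u A).natDegree = A.natDegree := by
  rw [phi_eq_comp, natDegree_comp, natDegree_lin hb, mul_one, natDegree_map]

lemma leadingCoeff_phi {b : F} (hb : b ≠ 0) (u : F) (A : F[X]) :
    (phi τ b u A).leadingCoeff = τ A.leadingCoeff * b ^ A.natDegree := by
  rw [phi_eq_comp, leadingCoeff_comp (by rw [natDegree_lin hb]; simp), leadingCoeff_map,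
    natDegree_map, leadingCoeff_mul, leadingCoeff_C, leadingCoeff_X_sub_C, mul_one]

lemma phi_ne_zero {b : F} (hb : b ≠ 0) (u : F) {A : F[X]} (hA : A ≠ 0) : phi τ b u A ≠ 0 := by
  rw [← leadingCoeff_ne_zero, leadingCoeff_phi hb]
  exact mul_ne_zero ((map_ne_zero τ).2 (leadingCoeff_ne_zero.2 hA)) (pow_ne_zero _ hb)

/-- The chain rule for divided derivatives and the affine substitution `phi`. -/
lemma hasse_phi (b u : F) (A : F[X]) (k : ℕ) :
    hasseDeriv k (phi τ b u A) = C (b ^ k) * phi τ b u (hasseDeriv k A) := by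
  have hmul : ∀ A B : F[X], (∀ k, hasseDeriv k (phi τ b u A) =
      C (b ^ k) * phi τ b u (hasseDeriv k A)) → (∀ k, hasseDeriv k (phi τ b u B) =
      C (b ^ k) * phi τ b u (hasseDeriv k B)) → ∀ k, hasseDeriv k (phi τ b u (A * B)) =
      C (b ^ k) * phi τ b u (hasseDeriv k (A * B)) := by
    intro A B hA hB k
    rw [map_mul, hasseDeriv_mul, hasseDeriv_mul, map_sum, Finset.mul_sum]
    refine Finset.sum_congr rfl fun ij hij => ?_
    rw [hA, hB, map_mul, ← Finset.HasAntidiagonal.mem_antidiagonal.1 hij, pow_add, C_mul]; ring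
  have hC : ∀ y k, hasseDeriv k (phi τ b u (C y)) =
      C (b ^ k) * phi τ b u (hasseDeriv k (C y)) := by
    intro y k
    rcases Nat.eq_zero_or_pos k with rfl | hk
    · simp
    · rw [phi_C, hasseDeriv_C _ _ hk, hasseDeriv_C _ _ hk]; simp
  have hX : ∀ k, hasseDeriv k (phi τ b u X) = C (b ^ k) * phi τ b u (hasseDeriv k X) := by
    intro k
    rcases Nat.eq_zero_or_pos k with rfl | hk
    · simp
    · have e : phi τ b u X = C b * X + C (-(b * u)) := by rw [phi_X]; simp; ring
      rw [e, map_add, hasseDeriv_C _ _ hk, add_zero, ← smul_eq_C_mul, map_smul]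
      rcases Nat.eq_or_lt_of_le (show 1 ≤ k from hk) with rfl | hk
      · simp [smul_eq_C_mul]
      · rw [hasseDeriv_X _ hk]; simp
  induction A using Polynomial.induction_on generalizing k with
  | C y => exact hC y k
  | add A B hA hB => rw [map_add, map_add, hA, hB, map_add, map_add, mul_add]
  | monomial j y ih =>
    rw [pow_succ, ← mul_assoc]
    exact hmul _ _ ih hX k

lemma eq_of_natDegree {A : F[X]} {N : ℕ} (hN : 1 ≤ N) (hE : Rigid τ β E) (hβ : β ≠ 0) {u : F}
    (hA : CE E A) (h0 : A ≠ 0) {e : ℤ} (h : phi τ (β ^ N) u A = C (β ^ e) * A) :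
    e = N * A.natDegree := by
  have h1 := congrArg leadingCoeff h
  rw [leadingCoeff_phi (pow_ne_zero _ hβ), leadingCoeff_mul, leadingCoeff_C] at h1
  have h2 : τ A.leadingCoeff = β ^ (e - N * A.natDegree) * A.leadingCoeff := by
    rw [zpow_sub₀ hβ, div_mul_eq_mul_div, ← h1, eq_div_iff (zpow_ne_zero _ hβ), ← pow_mul]
    norm_cast
  rcases hE.triv _ (hA _) _ h2 with h | h
  · exact absurd (leadingCoeff_eq_zero.1 h) h0
  · omega

lemma semi_hasse {A : F[X]} {N : ℕ} (hβ : β ≠ 0) {u : F} {e : ℤ}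
    (h : phi τ (β ^ N) u A = C (β ^ e) * A) (k : ℕ) :
    phi τ (β ^ N) u (hasseDeriv k A) = C (β ^ (e - N * k)) * hasseDeriv k A := by
  have h1 := congrArg (hasseDeriv k) h
  rw [hasse_phi, ← smul_eq_C_mul (β ^ e), map_smul, smul_eq_C_mul] at h1
  have h2 : (C ((β ^ N) ^ k) : F[X]) ≠ 0 := by
    rw [Ne, C_eq_zero]; exact pow_ne_zero _ (pow_ne_zero _ hβ)
  apply mul_left_cancel₀ h2
  rw [h1, ← mul_assoc, ← C_mul]
  congr 2
  rw [zpow_sub₀ hβ, ← pow_mul]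
  have h3 : β ^ (N * k) ≠ 0 := pow_ne_zero _ hβ
  have h4 : β ^ ((N : ℤ) * k) = β ^ (N * k) := by norm_cast
  rw [h4]; field_simp

/-- Data for one step `E ⊆ E(s)` of the tower: `τ s = β ^ N (s - u)`, no `p`-power of `s` lies in
`E`, and the equation `τ y = β ^ m y` has no nonzero solution in `F` for the relevant `m`. -/
structure Step (τ : F →+* F) (β : F) (p : ℕ) (E : Subfield F) (N : ℕ) (s u : F) : Prop where
  rigid : Rigid τ β E
  ne : β ≠ 0
  pos : 1 ≤ N
  mem : u ∈ E
  eq : τ s = β ^ N * (s - u)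
  hom : ∀ i y, τ y = β ^ (N * p ^ i) * y → y = 0
  notMem : ∀ i, s ^ p ^ i ∉ E

variable {p : ℕ} {N : ℕ} {s u : F}

/-- Semi-invariant polynomials over `E` are constant. -/
theorem Step.semi [Fact p.Prime] [CharP F p] (H : Step τ β p E N s u) {A : F[X]} (hA : CE E A)
    {e : ℤ} (h : phi τ (β ^ N) u A = C (β ^ e) * A) : A.natDegree = 0 := by
  by_contra h0
  have hd : 1 ≤ A.natDegree := Nat.one_le_iff_ne_zero.2 h0
  clear h0
  obtain ⟨d, hdA⟩ : ∃ d, A.natDegree = d := ⟨_, rfl⟩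
  induction d using Nat.strong_induction_on generalizing A e with
  | _ d ih =>
  subst hdA
  have hA0 : A ≠ 0 := by rintro rfl; simp at hd
  have he := eq_of_natDegree H.pos H.rigid H.ne hA hA0 h
  -- by minimality of the degree the divided derivatives of order `0 < k < d` vanish
  have hk : ∀ k, 0 < k → k < A.natDegree → hasseDeriv k A = 0 := by
    intro k hk0 hk
    by_contra hne
    have h1 := semi_hasse H.ne h k
    have h2 := eq_of_natDegree H.pos H.rigid H.ne (hA.hasse k) hne h1
    have h3 := natDegree_hasseDeriv_le A k
    by_cases h4 : 1 ≤ (hasseDeriv k A).natDegree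
    · exact ih _ (by omega) (hA.hasse k) h1 h4 rfl
    · have h5 : (hasseDeriv k A).natDegree = 0 := by omega
      rw [h5, he] at h2
      have : (N : ℤ) * ((A.natDegree : ℤ) - k) = 0 := by push_cast at h2; linarith
      rcases mul_eq_zero.1 this with h | h
      · have := H.pos; omega
      · omega
  obtain ⟨i, hi⟩ := eq_qpow_of_choose (F := F) p A.natDegree hd fun k hk0 hkd => by
    have h1 := congrArg (fun P => coeff P (A.natDegree - k)) (hk k hk0 hkd)
    simp only [hasseDeriv_coeff, coeff_zero] at h1
    rw [Nat.sub_add_cancel hkd.le] at h1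
    exact (mul_eq_zero.1 h1).resolve_right (leadingCoeff_ne_zero.2 hA0)
  have hAe : A = C (A.coeff 0) + C A.leadingCoeff * X ^ A.natDegree := by
    ext j
    rw [coeff_add, coeff_C, coeff_C_mul, coeff_X_pow]
    rcases Nat.eq_zero_or_pos j with rfl | hj
    · rw [if_pos rfl, if_neg (by omega)]; simp
    · rw [if_neg (by omega)]
      rcases lt_trichotomy j A.natDegree with h | h | h
      · have h1 := congrArg (fun P => coeff P 0) (hk j hj h)
        simp only [hasseDeriv_coeff, coeff_zero, zero_add, Nat.choose_self, Nat.cast_one,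
          one_mul] at h1
        rw [h1, if_neg (by omega)]; simp
      · rw [if_pos h, h]; simp
      · rw [if_neg (by omega), coeff_eq_zero_of_natDegree_lt h]; simp
  have hy : A.eval s = 0 := by
    apply H.hom i
    rw [← eval_phi H.eq, h, eval_mul, eval_C, he, hi]
    norm_cast
  rw [hAe] at hy
  simp only [eval_add, eval_mul, eval_C, eval_pow, eval_X] at hy
  have hr : A.leadingCoeff ≠ 0 := leadingCoeff_ne_zero.2 hA0
  apply H.notMem i
  rw [← hi]
  have : s ^ A.natDegree = -A.coeff 0 / A.leadingCoeff := by
    field_simp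
    linear_combination hy
  rw [this]
  exact E.div_mem (E.neg_mem (hA _)) (hA _)

/-- `s` is transcendental over `E`, in terms of polynomials over `F`. -/
def TrOver (E : Subfield F) (s : F) : Prop := ∀ A : F[X], CE E A → A.eval s = 0 → A = 0

lemma exists_min_of_not_trOver (h : ¬ TrOver E s) : ∃ A : F[X], CE E A ∧ A.Monic ∧
    A.eval s = 0 ∧ ∀ B : F[X], CE E B → B.eval s = 0 → B.degree < A.degree → B = 0 := by
  classical
  simp only [TrOver, not_forall] at h
  have hex : ∃ d, ∃ A : F[X], CE E A ∧ A.eval s = 0 ∧ A ≠ 0 ∧ A.natDegree = d := by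
    obtain ⟨A, h1, h2, h3⟩ := h
    exact ⟨_, A, h1, h2, h3, rfl⟩
  obtain ⟨A, h1, h2, h3, h4⟩ := Nat.find_spec hex
  have hl : A.leadingCoeff ≠ 0 := leadingCoeff_ne_zero.2 h3
  refine ⟨A * C A.leadingCoeff⁻¹, h1.mul (CE.C (E.inv_mem (h1 _))),
    monic_mul_leadingCoeff_inv h3, by rw [eval_mul, h2, zero_mul], fun B hB1 hB2 hB3 => ?_⟩
  by_contra hB
  rw [degree_mul_leadingCoeff_inv _ h3] at hB3
  refine Nat.find_min hex (m := B.natDegree) ?_ ⟨B, hB1, hB2, hB, rfl⟩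
  rw [← h4]
  exact natDegree_lt_natDegree hB hB3

theorem Step.trOver [Fact p.Prime] [CharP F p] (H : Step τ β p E N s u) : TrOver E s := by
  by_contra hcon
  obtain ⟨A, h1, h2, h3, h4⟩ := exists_min_of_not_trOver hcon
  have hb : β ^ N ≠ 0 := pow_ne_zero _ H.ne
  have hA : phi τ (β ^ N) u A = C (β ^ ((N * A.natDegree : ℕ) : ℤ)) * A := by
    rw [zpow_natCast, pow_mul, ← sub_eq_zero]
    refine h4 _ (CE.sub (CE.phi H.rigid (pow_mem H.rigid.mem _) H.mem h1)
      ((CE.C (pow_mem (pow_mem H.rigid.mem _) _)).mul h1)) ?_ ?_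
    · rw [eval_sub, eval_phi H.eq, eval_mul, h3]; simp
    · have hd : (phi τ (β ^ N) u A).degree = A.degree := by
        rw [degree_eq_natDegree (phi_ne_zero hb u h2.ne_zero), natDegree_phi hb,
          degree_eq_natDegree h2.ne_zero]
      rw [← hd]
      refine degree_sub_lt_left ?_ (phi_ne_zero hb u h2.ne_zero) ?_
      · rw [hd, degree_C_mul (pow_ne_zero _ hb)]
      · rw [leadingCoeff_phi hb, leadingCoeff_mul, leadingCoeff_C, h2.leadingCoeff]; simp
  have h5 := H.semi h1 hA
  rw [h2.natDegree_eq_zero.1 h5] at h3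
  simp at h3

/-- The subfield `E(s)`. -/
noncomputable def adj (E : Subfield F) (s : F) : Subfield F :=
  (IntermediateField.adjoin E {s}).toSubfield

lemma le_adj : E ≤ adj E s := fun y hy =>
  (IntermediateField.adjoin E {s}).algebraMap_mem ⟨y, hy⟩

lemma self_mem_adj : s ∈ adj E s := IntermediateField.mem_adjoin_simple_self E s

lemma mem_adj_iff {c : F} : c ∈ adj E s ↔
    ∃ A B : F[X], CE E A ∧ CE E B ∧ B.Monic ∧ IsCoprime A B ∧ c = A.eval s / B.eval s := by
  classical
  constructor
  · intro h
    obtain ⟨r, t, h⟩ := (IntermediateField.mem_adjoin_simple_iff E c).1 h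
    by_cases hts : aeval s t = 0
    · refine ⟨0, 1, fun k => by simp, fun k => ?_, monic_one, isCoprime_one_right, ?_⟩
      · simpa using CE.C (E := E) E.one_mem k
      · simp [h, hts]
    · have ht : t ≠ 0 := by rintro rfl; simp at hts
      have hg : EuclideanDomain.gcd r t ≠ 0 := fun h =>
        ht (EuclideanDomain.gcd_eq_zero_iff.1 h).2
      obtain ⟨r', hr'⟩ := EuclideanDomain.gcd_dvd_left r t
      obtain ⟨t', ht'⟩ := EuclideanDomain.gcd_dvd_right r t
      have hbez := EuclideanDomain.gcd_eq_gcd_ab r t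
      generalize EuclideanDomain.gcd r t = g at *
      generalize EuclideanDomain.gcdA r t = a at *
      generalize EuclideanDomain.gcdB r t = b at *
      have hco : IsCoprime r' t' := by
        refine ⟨a, b, mul_left_cancel₀ hg ?_⟩
        linear_combination (-a) * hr' - b * ht' - hbez
      have ht0 : t' ≠ 0 := by rintro rfl; exact ht (by simpa using ht')
      have hl : t'.leadingCoeff⁻¹ ≠ 0 := inv_ne_zero (leadingCoeff_ne_zero.2 ht0)
      have hu : IsUnit (C t'.leadingCoeff⁻¹) := isUnit_C.2 hl.isUnit
      refine ⟨(r' * C t'.leadingCoeff⁻¹).map E.subtype, (t' * C t'.leadingCoeff⁻¹).map E.subtype,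
        CE.map _, CE.map _, (monic_mul_leadingCoeff_inv ht0).map _, ?_, ?_⟩
      · exact ((isCoprime_mul_unit_right hu _ _).2 hco).map (mapRingHom E.subtype)
      · have e : ∀ P : E[X], (P.map E.subtype).eval s = aeval s P := fun P => by
          rw [eval_map, aeval_def]; rfl
        have hl' : aeval s (C t'.leadingCoeff⁻¹) ≠ 0 := by
          rw [aeval_C]; exact (_root_.map_ne_zero _).2 hl
        rw [e, e, h, map_mul, map_mul, mul_div_mul_right _ _ hl', hr', ht', map_mul, map_mul,
          mul_div_mul_left]
        intro h
        rw [ht', map_mul, h, zero_mul] at hts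
        exact hts rfl
  · rintro ⟨A, B, hA, hB, -, -, rfl⟩
    have : ∀ P : F[X], CE E P → P.eval s ∈ adj E s := fun P hP =>
      CE.eval (fun k => le_adj (hP k)) self_mem_adj
    exact (adj E s).div_mem (this A hA) (this B hB)

lemma monic_eq_one_of_phi [Fact p.Prime] [CharP F p] (H : Step τ β p E N s u) {B : F[X]}
    (hB : CE E B) (hm : B.Monic) (h : phi τ (β ^ N) u B ∣ B) : B = 1 := by
  have hb : β ^ N ≠ 0 := pow_ne_zero _ H.ne
  obtain ⟨D, hD⟩ := h
  have hD0 : D ≠ 0 := by rintro rfl; rw [mul_zero] at hD; exact hm.ne_zero hD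
  have hd := congrArg natDegree hD
  rw [natDegree_mul (phi_ne_zero hb u hm.ne_zero) hD0, natDegree_phi hb] at hd
  have hDC : D = C (D.coeff 0) := eq_C_of_natDegree_eq_zero (by omega)
  have hl := congrArg leadingCoeff hD
  rw [hDC, leadingCoeff_mul, leadingCoeff_C, leadingCoeff_phi hb, hm.leadingCoeff, map_one,
    one_mul] at hl
  refine hm.natDegree_eq_zero.1 (H.semi hB (e := ((N * B.natDegree : ℕ) : ℤ)) ?_)
  rw [hDC] at hD
  have hl' : (C ((β ^ N) ^ B.natDegree) * C (D.coeff 0) : F[X]) = 1 := by rw [← C_mul, ← hl, C_1]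
  rw [zpow_natCast, pow_mul]
  linear_combination (-phi τ (β ^ N) u B) * hl' - C ((β ^ N) ^ B.natDegree) * hD

/-- A solution in `E(s)` of an equation `τ c = b' (c + w(s))` with polynomial `w` is itself a
polynomial in `s`. -/
theorem Step.polynomial [Fact p.Prime] [CharP F p] (H : Step τ β p E N s u) {c b' : F} {w : F[X]}
    (hc : c ∈ adj E s) (hb' : b' ∈ E) (hb'0 : b' ≠ 0) (hw : CE E w)
    (h : τ c = b' * (c + w.eval s)) :
    ∃ A : F[X], CE E A ∧ c = A.eval s ∧ phi τ (β ^ N) u A = C b' * (A + w) := by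
  have hb : β ^ N ≠ 0 := pow_ne_zero _ H.ne
  have hbE : β ^ N ∈ E := pow_mem H.rigid.mem _
  have htr := H.trOver
  obtain ⟨A, B, hA, hB, hm, hco, rfl⟩ := mem_adj_iff.1 hc
  have hBs : B.eval s ≠ 0 := fun h => hm.ne_zero (htr B hB h)
  have hphiB : (phi τ (β ^ N) u B).eval s ≠ 0 := fun h =>
    phi_ne_zero hb u hm.ne_zero (htr _ (CE.phi H.rigid hbE H.mem hB) h)
  have key : phi τ (β ^ N) u A * B = C b' * (A + w * B) * phi τ (β ^ N) u B := by
    rw [← sub_eq_zero]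
    apply htr
    · exact ((CE.phi H.rigid hbE H.mem hA).mul hB).sub
        (((CE.C hb').mul (hA.add (hw.mul hB))).mul (CE.phi H.rigid hbE H.mem hB))
    · rw [map_div₀, ← eval_phi H.eq, ← eval_phi H.eq] at h
      simp only [eval_sub, eval_mul, eval_add, eval_C]
      field_simp at h
      linear_combination h
  have hco' : IsCoprime (phi τ (β ^ N) u A) (phi τ (β ^ N) u B) := hco.map _
  have hB1 : B = 1 := monic_eq_one_of_phi H hB hm
    (hco'.symm.dvd_of_dvd_mul_left ⟨C b' * (A + w * B), by rw [key, mul_comm]⟩)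
  subst hB1
  refine ⟨A, hA, by simp, ?_⟩
  simpa using key

theorem Step.rigid_adj [Fact p.Prime] [CharP F p] (H : Step τ β p E N s u) :
    Rigid τ β (adj E s) where
  stable y hy := by
    obtain ⟨A, B, hA, hB, -, -, rfl⟩ := mem_adj_iff.1 hy
    have hbE : β ^ N ∈ E := pow_mem H.rigid.mem _
    have : ∀ P : F[X], CE E P → P.eval s ∈ adj E s := fun P hP =>
      CE.eval (fun k => le_adj (hP k)) self_mem_adj
    rw [map_div₀, ← eval_phi H.eq, ← eval_phi H.eq]
    exact (adj E s).div_mem (this _ (CE.phi H.rigid hbE H.mem hA))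
      (this _ (CE.phi H.rigid hbE H.mem hB))
  mem := le_adj H.rigid.mem
  triv y hy m h := by
    obtain ⟨A, hA, rfl, hphi⟩ := H.polynomial (w := 0) hy (zpow_mem H.rigid.mem m)
      (zpow_ne_zero m H.ne) (fun k => by simp) (by simpa using h)
    rw [add_zero] at hphi
    by_cases hA0 : A = 0
    · left; simp [hA0]
    · right
      rw [eq_of_natDegree H.pos H.rigid H.ne hA hA0 hphi, H.semi hA hphi]; simp

/-- An element `π` with `τ π = β ^ Q π`, `Q > 0`, is transcendental over a rigid field. -/
theorem Rigid.trOver (hE : Rigid τ β E) (hβ : β ≠ 0) {Q : ℕ} (hQ : 1 ≤ Q) {π : F} (h0 : π ≠ 0)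
    (h : τ π = β ^ Q * π) : TrOver E π := by
  by_contra hcon
  obtain ⟨A, h1, h2, h3, h4⟩ := exists_min_of_not_trOver hcon
  have hb : β ^ Q ≠ 0 := pow_ne_zero _ hβ
  have h : τ π = β ^ Q * (π - 0) := by rw [h, sub_zero]
  have hA : phi τ (β ^ Q) 0 A = C ((β ^ Q) ^ A.natDegree) * A := by
    rw [← sub_eq_zero]
    refine h4 _ (CE.sub (CE.phi hE (pow_mem hE.mem _) E.zero_mem h1)
      ((CE.C (pow_mem (pow_mem hE.mem _) _)).mul h1)) ?_ ?_
    · rw [eval_sub, eval_phi h, eval_mul, h3]; simp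
    · have hd : (phi τ (β ^ Q) 0 A).degree = A.degree := by
        rw [degree_eq_natDegree (phi_ne_zero hb 0 h2.ne_zero), natDegree_phi hb,
          degree_eq_natDegree h2.ne_zero]
      rw [← hd]
      refine degree_sub_lt_left ?_ (phi_ne_zero hb 0 h2.ne_zero) ?_
      · rw [hd, degree_C_mul (pow_ne_zero _ hb)]
      · rw [leadingCoeff_phi hb, leadingCoeff_mul, leadingCoeff_C, h2.leadingCoeff]; simp
  have hc : τ (A.coeff 0) = β ^ ((Q * A.natDegree : ℕ) : ℤ) * A.coeff 0 := by
    have h5 := congrArg (eval 0) hA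
    rw [eval_phi (by simp), eval_mul, eval_C, ← coeff_zero_eq_eval_zero] at h5
    rw [h5, zpow_natCast, pow_mul]
  rcases hE.triv _ (h1 0) _ hc with h6 | h6
  · -- `X` divides `A`, and the quotient contradicts minimality
    have h7 : A = divX A * X := by
      have := divX_mul_X_add A
      rw [h6, C_0, add_zero] at this
      exact this.symm
    have h8 : divX A ≠ 0 := by intro h; rw [h, zero_mul] at h7; exact h2.ne_zero h7
    refine h8 (h4 _ (fun k => by rw [coeff_divX]; exact h1 _) ?_ ?_)
    · rw [h7, eval_mul, eval_X] at h3
      exact (mul_eq_zero.1 h3).resolve_right h0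
    · exact degree_divX_lt h2.ne_zero
  · have h7 : A.natDegree = 0 := by
      have : Q * A.natDegree = 0 := by exact_mod_cast h6
      rcases Nat.mul_eq_zero.1 this with h | h
      · omega
      · exact h
    rw [h2.natDegree_eq_zero.1 h7] at h3
    simp at h3

/-- The second step of the tower: if `τ s = β ^ N (s - u)` and
`τ s₂ = β ^ (2 N) (s₂ - u s + u ^ 2)`, a `p`-power of `s₂` lies in `E(s)` only if a `p`-power of
`s ^ 2 - 2 s₂` lies in `E`; in characteristic two it never does. -/
theorem Step.second [Fact p.Prime] [CharP F p] (H : Step τ β p E N s u) {s₂ : F}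
    (h₂ : τ s₂ = β ^ (2 * N) * (s₂ - u * s + u ^ 2))
    (h₃ : (2 : F) ≠ 0 → ∀ i, (s ^ 2 - 2 * s₂) ^ p ^ i ∉ E) (i : ℕ) : s₂ ^ p ^ i ∉ adj E s := by
  intro hmem
  have hp : p.Prime := Fact.out
  have he : 0 < p ^ i := pow_pos hp.pos i
  have hN := H.pos
  set e := p ^ i with hedef
  have hsub : ∀ a b : F, (a - b) ^ e = a ^ e - b ^ e := fun a b => sub_pow_char_pow a b i
  have hadd : ∀ a b : F, (a + b) ^ e = a ^ e + b ^ e := fun a b => by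
    rw [hedef]; exact add_pow_char_pow ..
  obtain ⟨A, hA, hAs, hphi⟩ := H.polynomial (w := C (u ^ (2 * e)) - C (u ^ e) * X ^ e)
    (b' := β ^ (2 * N * e)) hmem (pow_mem H.rigid.mem _) (pow_ne_zero _ H.ne)
    ((CE.C (pow_mem H.mem _)).sub ((CE.C (pow_mem H.mem _)).mul (CE.X.pow _))) (by
      rw [map_pow, h₂, mul_pow, hadd, hsub, mul_pow, ← pow_mul, ← pow_mul]
      simp only [eval_sub, eval_mul, eval_C, eval_pow, eval_X]; ring)
  have hXe : phi τ (β ^ N) u (X ^ e) = C (β ^ (N * e)) * (X ^ e - C (u ^ e)) := by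
    rw [map_pow, phi_X, mul_pow, hedef, sub_pow_char_pow, ← C_pow, ← C_pow, ← pow_mul]
  -- no nonzero semi-invariant polynomial of nonzero weight
  have hno : ∀ (P : F[X]) (m : ℤ), CE E P → m ≠ 0 →
      phi τ (β ^ N) u P = C (β ^ m) * P → P = 0 := by
    intro P m hP hm h
    by_contra hP0
    have h1 := eq_of_natDegree H.pos H.rigid H.ne hP hP0 h
    rw [H.semi hP h] at h1
    simp at h1; exact hm h1
  by_cases h2 : (2 : F) = 0
  · -- in characteristic two compare the divided derivative of order `e` with `X ^ e`
    have h4 := congrArg (hasseDeriv e) hphi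
    rw [hasse_phi, ← smul_eq_C_mul (β ^ (2 * N * e)), map_smul, smul_eq_C_mul, map_add, map_sub,
      hasseDeriv_C _ _ he, ← smul_eq_C_mul (u ^ e), map_smul, X_pow_eq_monomial,
      hasseDeriv_monomial, Nat.choose_self, Nat.sub_self, zero_sub] at h4
    have h5 : phi τ (β ^ N) u (hasseDeriv e A) = C (β ^ (N * e)) * (hasseDeriv e A - C (u ^ e)) := by
      have h6 : (C ((β ^ N) ^ e) : F[X]) ≠ 0 := by
        rw [Ne, C_eq_zero]; exact pow_ne_zero _ (pow_ne_zero _ H.ne)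
      apply mul_left_cancel₀ h6
      rw [h4]
      simp only [smul_eq_C_mul, Nat.cast_one, mul_one, monomial_zero_left, C_1, ← pow_mul, ← C_mul,
        ← mul_assoc, ← pow_add]
      rw [show 2 * N * e = N * e + N * e by ring]; ring
    have h6 := hno (hasseDeriv e A - X ^ e) ((N * e : ℕ) : ℤ) ((hA.hasse e).sub (CE.X.pow e))
      (by exact_mod_cast (Nat.mul_pos H.pos he).ne') (by
        rw [map_sub, h5, hXe, zpow_natCast]; ring)
    have h7 := congrArg (fun P => coeff P e) (sub_eq_zero.1 h6)
    simp only [hasseDeriv_coeff, coeff_X_pow_self] at h7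
    rw [← two_mul, hedef, choose_two_mul_qpow, h2, zero_mul] at h7
    exact zero_ne_one h7
  · have h2e : (2 : F) ^ e = 2 := by
      have : ((2 : ℕ) : F) ^ p ^ i = ((2 : ℕ) : F) := by
        have := map_natCast (iterateFrobenius F p i) 2
        rwa [iterateFrobenius_def] at this
      exact_mod_cast this
    obtain ⟨B, hBdef⟩ : ∃ B : F[X], B = X ^ (2 * e) - C 2 * A := ⟨_, rfl⟩
    have hB : CE E B := by
      rw [hBdef]
      exact (CE.X.pow _).sub ((CE.C (by exact_mod_cast natCast_mem E 2)).mul hA)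
    have hBphi : phi τ (β ^ N) u B = C (β ^ (2 * N * e)) * (B - C (u ^ (2 * e))) := by
      simp only [hBdef, map_sub, map_mul, phi_C, hphi, mul_comm 2 e, pow_mul X, map_pow (phi τ _ u)]
      rw [← map_pow (phi τ _ u), hXe]
      simp only [map_ofNat, map_pow]
      ring
    have hk : ∀ k, 0 < k → k ≠ 2 * e → hasseDeriv k B = 0 := by
      intro k hk0 hk
      refine hno _ (((2 * N * e : ℕ) : ℤ) - N * k) (hB.hasse k) ?_ ?_
      · push_cast
        intro h
        have : (N : ℤ) * (2 * e - k) = 0 := by linarith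
        rcases mul_eq_zero.1 this with h | h <;> omega
      · have h4 := congrArg (hasseDeriv k) hBphi
        rw [hasse_phi, ← smul_eq_C_mul (β ^ (2 * N * e)), map_smul, smul_eq_C_mul, map_sub,
          hasseDeriv_C _ _ hk0, sub_zero] at h4
        have h6 : (C ((β ^ N) ^ k) : F[X]) ≠ 0 := by
          rw [Ne, C_eq_zero]; exact pow_ne_zero _ (pow_ne_zero _ H.ne)
        apply mul_left_cancel₀ h6
        rw [h4, ← mul_assoc, ← C_mul]
        congr 2
        rw [zpow_sub₀ H.ne, ← pow_mul, zpow_natCast]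
        have h3 : β ^ (N * k) ≠ 0 := pow_ne_zero _ H.ne
        have h4 : β ^ ((N : ℤ) * k) = β ^ (N * k) := by norm_cast
        rw [h4]; field_simp
    have hB0 : B = C (B.coeff 0) := by
      ext k
      rw [coeff_C]
      split_ifs with hk0
      · rw [hk0]
      · by_cases hke : k = 2 * e
        · have h7 := congrArg (fun P => coeff P e) (hk e he (by omega))
          simp only [hasseDeriv_coeff, coeff_zero] at h7
          rw [← two_mul, hedef, choose_two_mul_qpow, ← hedef, ← hke] at h7
          exact (mul_eq_zero.1 h7).resolve_left h2
        · have h7 := congrArg (fun P => coeff P 0) (hk k (by omega) hke)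
          simpa [hasseDeriv_coeff] using h7
    refine h₃ h2 i ?_
    have h8 : (s ^ 2 - 2 * s₂) ^ p ^ i = B.eval s := by
      rw [← hedef, hsub, mul_pow, h2e, hAs, ← pow_mul]
      simp [hBdef]
    rw [h8, hB0, eval_C]
    exact hB 0

end Difference

/-! ### The difference field of fractions of power series -/

/-- Two bivariate polynomials can be replaced by proportional ones that generate, over `R`, an
ideal of `R[X]` containing a nonzero constant. -/
lemma exists_coprime_rep {R : Type*} [CommRing R] [IsDomain R] (P Q : Polynomial R) (hQ : Q ≠ 0) :
    ∃ P' Q' a b : Polynomial R, ∃ D : R, D ≠ 0 ∧ Q' ≠ 0 ∧ P * Q' = P' * Q ∧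
      a * P' + b * Q' = Polynomial.C D := by
  classical
  set k := FractionRing R
  set μ : Polynomial R →+* Polynomial k := Polynomial.mapRingHom (algebraMap R k) with hμ
  have hμi : Function.Injective μ := Polynomial.map_injective _ (IsFractionRing.injective R k)
  have clear : ∀ p : Polynomial k, ∃ d : R, d ≠ 0 ∧ ∃ p' : Polynomial R,
      μ p' = μ (Polynomial.C d) * p := by
    intro p
    obtain ⟨b, hb, h⟩ := IsLocalization.integerNormalization_spec (nonZeroDivisors R) p
    refine ⟨b, nonZeroDivisors.ne_zero hb, _, h.trans ?_⟩
    rw [hμ, Polynomial.coe_mapRingHom, Polynomial.map_C, Algebra.smul_def, Polynomial.algebraMap_eq.symm]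
    simp [Polynomial.algebraMap_apply]
  have hQ' : μ Q ≠ 0 := (map_ne_zero_iff _ hμi).2 hQ
  set g := EuclideanDomain.gcd (μ P) (μ Q) with hg
  have hg0 : g ≠ 0 := fun h => hQ' (EuclideanDomain.gcd_eq_zero_iff.1 h).2
  obtain ⟨P1, hP1⟩ := EuclideanDomain.gcd_dvd_left (μ P) (μ Q)
  obtain ⟨Q1, hQ1⟩ := EuclideanDomain.gcd_dvd_right (μ P) (μ Q)
  rw [← hg] at hP1 hQ1
  have hbez := EuclideanDomain.gcd_eq_gcd_ab (μ P) (μ Q)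
  rw [← hg] at hbez
  set u := EuclideanDomain.gcdA (μ P) (μ Q)
  set v := EuclideanDomain.gcdB (μ P) (μ Q)
  have h1 : u * P1 + v * Q1 = 1 := by
    apply mul_left_cancel₀ hg0
    linear_combination -hbez - u * hP1 - v * hQ1
  obtain ⟨d1, hd1, P2, hP2⟩ := clear P1
  obtain ⟨d2, hd2, Q2, hQ2⟩ := clear Q1
  obtain ⟨d3, hd3, u2, hu2⟩ := clear u
  obtain ⟨d4, hd4, v2, hv2⟩ := clear v
  have hQ20 : Q2 ≠ 0 := by
    rintro rfl
    rw [map_zero] at hQ2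
    rcases mul_eq_zero.1 hQ2.symm with h | h
    · exact hd2 (by simpa using (map_eq_zero_iff _ hμi).1 h)
    · rw [h, mul_zero] at hQ1; exact hQ' hQ1
  refine ⟨Polynomial.C d2 * P2, Polynomial.C d1 * Q2, Polynomial.C d4 * u2, Polynomial.C d3 * v2,
    d1 * d2 * d3 * d4, by simp [*], mul_ne_zero (by simpa using hd1) hQ20, hμi ?_, hμi ?_⟩
  · simp only [map_mul, hP2, hQ2, hP1, hQ1]; ring
  · simp only [map_mul, map_add, hP2, hQ2, hu2, hv2]
    linear_combination (μ (Polynomial.C d1) * μ (Polynomial.C d2) * μ (Polynomial.C d3) *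
      μ (Polynomial.C d4)) * h1

section DiffField

open WithZero PowerSeries

variable {K : Type*} [Field K] [CVal K]
variable (𝔽 : Type*) [Field 𝔽] [Fintype 𝔽] [Algebra 𝔽 K]

/-- The embedding of power series into their field of fractions. -/
noncomputable abbrev io : K⟦X⟧ →+* FractionRing K⟦X⟧ := algebraMap _ _

lemma io_inj : Function.Injective (io (K := K)) := IsFractionRing.injective _ _

/-- The twist on the field of fractions of `K⟦X⟧`. -/
noncomputable def tau : FractionRing K⟦X⟧ →+* FractionRing K⟦X⟧ :=
  IsFractionRing.map (tw_injective 𝔽 (K := K))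

lemma tau_io (f : K⟦X⟧) : tau 𝔽 (io f) = io (tw 𝔽 f) := by
  simp [tau, IsFractionRing.map]

/-- The polynomial `t - x ^ q`. -/
noncomputable def bpol : Polynomial (Polynomial 𝔽) :=
  Polynomial.C Polynomial.X - Polynomial.X ^ Fintype.card 𝔽

variable {𝔽} {x : K}

lemma emb_bpol : emb x (bpol 𝔽) = X - C (x ^ Fintype.card 𝔽) := by
  simp [emb, bpol]

/-- The image of `𝔽(t)(x)` in the field of fractions of power series. -/
noncomputable def ratField (𝔽 : Type*) [Field 𝔽] [Fintype 𝔽] [Algebra 𝔽 K] {x : K}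
    (hx : CVal.v x = exp 1) : Subfield (FractionRing K⟦X⟧) :=
  (IsFractionRing.lift (K := FractionRing (Polynomial (Polynomial 𝔽)))
    (g := (io (K := K)).comp (emb (𝔽 := 𝔽) x)) (io_inj.comp (emb_inj hx))).fieldRange

lemma mem_ratField (hx : CVal.v x = exp 1) {y : FractionRing K⟦X⟧} :
    y ∈ ratField 𝔽 hx ↔ ∃ P Q : Polynomial (Polynomial 𝔽), Q ≠ 0 ∧
      y = io (emb x P) / io (emb x Q) := by
  constructor
  · rintro ⟨z, rfl⟩
    obtain ⟨P, Q, hQ, rfl⟩ := IsFractionRing.div_surjective (A := Polynomial (Polynomial 𝔽)) z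
    refine ⟨P, Q, nonZeroDivisors.ne_zero hQ, ?_⟩
    rw [map_div₀, IsFractionRing.lift_algebraMap, IsFractionRing.lift_algebraMap]; rfl
  · rintro ⟨P, Q, hQ, rfl⟩
    refine ⟨algebraMap _ _ P / algebraMap _ _ Q, ?_⟩
    rw [map_div₀, IsFractionRing.lift_algebraMap, IsFractionRing.lift_algebraMap]; rfl

lemma emb_mem_ratField (hx : CVal.v x = exp 1) (P : Polynomial (Polynomial 𝔽)) :
    io (emb x P) ∈ ratField 𝔽 hx :=
  (mem_ratField hx).2 ⟨P, 1, one_ne_zero, by simp⟩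

lemma ioemb_ne (hx : CVal.v x = exp 1) {Q : Polynomial (Polynomial 𝔽)} (hQ : Q ≠ 0) :
    io (emb x Q) ≠ 0 :=
  (map_ne_zero_iff _ io_inj).2 ((map_ne_zero_iff _ (emb_inj hx)).2 hQ)

lemma tau_ioemb (P : Polynomial (Polynomial 𝔽)) :
    tau 𝔽 (io (emb x P)) = io (emb x (sg 1 P)) := by
  rw [tau_io, emb_sg, twk_succ, twk_zero]

/-- A solution `κ ∈ 𝔽(t)(x)` of `τ κ = β ^ M (κ - W)`, with `W` polynomial, is a polynomial in
`x` up to a denominator in `𝔽[t]`. -/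
lemma exists_den (hx : CVal.v x = exp 1) {κ : FractionRing K⟦X⟧} (hκ : κ ∈ ratField 𝔽 hx) {M : ℕ}
    {W : Polynomial (Polynomial 𝔽)}
    (h : tau 𝔽 κ = io (emb x (bpol 𝔽)) ^ M * (κ - io (emb x W))) :
    ∃ (S : Polynomial (Polynomial 𝔽)) (D : Polynomial 𝔽), D ≠ 0 ∧
      κ * io (emb x (Polynomial.C D)) = io (emb x S) := by
  obtain ⟨P0, Q0, hQ0, rfl⟩ := (mem_ratField hx).1 hκ
  obtain ⟨P, Q, a, b, D, hD, hQ, hPQ, hbez⟩ := exists_coprime_rep P0 Q0 hQ0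
  have e0 : io (emb x P0) / io (emb x Q0) = io (emb x P) / io (emb x Q) := by
    rw [div_eq_div_iff (ioemb_ne hx hQ0) (ioemb_ne hx hQ), ← map_mul, ← map_mul, ← map_mul,
      ← map_mul, hPQ]
  rw [e0] at h ⊢
  have key : sg 1 P * Q = bpol 𝔽 ^ M * (P - W * Q) * sg 1 Q := by
    apply emb_inj hx
    apply io_inj
    rw [map_div₀, tau_ioemb, tau_ioemb] at h
    have h1 := ioemb_ne hx hQ
    have h2 := ioemb_ne hx (sg_ne_zero (k := 1) hQ)
    simp only [map_mul, map_sub, map_pow]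
    field_simp at h
    linear_combination h
  have hdvd : sg 1 Q ∣ Polynomial.C D * Q := by
    have : Polynomial.C D = sg 1 a * sg 1 P + sg 1 b * sg 1 Q := by
      rw [← map_mul, ← map_mul, ← map_add, hbez]; simp [sg]
    rw [this]
    exact ⟨sg 1 a * (bpol 𝔽 ^ M * (P - W * Q)) + sg 1 b * Q, by linear_combination sg 1 a * key⟩
  have hdeg := Polynomial.natDegree_le_of_dvd hdvd (mul_ne_zero (by simpa using hD) hQ)
  rw [natDegree_sg, Polynomial.natDegree_C_mul hD, pow_one] at hdeg
  have hdQ : Q.natDegree = 0 := by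
    have := two_le_q 𝔽
    nlinarith
  rw [Polynomial.natDegree_eq_zero] at hdQ
  obtain ⟨D', rfl⟩ := hdQ
  exact ⟨P, D', by simpa using hQ, div_mul_cancel₀ _ (ioemb_ne hx hQ)⟩

lemma evp_sg (a b : K) (P : Polynomial (Polynomial 𝔽)) (k : ℕ) :
    evp a b (sg k P) = evp a (b ^ Fintype.card 𝔽 ^ k) P := by
  have : (evp a b).comp (sg (𝔽 := 𝔽) k) = evp a (b ^ Fintype.card 𝔽 ^ k) := by
    apply Polynomial.ringHom_ext
    · intro p; simp [sg, evp]
    · simp [sg, evp]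
  exact congrArg (fun f => f P) this

lemma evp_pow_q (a b : K) (P : Polynomial (Polynomial 𝔽)) :
    evp (a ^ Fintype.card 𝔽) (b ^ Fintype.card 𝔽) P = evp a b P ^ Fintype.card 𝔽 := by
  have : evp (a ^ Fintype.card 𝔽) (b ^ Fintype.card 𝔽) = (frob 𝔽 K).comp (evp (𝔽 := 𝔽) a b) := by
    apply Polynomial.ringHom_ext
    · intro p; simp [evp, frob_apply]
      have := aeval_pow_qpow p a 1
      simpa using this.symm
    · simp [evp, frob_apply]
  exact congrArg (fun f => f P) this

lemma eq_zero_of_evp (hx : CVal.v x = exp 1) {P : Polynomial (Polynomial 𝔽)}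
    (h : ∀ k, evp x (x ^ Fintype.card 𝔽 ^ k) P = 0) : P = 0 := by
  have h1 : P.map (Polynomial.aeval x : Polynomial 𝔽 →ₐ[𝔽] K).toRingHom = 0 := by
    apply Polynomial.eq_zero_of_infinite_isRoot
    refine Set.infinite_of_injective_forall_mem (fun i j h => xq_inj (𝔽 := 𝔽) hx h) fun k => ?_
    simp only [Set.mem_ofPred_eq, Polynomial.IsRoot, Polynomial.eval_map]
    exact h k
  rw [Polynomial.map_eq_zero_iff] at h1
  · exact h1
  · exact (injective_iff_map_eq_zero _).2 fun p hp => aeval_inj hx hp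

lemma evp_bpol (a b : K) : evp a b (bpol 𝔽) = a - b ^ Fintype.card 𝔽 := by
  simp [evp, bpol]

lemma bpol_ne_zero (hx : CVal.v x = exp 1) : bpol 𝔽 ≠ 0 := by
  intro h
  have := emb_bpol (𝔽 := 𝔽) (x := x)
  rw [h, map_zero] at this
  have := congrArg (coeff 1) this
  simp [coeff_C, ← map_pow, -map_pow] at this

/-- The field `𝔽(t)(x)` is rigid with respect to `β = t - x ^ q`. -/
theorem rigid_ratField (hx : CVal.v x = exp 1) :
    Rigid (tau 𝔽) (io (emb x (bpol 𝔽))) (ratField 𝔽 hx) where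
  stable y hy := by
    obtain ⟨P, Q, hQ, rfl⟩ := (mem_ratField hx).1 hy
    rw [map_div₀, tau_ioemb, tau_ioemb]
    exact Subfield.div_mem _ (emb_mem_ratField hx _) (emb_mem_ratField hx _)
  mem := emb_mem_ratField hx _
  triv := by
    have hβ : io (emb x (bpol 𝔽)) ≠ 0 := ioemb_ne hx (bpol_ne_zero hx)
    have main : ∀ y ∈ ratField 𝔽 hx, ∀ m : ℕ, tau 𝔽 y = io (emb x (bpol 𝔽)) ^ (m + 1) * y →
        y = 0 := by
      intro y hy m h
      obtain ⟨S, D, hD, e⟩ := exists_den hx hy (M := m + 1) (W := 0) (by simpa using h)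
      have hC : io (emb x (Polynomial.C D)) ≠ 0 := ioemb_ne hx (by simpa using hD)
      have e1 : sg 1 S = bpol 𝔽 ^ (m + 1) * S := by
        apply emb_inj hx
        apply io_inj
        rw [← tau_ioemb, ← e, map_mul, h, tau_ioemb, map_mul, map_mul, map_pow, map_pow, ← e]
        have : sg 1 (Polynomial.C D) = Polynomial.C D := by simp [sg]
        rw [this]; ring
      have e2 : ∀ a b : K, evp a (b ^ Fintype.card 𝔽) S =
          (a - b ^ Fintype.card 𝔽) ^ (m + 1) * evp a b S := by
        intro a b
        have := congrArg (evp a b) e1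
        rwa [evp_sg, pow_one, map_mul, map_pow, evp_bpol] at this
      have hS : S = 0 := by
        apply eq_zero_of_evp hx
        intro k
        induction k with
        | zero =>
          have := e2 (x ^ Fintype.card 𝔽) x
          rw [sub_self, zero_pow (Nat.succ_ne_zero m), zero_mul, evp_pow_q] at this
          simpa using pow_eq_zero_iff (Fintype.card_ne_zero) |>.1 this
        | succ k ih => rw [pow_succ, pow_mul, e2, ih, mul_zero]
      rw [hS, map_zero, map_zero] at e
      exact (mul_eq_zero.1 e).resolve_right hC
    intro y hy m h
    rcases lt_trichotomy m 0 with hm | hm | hm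
    · left
      obtain ⟨k, hk⟩ : ∃ k : ℕ, m = -((k + 1 : ℕ) : ℤ) := ⟨(-m - 1).toNat, by omega⟩
      by_contra hy0
      apply inv_ne_zero hy0
      refine main _ (Subfield.inv_mem _ hy) k ?_
      rw [map_inv₀, h, hk, zpow_neg, zpow_natCast, mul_inv, inv_inv]
    · exact Or.inr hm
    · left
      obtain ⟨k, hk⟩ : ∃ k : ℕ, m = ((k + 1 : ℕ) : ℤ) := ⟨(m - 1).toNat, by omega⟩
      refine main _ hy k ?_
      rw [h, hk, zpow_natCast]

end DiffField

/-! ### Algebraic independence of the functions -/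

section FunctionIndependence

open WithZero PowerSeries

variable {K : Type*} [Field K] [CVal K]
variable {𝔽 : Type*} [Field 𝔽] [Fintype 𝔽] [Algebra 𝔽 K] {x : K} {ω : K⟦X⟧}

lemma IsOm.beta (hx : CVal.v x = exp 1) (hω : IsOm 𝔽 x ω) :
    emb x (bpol 𝔽) * tw 𝔽 ω = C (-(x ^ Fintype.card 𝔽)) * ω := by
  have hx0 : x ^ Fintype.card 𝔽 ≠ 0 := pow_ne_zero _ (x_ne_zero hx)
  have h1 : C (x ^ Fintype.card 𝔽) * C (x ^ Fintype.card 𝔽)⁻¹ = (1 : K⟦X⟧) := by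
    rw [← map_mul, mul_inv_cancel₀ hx0, map_one]
  conv_rhs => rw [hω.eq]
  rw [emb_bpol, map_neg]
  linear_combination (-X * tw 𝔽 ω) * h1

lemma IsOm.ne_zero (hω : IsOm 𝔽 x ω) : ω ≠ 0 := by
  rintro rfl
  simpa using hω.c0

/-- Comparison of lowest coefficients: a twisted-invariant fraction has a multiplier that is a
`(q - 1)`-st power. -/
lemma exists_root_of_tw {A B : K⟦X⟧} (hA : A ≠ 0) (hB : B ≠ 0) {c : K}
    (h : tw 𝔽 A * B = C c * A * tw 𝔽 B) : ∃ r : K, r ≠ 0 ∧ r ^ (Fintype.card 𝔽 - 1) = c := by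
  have hq := two_le_q 𝔽
  have ha := constantCoeff_divXPowOrder_eq_zero_iff.not.2 hA
  have hb := constantCoeff_divXPowOrder_eq_zero_iff.not.2 hB
  have eA := X_pow_order_mul_divXPowOrder (f := A)
  have eB := X_pow_order_mul_divXPowOrder (f := B)
  set a := divXPowOrder A
  set b := divXPowOrder B
  rw [← eA, ← eB, map_mul, map_mul, map_pow, map_pow, tw_X] at h
  have h2 : tw 𝔽 a * b = C c * a * tw 𝔽 b := by
    apply mul_left_cancel₀ (mul_ne_zero (pow_ne_zero A.order.toNat X_ne_zero)
      (pow_ne_zero B.order.toNat (X_ne_zero (R := K))))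
    linear_combination h
  have h3 := congrArg constantCoeff h2
  have hc : ∀ g : K⟦X⟧, constantCoeff (tw 𝔽 g) = constantCoeff g ^ Fintype.card 𝔽 := fun g =>
    by rw [← coeff_zero_eq_constantCoeff_apply, coeff_tw, coeff_zero_eq_constantCoeff_apply]
  simp only [map_mul, constantCoeff_C, hc] at h3
  set u := constantCoeff a
  set w := constantCoeff b
  have eq1 : ∀ y : K, y ^ Fintype.card 𝔽 = y ^ (Fintype.card 𝔽 - 1) * y := fun y => by
    rw [← pow_succ]; congr 1; omega
  refine ⟨u / w, div_ne_zero ha hb, ?_⟩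
  rw [eq1, eq1] at h3
  rw [div_pow, div_eq_iff (pow_ne_zero _ hb)]
  apply mul_right_cancel₀ (mul_ne_zero ha hb)
  linear_combination h3

/-- The equation `τ y = β ^ m y` has no nonzero solution unless `q - 1 ∣ m`. -/
lemma hom_zero (hx : CVal.v x = exp 1) (hω : IsOm 𝔽 x ω) {m : ℕ}
    (hm : ¬ (Fintype.card 𝔽 - 1) ∣ m) {y : FractionRing K⟦X⟧}
    (h : tau 𝔽 y = io (emb x (bpol 𝔽)) ^ m * y) : y = 0 := by
  by_contra hy
  obtain ⟨a, b, hb, rfl⟩ := IsFractionRing.div_surjective (A := K⟦X⟧) y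
  have hb0 : b ≠ 0 := nonZeroDivisors.ne_zero hb
  have ha0 : a ≠ 0 := by rintro rfl; simp at hy
  obtain ⟨r, hr0, hr⟩ := exists_root_of_tw (𝔽 := 𝔽) (A := a * ω ^ m) (B := b)
    (c := (-(x ^ Fintype.card 𝔽)) ^ m) (mul_ne_zero ha0 (pow_ne_zero _ hω.ne_zero)) hb0 (by
      rw [map_div₀, tau_io, tau_io] at h
      have e1 : io b ≠ 0 := (map_ne_zero_iff _ io_inj).2 hb0
      have e2 : io (tw 𝔽 b) ≠ 0 :=
        (map_ne_zero_iff _ io_inj).2 ((map_ne_zero_iff _ (tw_injective 𝔽)).2 hb0)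
      have e3 : tw 𝔽 a * b = emb x (bpol 𝔽) ^ m * a * tw 𝔽 b := by
        apply io_inj
        simp only [map_mul, map_pow]
        rw [div_eq_iff e2] at h
        change io (tw 𝔽 a) * io b = _
        rw [h]
        field_simp
      have e4 := congrArg (fun f => f ^ m) (hω.beta hx)
      simp only [mul_pow] at e4
      rw [map_mul, map_pow, map_pow]
      linear_combination tw 𝔽 ω ^ m * e3 + a * tw 𝔽 b * e4)
  obtain ⟨j, hj⟩ := exists_v_eq hr0
  have h1 := v_pow_eq hj (Fintype.card 𝔽 - 1)
  have h2 : CVal.v ((-(x ^ Fintype.card 𝔽)) ^ m) = WithZero.exp ((m : ℤ) * ((Fintype.card 𝔽 : ℤ) * 1)) := by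
    apply v_pow_eq
    rw [Valuation.map_neg]
    exact v_pow_eq hx _
  rw [hr, h2, WithZero.exp_inj] at h1
  have hq := two_le_q 𝔽
  apply hm
  have h3 : ((Fintype.card 𝔽 - 1 : ℕ) : ℤ) ∣ (m : ℤ) := by
    refine ⟨j - m, ?_⟩
    have : ((Fintype.card 𝔽 - 1 : ℕ) : ℤ) = (Fintype.card 𝔽 : ℤ) - 1 := by
      push_cast [Nat.cast_sub (show 1 ≤ Fintype.card 𝔽 by omega)]; ring
    rw [this] at h1 ⊢
    linarith
  exact_mod_cast h3

variable (p : ℕ) [Fact p.Prime] [CharP K p]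

/-- A function `f` with `τ f = (-x ^ q) ^ N (f - W ω ^ N)` and nonzero value at `t = x` has the
property that no `p`-power of `f / ω ^ N` is rational: otherwise `f` would vanish at
`t = x ^ q`, where `ω` does, and then also at `t = x`. -/
lemma notMem_ratField (hx : CVal.v x = exp 1) (hω : IsOm 𝔽 x ω) {N : ℕ} (hN : 1 ≤ N) {f : K⟦X⟧}
    (hf : Conv f (Fintype.card 𝔽 + 1)) {W : Polynomial (Polynomial 𝔽)}
    (h : tw 𝔽 f = C ((-(x ^ Fintype.card 𝔽)) ^ N) * (f - emb x W * ω ^ N))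
    (hne : ev x f ≠ 0) {s : FractionRing K⟦X⟧} (hs : s * io ω ^ N = io f) (i : ℕ) :
    s ^ p ^ i ∉ ratField 𝔽 hx := by
  intro hmem
  have : CharP (FractionRing K⟦X⟧) p := charP_of_injective_ringHom
    (f := (io (K := K)).comp C) (io_inj.comp C_injective) p
  have hq := two_le_q 𝔽
  have hpi : 0 < p ^ i := pow_pos (Fact.out : p.Prime).pos i
  have hω0 : io ω ≠ 0 := (map_ne_zero_iff _ io_inj).2 hω.ne_zero
  set β := io (emb x (bpol 𝔽)) with hβ
  have hβ0 : β ≠ 0 := ioemb_ne hx (bpol_ne_zero hx)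
  have eω : β * tau 𝔽 (io ω) = io (C (-(x ^ Fintype.card 𝔽))) * io ω := by
    rw [tau_io, hβ, ← map_mul, hω.beta hx, map_mul]
  have hτω : tau 𝔽 (io ω) ≠ 0 := (map_ne_zero_iff _ (tau (K := K) 𝔽).injective).2 hω0
  have eωN := congrArg (fun g => g ^ N) eω
  simp only [mul_pow] at eωN
  have es : tau 𝔽 s = β ^ N * (s - io (emb x W)) := by
    apply mul_right_cancel₀ (pow_ne_zero N hτω)
    rw [← map_pow, ← map_mul, hs, tau_io, h, map_mul, map_sub, ← hs, map_pow C, map_pow io,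
      map_mul, map_pow io, map_pow]
    linear_combination -(s - io (emb x W)) * eωN
  have es' : tau 𝔽 (s ^ p ^ i) = β ^ (N * p ^ i) * (s ^ p ^ i - io (emb x (W ^ p ^ i))) := by
    rw [map_pow, es, mul_pow, sub_pow_char_pow, ← pow_mul, map_pow, map_pow]
  obtain ⟨S, D, hD, e⟩ := exists_den hx hmem es'
  have e1 : f ^ p ^ i * emb x (Polynomial.C D) = emb x S * ω ^ (N * p ^ i) := by
    apply io_inj
    rw [map_mul, map_mul, map_pow, map_pow, ← e, ← hs]; ring
  -- evaluate at `t = x ^ q`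
  set y := x ^ Fintype.card 𝔽 with hy
  have hya : DLe y ((Fintype.card 𝔽 + 1 : ℤ) - 1) := by
    have := dle_of_v_eq (v_pow_eq hx (Fintype.card 𝔽))
    exact this.mono (by simp)
  have hy0 : y ≠ 0 := pow_ne_zero _ (x_ne_zero hx)
  have hxa : DLe x ((2 : ℤ) - 1) := dle_x hx
  have hf2 : Conv f 2 := hf.mono (by omega)
  have ctw : Conv (tw 𝔽 ω) (Fintype.card 𝔽 + 1) := by
    refine (hω.conv.tw 𝔽).mono ?_
    nlinarith
  have z1 : ev y ω = 0 := by
    rw [hω.eq, ev_mul hya ((Conv.one _).sub ((Conv.C _ _).mul (Conv.X _))) ctw,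
      ev_sub hya (Conv.one _) ((Conv.C _ _).mul (Conv.X _)), ev_one _ hya,
      ev_mul hya (Conv.C _ _) (Conv.X _), ev_C _ hya, ev_X _ hya, inv_mul_cancel₀ hy0, sub_self,
      zero_mul]
  have z2 : ev y f = 0 := by
    have := congrArg (ev y) e1
    rw [ev_mul hya (hf.pow _) (conv_emb hx _ _), ev_mul hya (conv_emb hx _ _) (hω.conv.pow _),
      ev_pow hya hf, ev_pow hya hω.conv, z1, zero_pow (by positivity), mul_zero,
      ev_emb hx hya] at this
    rcases mul_eq_zero.1 this with h0 | h0
    · exact pow_eq_zero_iff hpi.ne' |>.1 h0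
    · exfalso
      rw [evp_C] at h0
      have h1 := aeval_pow_qpow D x 1
      rw [pow_one, ← hy, h0] at h1
      exact hD (aeval_inj hx (pow_eq_zero_iff (Fintype.card_ne_zero) |>.1 h1))
  have z3 := ev_tw (𝔽 := 𝔽) hxa hf2
  rw [← hy, h, ev_mul hya (Conv.C _ _) (hf.sub ((conv_emb hx _ _).mul (hω.conv.pow _))),
    ev_sub hya hf ((conv_emb hx _ _).mul (hω.conv.pow _)),
    ev_mul hya (conv_emb hx _ _) (hω.conv.pow _), ev_pow hya hω.conv, z1, z2,
    zero_pow (by omega), mul_zero, sub_zero, mul_zero] at z3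
  exact hne (pow_eq_zero_iff (Fintype.card_ne_zero) |>.1 z3.symm)

end FunctionIndependence

/-! ### Transcendence degree bookkeeping -/

section TranscendenceDegree

open Set

/-- A finite family that generates a field containing an algebraically independent family of the
same size is algebraically independent. -/
lemma algIndep_of_mem_adjoin {L F ι : Type*} [Field L] [Field F] [Algebra L F] [Finite ι]
    {v w : ι → F} (hv : AlgebraicIndependent L v)
    (h : ∀ i, v i ∈ IntermediateField.adjoin L (range w)) : AlgebraicIndependent L w := by
  set M := IntermediateField.adjoin L (range w) with hM
  have hw : ∀ i, w i ∈ M := fun i => IntermediateField.subset_adjoin L _ ⟨i, rfl⟩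
  let v' : ι → M := fun i => ⟨v i, h i⟩
  let w' : ι → M := fun i => ⟨w i, hw i⟩
  have hv' : AlgebraicIndependent L v' := AlgebraicIndependent.of_comp M.val hv
  have halg : Algebra.IsAlgebraic (Algebra.adjoin L (range w')) M := by
    refine ⟨fun m => ?_⟩
    have himg : (Algebra.adjoin L (range w')).map M.val = Algebra.adjoin L (range w) := by
      rw [AlgHom.map_adjoin, ← range_comp]; rfl
    obtain ⟨a, ha, b, hb, e⟩ := IntermediateField.mem_adjoin_iff_div.1 m.2
    rw [← himg] at ha hb
    obtain ⟨a', ha', rfl⟩ := ha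
    obtain ⟨b', hb', rfl⟩ := hb
    have e' : m = algebraMap _ M (⟨a', ha'⟩ : Algebra.adjoin L (range w')) *
        (algebraMap _ M (⟨b', hb'⟩ : Algebra.adjoin L (range w')))⁻¹ := by
      apply Subtype.ext
      rw [e, div_eq_mul_inv]; rfl
    rw [e']
    exact (isAlgebraic_algebraMap _).mul (isAlgebraic_algebraMap _).inv
  have := Algebra.IsAlgebraic.isTranscendenceBasis_of_lift_le_trdeg_of_finite L w' (hv'.lift_cardinalMk_le_trdeg)
  exact this.1.map' (f := M.val) M.val.injective

lemma algIndep_three {F : Type*} [Field F] {E : Subfield F} {π s₁ s₂ : F} (h1 : TrOver E s₁)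
    (h2 : TrOver (adj E s₁) s₂) (h3 : TrOver (adj (adj E s₁) s₂) π) :
    AlgebraicIndependent E ![π, s₁, s₂] := by
  have tr : ∀ (E' : Subfield F) (hE : E ≤ E') (S : Set F) (hS : S ⊆ E') (s : F), TrOver E' s →
      Transcendental (Algebra.adjoin E S) s := by
    intro E' hE S hS s hs ⟨A, hA, hA0⟩
    have hle : ∀ y ∈ Algebra.adjoin E S, y ∈ E' := by
      intro y hy
      induction hy using Algebra.adjoin_induction with
      | mem y hy => exact hS hy
      | algebraMap r => exact hE r.2
      | add a b _ _ ha hb => exact E'.add_mem ha hb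
      | mul a b _ _ ha hb => exact E'.mul_mem ha hb
    have := hs (A.map (algebraMap _ F)) (fun k => by
      rw [Polynomial.coeff_map]; exact hle _ (A.coeff k).2) (by
      rw [Polynomial.eval_map_algebraMap]; exact hA0)
    rw [Polynomial.map_eq_zero_iff Subtype.val_injective] at this
    exact hA this
  rw [← AlgebraicIndepOn.univ]
  have e : (univ : Set (Fin 3)) = insert 0 (insert 2 (insert 1 ∅)) := by
    ext i; fin_cases i <;> simp
  rw [e]
  refine AlgebraicIndepOn.insert (AlgebraicIndepOn.insert (AlgebraicIndepOn.insert
    algebraicIndependent_empty_type ?_) ?_) ?_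
  · exact tr E le_rfl _ (by simp) _ h1
  · exact tr (adj E s₁) le_adj _ (by simpa using self_mem_adj) _ h2
  · refine tr _ (le_adj.trans le_adj) _ ?_ _ h3
    have : s₁ ∈ adj (adj E s₁) s₂ := le_adj self_mem_adj
    have : s₂ ∈ adj (adj E s₁) s₂ := self_mem_adj
    simp [Set.image_insert_eq, insert_subset_iff, *]

end TranscendenceDegree

/-! ### Independence of the twisted functions -/

section TwistedFunctions

open WithZero PowerSeries

variable {K : Type*} [Field K] [CVal K]
variable {𝔽 : Type*} [Field 𝔽] [Fintype 𝔽] [Algebra 𝔽 K] {x : K} {ω : K⟦X⟧}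

/-- The functional equations satisfied by the functions deforming `ζ(n)` and `ζ(n,n)`, together
with their convergence at `t = x` and `t = x ^ q` and the nonvanishing of two values at `t = x`. -/
structure IsPair (𝔽 : Type*) [Field 𝔽] [Fintype 𝔽] [Algebra 𝔽 K] (x : K) (ω : K⟦X⟧) (n : ℕ)
    (V : Polynomial (Polynomial 𝔽)) (f₁ f₂ : K⟦X⟧) : Prop where
  om : IsOm 𝔽 x ω
  pos : 1 ≤ n
  conv₁ : Conv f₁ (Fintype.card 𝔽 + 1)
  conv₂ : Conv f₂ (Fintype.card 𝔽 + 1)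
  eq₁ : tw 𝔽 f₁ = C ((-(x ^ Fintype.card 𝔽)) ^ n) * (f₁ - emb x V * ω ^ n)
  eq₂ : tw 𝔽 f₂ = C ((-(x ^ Fintype.card 𝔽)) ^ (2 * n)) *
    (f₂ - emb x V * ω ^ n * (f₁ - emb x V * ω ^ n))
  ne₁ : ev x f₁ ≠ 0
  ne₃ : ev x (f₁ ^ 2 - 2 * f₂) ≠ 0

variable {n : ℕ} {V : Polynomial (Polynomial 𝔽)} {f₁ f₂ : K⟦X⟧}

/-- The rational function field does not see the difference structure of `f₁ / ω ^ n` and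
`f₂ / ω ^ (2 n)`: together with the invariant `(-x ^ q) ^ n ω ^ (-n (q - 1))` they are
algebraically independent. -/
theorem IsPair.algIndep (H : IsPair 𝔽 x ω n V f₁ f₂) (hx : CVal.v x = exp 1)
    (hodd : ¬ (Fintype.card 𝔽 - 1) ∣ 2 * n) :
    AlgebraicIndependent (ratField 𝔽 hx)
      ![io (C ((-(x ^ Fintype.card 𝔽)) ^ n)) / io (ω ^ n) ^ (Fintype.card 𝔽 - 1),
        io f₁ / io (ω ^ n), io f₂ / io (ω ^ n) ^ 2] := by
  obtain ⟨p, hp𝔽⟩ := CharP.exists 𝔽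
  obtain ⟨r, hp, hcard⟩ := FiniteField.card 𝔽 p
  have : Fact p.Prime := ⟨hp⟩
  have : CharP K p := charP_of_injective_algebraMap (algebraMap 𝔽 K).injective p
  have : CharP (FractionRing K⟦X⟧) p := charP_of_injective_ringHom
    (f := (io (K := K)).comp C) (io_inj.comp C_injective) p
  have hq := two_le_q 𝔽
  have hn := H.pos
  have hω := H.om
  have hcop : ∀ N i : ℕ, ¬ (Fintype.card 𝔽 - 1) ∣ N → ¬ (Fintype.card 𝔽 - 1) ∣ N * p ^ i := by
    intro N i h h'
    refine h (Nat.Coprime.dvd_of_dvd_mul_right ?_ h')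
    refine Nat.Coprime.pow_right _ ?_
    refine Nat.Coprime.coprime_dvd_right (show p ∣ Fintype.card 𝔽 by
      rw [hcard]; exact dvd_pow_self _ r.pos.ne') ?_
    have := Nat.coprime_self_sub_right (n := Fintype.card 𝔽) (m := 1) (by omega)
    exact (this.2 (by simp)).symm
  have hodd1 : ¬ (Fintype.card 𝔽 - 1) ∣ n := fun h => hodd (h.mul_left 2)
  set β := io (emb x (bpol 𝔽)) with hβ
  have hβ0 : β ≠ 0 := ioemb_ne hx (bpol_ne_zero hx)
  set a := io (C (-(x ^ Fintype.card 𝔽))) with ha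
  have ha0 : a ≠ 0 := (map_ne_zero_iff _ io_inj).2 ((map_ne_zero_iff _ C_injective).2
    (neg_ne_zero.2 (pow_ne_zero _ (x_ne_zero hx))))
  set w := io ω with hw
  have hw0 : w ≠ 0 := (map_ne_zero_iff _ io_inj).2 hω.ne_zero
  have eω : β * tau 𝔽 w = a * w := by
    rw [hw, tau_io, hβ, ← map_mul, hω.beta hx, map_mul]
  have eω' : tau 𝔽 w = a * w / β := by rw [← eω]; field_simp
  set ν := io (emb x V) with hν
  have e1 : tau 𝔽 (io f₁) = a ^ n * (io f₁ - ν * w ^ n) := by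
    rw [tau_io, H.eq₁]; simp [ha, hν, hw]
  have e2 : tau 𝔽 (io f₂) = a ^ (2 * n) * (io f₂ - ν * w ^ n * (io f₁ - ν * w ^ n)) := by
    rw [tau_io, H.eq₂]; simp [ha, hν, hw]
  rw [map_pow io, map_pow C, map_pow io, ← hw, ← ha]
  set s₁ := io f₁ / w ^ n with hs₁
  set s₂ := io f₂ / (w ^ n) ^ 2 with hs₂
  have hs₁' : s₁ * w ^ n = io f₁ := div_mul_cancel₀ _ (pow_ne_zero _ hw0)
  have hs₂' : s₂ * w ^ (2 * n) = io f₂ := by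
    rw [hs₂, mul_comm 2 n, pow_mul]; exact div_mul_cancel₀ _ (by positivity)
  have es₁ : tau 𝔽 s₁ = β ^ n * (s₁ - ν) := by
    rw [hs₁, map_div₀, e1, map_pow, eω', div_pow, mul_pow]
    field_simp
  have es₂ : tau 𝔽 s₂ = β ^ (2 * n) * (s₂ - ν * s₁ + ν ^ 2) := by
    rw [hs₁, hs₂, map_div₀, e2, map_pow, map_pow, eω', div_pow, mul_pow, mul_comm 2 n, pow_mul,
      pow_mul]
    field_simp
    ring
  have hτa : tau 𝔽 a = a ^ Fintype.card 𝔽 := by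
    rw [ha, tau_io, tw_C, map_pow, map_pow]
  set π := a ^ n / (w ^ n) ^ (Fintype.card 𝔽 - 1) with hπ
  have eπ : tau 𝔽 π = β ^ (n * (Fintype.card 𝔽 - 1)) * π := by
    obtain ⟨m, hm⟩ : ∃ m, Fintype.card 𝔽 = m + 1 := ⟨Fintype.card 𝔽 - 1, by omega⟩
    rw [hπ, map_div₀, map_pow, map_pow, map_pow, eω', hτa, hm, Nat.add_sub_cancel]
    simp only [div_pow, mul_pow]
    field_simp
    ring
  have S1 : Step (tau 𝔽) β p (ratField 𝔽 hx) n s₁ ν :=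
    { rigid := rigid_ratField hx
      ne := hβ0
      pos := hn
      mem := emb_mem_ratField hx V
      eq := es₁
      hom := fun i y h => hom_zero hx hω (hcop n i hodd1) h
      notMem := notMem_ratField p hx hω hn H.conv₁ H.eq₁ H.ne₁ hs₁' }
  have h3 : ∀ i, (s₁ ^ 2 - 2 * s₂) ^ p ^ i ∉ ratField 𝔽 hx := by
    refine notMem_ratField p hx hω (N := 2 * n) (by omega) (f := f₁ ^ 2 - 2 * f₂) (W := V ^ 2)
      ?_ ?_ H.ne₃ ?_
    · have : (2 : K⟦X⟧) = C 2 := (map_ofNat C 2).symm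
      rw [this]
      exact (H.conv₁.pow 2).sub ((Conv.C _ _).mul H.conv₂)
    · rw [map_sub, map_pow, map_mul, map_ofNat, H.eq₁, H.eq₂, map_pow (emb x)]
      simp only [map_pow C]; ring
    · rw [map_sub, map_pow, map_mul, map_ofNat, ← hs₁', ← hs₂']; ring
  have S2 : Step (tau 𝔽) β p (adj (ratField 𝔽 hx) s₁) (2 * n) s₂ (ν * s₁ - ν ^ 2) :=
    { rigid := S1.rigid_adj
      ne := hβ0
      pos := by omega
      mem := Subfield.sub_mem _ (Subfield.mul_mem _ (le_adj S1.mem) self_mem_adj)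
        (pow_mem (le_adj S1.mem) 2)
      eq := by rw [es₂]; ring
      hom := fun i y h => hom_zero hx hω (hcop (2 * n) i hodd) h
      notMem := S1.second es₂ fun _ => h3 }
  exact algIndep_three S1.trOver S2.trOver (S2.rigid_adj.trOver hβ0
    (Q := n * (Fintype.card 𝔽 - 1)) (Nat.mul_pos hn (by omega))
    (div_ne_zero (pow_ne_zero _ ha0) (pow_ne_zero _ (pow_ne_zero _ hw0))) eπ)

/-- The functions `ω ^ n, f₁, f₂` and all their simultaneous twists are algebraically
independent over the rational function field. -/
theorem IsPair.algIndep_twk (H : IsPair 𝔽 x ω n V f₁ f₂) (hx : CVal.v x = exp 1)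
    (hodd : ¬ (Fintype.card 𝔽 - 1) ∣ 2 * n) (k : ℕ) :
    AlgebraicIndependent (ratField 𝔽 hx)
      ![io (twk 𝔽 k (ω ^ n)), io (twk 𝔽 k f₁), io (twk 𝔽 k f₂)] := by
  set E := ratField 𝔽 hx with hE
  have hω := H.om
  have hx0 := x_ne_zero hx
  have emem : ∀ (M : IntermediateField E (FractionRing K⟦X⟧)) (P : Polynomial (Polynomial 𝔽)),
      io (emb x P) ∈ M := fun M P => M.algebraMap_mem ⟨_, emb_mem_ratField hx P⟩
  have hCx : C (x ^ Fintype.card 𝔽) = emb x (Polynomial.X ^ Fintype.card 𝔽 :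
      Polynomial (Polynomial 𝔽)) := by simp [emb]
  have mem : ∀ k, ∀ M : IntermediateField E (FractionRing K⟦X⟧), io (twk 𝔽 k (ω ^ n)) ∈ M →
      io (twk 𝔽 k f₁) ∈ M → io (twk 𝔽 k f₂) ∈ M → io (ω ^ n) ∈ M ∧ io f₁ ∈ M ∧ io f₂ ∈ M := by
    intro k
    induction k with
    | zero => exact fun M h1 h2 h3 => ⟨h1, h2, h3⟩
    | succ k ih =>
      intro M h1 h2 h3
      have ebeta := congrArg (fun g => io (twk 𝔽 k (g ^ n))) (hω.beta hx)
      simp only [mul_pow, map_mul, ← map_pow (tw 𝔽)] at ebeta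
      rw [← twk_succ'] at ebeta
      set c : Polynomial (Polynomial 𝔽) := -Polynomial.X ^ Fintype.card 𝔽 with hc
      have ecx : C (-(x ^ Fintype.card 𝔽)) = emb x c := by rw [map_neg, hCx, hc, map_neg]
      have hc0 : io (twk 𝔽 k (emb x c ^ n)) ≠ 0 := by
        rw [← map_pow (emb x), ← emb_sg]
        exact ioemb_ne hx (sg_ne_zero (pow_ne_zero _ (neg_ne_zero.2
          (pow_ne_zero _ Polynomial.X_ne_zero))))
      have m0 : ∀ P : Polynomial (Polynomial 𝔽), io (twk 𝔽 k (emb x P)) ∈ M := fun P => by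
        rw [← emb_sg]; exact emem M _
      have mc : io (twk 𝔽 k (emb x c ^ n)) ∈ M := by rw [← map_pow (emb x)]; exact m0 _
      have m1 : io (twk 𝔽 k (ω ^ n)) ∈ M := by
        have : io (twk 𝔽 k (ω ^ n)) = io (twk 𝔽 k (emb x (bpol 𝔽) ^ n)) *
            io (twk 𝔽 (k + 1) (ω ^ n)) / io (twk 𝔽 k (emb x c ^ n)) := by
          rw [ebeta, ecx, mul_div_cancel_left₀ _ hc0]
        rw [this, ← map_pow (emb x)]
        exact M.div_mem (M.mul_mem (m0 _) h1) mc
      have m2 : io (twk 𝔽 k f₁) ∈ M := by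
        have e := congrArg (fun g => io (twk 𝔽 k g)) H.eq₁
        simp only [map_mul, map_sub, map_pow C, ecx] at e
        rw [← twk_succ'] at e
        have : io (twk 𝔽 k f₁) = io (twk 𝔽 (k + 1) f₁) / io (twk 𝔽 k (emb x c ^ n)) +
            io (twk 𝔽 k (emb x V)) * io (twk 𝔽 k (ω ^ n)) := by
          rw [e, mul_div_cancel_left₀ _ hc0, sub_add_cancel]
        rw [this]
        exact M.add_mem (M.div_mem h2 mc) (M.mul_mem (m0 _) m1)
      have m3 : io (twk 𝔽 k f₂) ∈ M := by
        have e := congrArg (fun g => io (twk 𝔽 k g)) H.eq₂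
        rw [mul_comm 2 n, pow_mul] at e
        simp only [map_mul, map_sub, map_pow C, ecx] at e
        rw [← twk_succ', map_pow (twk 𝔽 k) _ 2, map_pow io _ 2] at e
        have : io (twk 𝔽 k f₂) = io (twk 𝔽 (k + 1) f₂) / io (twk 𝔽 k (emb x c ^ n)) ^ 2 +
            io (twk 𝔽 k (emb x V)) * io (twk 𝔽 k (ω ^ n)) *
              (io (twk 𝔽 k f₁) - io (twk 𝔽 k (emb x V)) * io (twk 𝔽 k (ω ^ n))) := by
          rw [e, mul_div_cancel_left₀ _ (pow_ne_zero _ hc0), sub_add_cancel]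
        rw [this]
        have mv := M.mul_mem (m0 V) m1
        exact M.add_mem (M.div_mem h3 (pow_mem mc 2)) (M.mul_mem mv (M.sub_mem m2 mv))
      exact ih M m1 m2 m3
  refine algIndep_of_mem_adjoin (H.algIndep hx hodd) ?_
  set M := IntermediateField.adjoin E (Set.range
    ![io (twk 𝔽 k (ω ^ n)), io (twk 𝔽 k f₁), io (twk 𝔽 k f₂)]) with hM
  obtain ⟨h1, h2, h3⟩ := mem k M (IntermediateField.subset_adjoin _ _ ⟨0, rfl⟩)
    (IntermediateField.subset_adjoin _ _ ⟨1, rfl⟩) (IntermediateField.subset_adjoin _ _ ⟨2, rfl⟩)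
  have hC : io (C ((-(x ^ Fintype.card 𝔽)) ^ n)) ∈ M := by
    have : C ((-(x ^ Fintype.card 𝔽)) ^ n) = emb x ((-Polynomial.X ^ Fintype.card 𝔽 :
      Polynomial (Polynomial 𝔽)) ^ n) := by
        rw [map_pow (emb x), map_neg (emb x), ← hCx, map_pow C, map_neg C]
    rw [this]; exact emem M _
  intro i
  fin_cases i
  · exact M.div_mem hC (pow_mem h1 _)
  · exact M.div_mem h2 h1
  · exact M.div_mem h3 (pow_mem h1 _)

end TwistedFunctions

/-! ### Algebraic independence of the values at `t = x` -/

section Weights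

/-- The weight `e₀ + e₁ + 2 e₂` of a monomial in three variables. -/
def mwt (e : Fin 3 →₀ ℕ) : ℕ := e 0 + e 1 + 2 * e 2

/-- The monomials of `G` have weight at most `w`. -/
def WLe {A : Type*} [CommRing A] (G : MvPolynomial (Fin 3) A) (w : ℕ) : Prop :=
  ∀ e ∈ G.support, mwt e ≤ w

variable {A : Type*} [CommRing A] {G G' : MvPolynomial (Fin 3) A} {w w' : ℕ}

lemma WLe.mono (h : WLe G w) (hw : w ≤ w') : WLe G w' := fun e he => (h e he).trans hw

lemma WLe.mul (h : WLe G w) (h' : WLe G' w') : WLe (G * G') (w + w') := by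
  classical
  intro e he
  obtain ⟨a, ha, b, hb, rfl⟩ := Finset.mem_add.1 (MvPolynomial.support_mul G G' he)
  have h1 := h a ha
  have h2 := h' b hb
  simp only [mwt, Finsupp.add_apply] at *
  omega

lemma WLe.C (a : A) : WLe (MvPolynomial.C a) 0 := by
  classical
  intro e he
  have : e = 0 := by
    by_contra h
    rw [MvPolynomial.mem_support_iff, MvPolynomial.coeff_C, if_neg (Ne.symm h)] at he
    exact he rfl
  simp [this, mwt]

lemma WLe.X (i : Fin 3) : WLe (MvPolynomial.X i : MvPolynomial (Fin 3) A)
    (mwt (Finsupp.single i 1)) := by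
  classical
  intro e he
  have : Finsupp.single i 1 = e := by
    by_contra h
    rw [MvPolynomial.mem_support_iff, MvPolynomial.coeff_X, if_neg h] at he
    exact he rfl
  simp [this]

lemma WLe.sub (h : WLe G w) (h' : WLe G' w) : WLe (G - G') w := by
  classical
  intro e he
  rcases Finset.mem_union.1 (MvPolynomial.support_sub _ G G' he) with h1 | h1
  · exact h e h1
  · exact h' e h1

lemma WLe.pow (h : WLe G w) (k : ℕ) : WLe (G ^ k) (k * w) := by
  induction k with
  | zero => simpa using WLe.C (1 : A)
  | succ k ih => rw [pow_succ]; exact (ih.mul h).mono (by ring_nf; exact le_rfl)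

/-- The finite set of exponents of weight at most `w`. -/
noncomputable def wset (w : ℕ) : Finset (Fin 3 →₀ ℕ) :=
  (Finset.Iic (Finsupp.equivFunOnFinite.symm fun _ => w)).filter fun e => mwt e ≤ w

lemma mem_wset {e : Fin 3 →₀ ℕ} : e ∈ wset w ↔ mwt e ≤ w := by
  simp only [wset, Finset.mem_filter, Finset.mem_Iic, and_iff_right_iff_imp]
  intro h i
  simp only [mwt] at h
  fin_cases i <;> simp <;> omega

lemma WLe.eval₂ {B : Type*} [CommRing B] (h : WLe G w) (φ : A →+* B) (g : Fin 3 → B) :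
    MvPolynomial.eval₂ φ g G = ∑ e : wset w, φ (G.coeff e.1) * ∏ i, g i ^ e.1 i := by
  rw [MvPolynomial.eval₂_eq', Finset.sum_coe_sort (wset w) fun e => φ (G.coeff e) * ∏ i, g i ^ e i]
  refine Finset.sum_subset (fun e he => mem_wset.2 (h e he)) fun e _ he => ?_
  rw [MvPolynomial.notMem_support_iff.1 he, map_zero, zero_mul]

end Weights

section Values

open WithZero PowerSeries

variable {K : Type*} [Field K] [CVal K]
variable {𝔽 : Type*} [Field 𝔽] [Fintype 𝔽] [Algebra 𝔽 K] {x : K} {ω : K⟦X⟧}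
variable {n : ℕ} {V : Polynomial (Polynomial 𝔽)} {f₁ f₂ : K⟦X⟧}

/-- The values of `ω ^ n, f₁, f₂` at `t = x` satisfy no polynomial relation over `𝔽[x]`: the
monomials of bounded weight form a system of difference equations to which the linear
independence criterion applies. -/
theorem IsPair.values (H : IsPair 𝔽 x ω n V f₁ f₂) (hx : CVal.v x = exp 1)
    (hodd : ¬ (Fintype.card 𝔽 - 1) ∣ 2 * n) (G : MvPolynomial (Fin 3) (Polynomial 𝔽))
    (hG : MvPolynomial.eval₂ (Polynomial.aeval x : Polynomial 𝔽 →ₐ[𝔽] K).toRingHom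
      ![ev x ω ^ n, ev x f₁, ev x f₂] G = 0) : G = 0 := by
  classical
  have hω := H.om
  have hq := two_le_q 𝔽
  have hxa : DLe x ((2 : ℤ) - 1) := dle_x hx
  have c0 : Conv ω 2 := hω.conv2
  have c1 : Conv f₁ 2 := H.conv₁.mono (by omega)
  have c2 : Conv f₂ 2 := H.conv₂.mono (by omega)
  set W := ∑ e ∈ G.support, mwt e with hW
  have hGW : WLe G W := fun e he => Finset.single_le_sum (f := mwt) (fun _ _ => Nat.zero_le _) he
  set F : Fin 3 → K⟦X⟧ := ![ω ^ n, f₁, f₂] with hF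
  have hFc : ∀ i, Conv (F i) 2 := by
    intro i; fin_cases i
    · exact c0.pow n
    · exact c1
    · exact c2
  set ψ : wset W → K⟦X⟧ := fun e => ∏ i, F i ^ e.1 i with hψ
  have hψ3 : ∀ e, ψ e = (ω ^ n) ^ e.1 0 * f₁ ^ e.1 1 * f₂ ^ e.1 2 := fun e => by
    simp [hψ, Fin.prod_univ_three, hF]
  have hψc : ∀ e, Conv (ψ e) 2 := fun e => by
    rw [hψ3]; exact (((c0.pow n).pow _).mul (c1.pow _)).mul (c2.pow _)
  choose cc hcc using hψc
  set c : ℤ := ∑ e, |cc e| with hc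
  have hpb : ∀ e, PB (ψ e) c 2 := fun e => (hcc e).mono ((le_abs_self _).trans
    (Finset.single_le_sum (f := fun e => |cc e|) (fun _ _ => abs_nonneg _) (Finset.mem_univ e)))
  -- the twist acts on the monomials through the polynomials `g₀, g₁, g₂`
  set b := bpol 𝔽 ^ n with hb
  set a : Polynomial (Polynomial 𝔽) := (-Polynomial.X ^ Fintype.card 𝔽) ^ n with ha
  have eax : emb x a = C ((-(x ^ Fintype.card 𝔽)) ^ n) := by
    rw [ha, map_pow (emb x), map_neg (emb x), map_pow C, map_neg C]
    congr 2
    simp [emb]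
  set g₀ : MvPolynomial (Fin 3) (Polynomial (Polynomial 𝔽)) :=
    MvPolynomial.C a * MvPolynomial.X 0 with hg₀
  set g₁ : MvPolynomial (Fin 3) (Polynomial (Polynomial 𝔽)) :=
    MvPolynomial.C a * (MvPolynomial.X 1 - MvPolynomial.C V * MvPolynomial.X 0) with hg₁
  set g₂ : MvPolynomial (Fin 3) (Polynomial (Polynomial 𝔽)) :=
    MvPolynomial.C (a ^ 2) * (MvPolynomial.X 2 - MvPolynomial.C V * MvPolynomial.X 0 *
      (MvPolynomial.X 1 - MvPolynomial.C V * MvPolynomial.X 0)) with hg₂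
  have w0 : WLe (MvPolynomial.X 0 : MvPolynomial (Fin 3) (Polynomial (Polynomial 𝔽))) 1 := by
    simpa [mwt] using WLe.X (A := Polynomial (Polynomial 𝔽)) 0
  have w1 : WLe (MvPolynomial.X 1 : MvPolynomial (Fin 3) (Polynomial (Polynomial 𝔽))) 1 := by
    simpa [mwt] using WLe.X (A := Polynomial (Polynomial 𝔽)) 1
  have w2 : WLe (MvPolynomial.X 2 : MvPolynomial (Fin 3) (Polynomial (Polynomial 𝔽))) 2 := by
    simpa [mwt] using WLe.X (A := Polynomial (Polynomial 𝔽)) 2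
  have wg₀ : WLe g₀ 1 := ((WLe.C a).mul w0).mono (by simp)
  have wv : WLe (MvPolynomial.C V * MvPolynomial.X 0) 1 := ((WLe.C V).mul w0).mono (by simp)
  have wg₁ : WLe g₁ 1 := ((WLe.C a).mul (w1.sub wv)).mono (by simp)
  have wg₂ : WLe g₂ 2 := ((WLe.C (a ^ 2)).mul (w2.sub (wv.mul (w1.sub wv)))).mono (by simp)
  have v0 : MvPolynomial.eval₂ (emb x) F g₀ = emb x b * tw 𝔽 (ω ^ n) := by
    have e := congrArg (fun g => g ^ n) (hω.beta hx)
    simp only [mul_pow] at e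
    rw [hb, map_pow, map_pow, e, hg₀, MvPolynomial.eval₂_mul, MvPolynomial.eval₂_C,
      MvPolynomial.eval₂_X, eax, map_pow]
    rfl
  have v1 : MvPolynomial.eval₂ (emb x) F g₁ = tw 𝔽 f₁ := by
    rw [H.eq₁, ← eax]
    simp [hg₁, hF]
  have v2 : MvPolynomial.eval₂ (emb x) F g₂ = tw 𝔽 f₂ := by
    rw [H.eq₂, mul_comm 2 n, pow_mul, map_pow C _ 2, ← eax, ← map_pow (emb x)]
    rw [hg₂, MvPolynomial.eval₂_mul, MvPolynomial.eval₂_C]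
    simp [hF]
  set Q : wset W → MvPolynomial (Fin 3) (Polynomial (Polynomial 𝔽)) := fun e =>
    MvPolynomial.C (b ^ (W - e.1 0)) * g₀ ^ e.1 0 * g₁ ^ e.1 1 * g₂ ^ e.1 2 with hQ
  have hQW : ∀ e, WLe (Q e) W := by
    intro e
    have h := mem_wset.1 e.2
    refine ((((WLe.C _).mul (wg₀.pow _)).mul (wg₁.pow _)).mul (wg₂.pow _)).mono ?_
    simp only [mwt] at h
    omega
  have key := lin_indep_values (𝔽 := 𝔽) hx (ψ := ψ) hpb (δ := b ^ W)
    (B := Matrix.of fun e e' => (Q e).coeff e'.1) ?_ ?_ ?_ (fun e => G.coeff e.1) ?_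
  · ext1 e
    by_cases he : e ∈ G.support
    · simpa using congrFun key ⟨e, mem_wset.2 (hGW e he)⟩
    · simpa using he
  · intro i
    rw [evp_sg, map_pow, hb, map_pow, evp_bpol]
    refine pow_ne_zero _ (pow_ne_zero _ fun h => ?_)
    rw [sub_eq_zero, ← pow_mul, ← pow_succ] at h
    have := xq_inj (𝔽 := 𝔽) hx (i := 0) (j := i + 1) (by simpa using h)
    omega
  · intro e
    have h1 := (hQW e).eval₂ (emb x) F
    simp only [Matrix.of_apply]
    rw [← h1, hQ]
    simp only [MvPolynomial.eval₂_mul, MvPolynomial.eval₂_pow, MvPolynomial.eval₂_C, v0, v1, v2]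
    have h := mem_wset.1 e.2
    have hle : e.1 0 ≤ W := by simp only [mwt] at h; omega
    rw [hψ3, map_mul, map_mul, map_pow (tw 𝔽) (ω ^ n), map_pow (tw 𝔽) f₁, map_pow (tw 𝔽) f₂,
      map_pow (emb x) b, map_pow (emb x) b]
    obtain ⟨m, hm⟩ := Nat.exists_eq_add_of_le hle
    have hm' : W - e.1 0 = m := by omega
    rw [hm']
    have hp : (emb x b) ^ W = emb x b ^ (e.1 0) * emb x b ^ m := by rw [← pow_add, ← hm]
    rw [hp]
    ring
  · intro k h hh
    have hind := H.algIndep_twk hx hodd k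
    set P : MvPolynomial (Fin 3) (ratField 𝔽 hx) :=
      ∑ e : wset W, MvPolynomial.monomial e.1 ⟨_, emb_mem_ratField hx (h e)⟩ with hP
    have hP0 : P = 0 := by
      refine hind.eq_zero_of_aeval_eq_zero P ?_
      rw [hP, map_sum]
      have := congrArg io hh
      rw [map_zero, map_sum] at this
      rw [← this]
      refine Finset.sum_congr rfl fun e _ => ?_
      rw [MvPolynomial.aeval_monomial, map_mul, Finsupp.prod_fintype _ _ (fun i => pow_zero _),
        hψ3, Fin.prod_univ_three]
      simp only [map_mul, map_pow (twk 𝔽 k) (ω ^ n), map_pow (twk 𝔽 k) f₁,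
        map_pow (twk 𝔽 k) f₂, map_pow io (twk 𝔽 k _)]
      rfl
    funext e
    have h1 := congrArg (MvPolynomial.coeff e.1) hP0
    rw [hP, MvPolynomial.coeff_sum, MvPolynomial.coeff_zero] at h1
    simp only [MvPolynomial.coeff_monomial] at h1
    rw [Finset.sum_eq_single e (fun e' _ hne => if_neg fun h => hne (Subtype.ext h))
      (fun h => absurd (Finset.mem_univ e) h), if_pos rfl] at h1
    have h2 := congrArg Subtype.val h1
    by_contra h3
    exact ioemb_ne hx h3 h2
  · have h1 := hGW.eval₂ (Polynomial.aeval x : Polynomial 𝔽 →ₐ[𝔽] K).toRingHom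
      ![ev x ω ^ n, ev x f₁, ev x f₂]
    rw [hG] at h1
    rw [h1]
    refine Finset.sum_congr rfl fun e _ => ?_
    rw [hψ3, ev_mul hxa (((c0.pow n).pow _).mul (c1.pow _)) (c2.pow _),
      ev_mul hxa ((c0.pow n).pow _) (c1.pow _), ev_pow hxa (c0.pow n), ev_pow hxa c0,
      ev_pow hxa c1, ev_pow hxa c2, Fin.prod_univ_three]
    rfl

end Values

/-! ### Laurent series -/

section Laurent

open WithZero

instance : CVal (LaurentSeries Fq) where
  v := Valued.v
  lim := by
    intro c u hu
    have hu' : ∀ i : ℕ, ∀ m : ℤ, m < i - c → (u i).coeff m = 0 := by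
      intro i
      rw [← LaurentSeries.valuation_le_iff_coeff_lt_eq_zero, neg_sub]
      exact hu i
    refine ⟨HahnSeries.ofSuppBddBelow
      (fun m : ℤ => ∑ i ∈ Finset.range (m + c + 1).toNat, (u i).coeff m) ?_, fun N => ?_⟩
    · refine ⟨-c, fun m hm => ?_⟩
      by_contra h
      refine hm ?_
      have : (m + c + 1).toNat = 0 := by omega
      simp [this]
    · have e : c - (N : ℤ) = -((N : ℤ) - c) := by ring
      rw [e, LaurentSeries.valuation_le_iff_coeff_lt_eq_zero]
      intro m hm
      rw [HahnSeries.coeff_sub, HahnSeries.coeff_sum, sub_eq_zero]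
      change ∑ i ∈ Finset.range (m + c + 1).toNat, (u i).coeff m = _
      refine Finset.sum_subset (f := fun i => (u i).coeff m) (fun i hi => ?_) fun i hi hi' => hu' i m ?_
      · simp only [Finset.mem_range] at *
        omega
      · simp only [Finset.mem_range] at *
        omega

lemma v_theta : CVal.v (theta Fq) = exp 1 := by
  have := LaurentSeries.valuation_single_zpow Fq (-1)
  rw [neg_neg] at this
  exact this

variable {Fq}

lemma tendsto_of_dle {ι : Type*} {l : Filter ι} {f : ι → LaurentSeries Fq} {a : LaurentSeries Fq}
    (h : ∀ N : ℕ, ∀ᶠ i in l, DLe (f i - a) (-(N : ℤ))) : Filter.Tendsto f l (nhds a) := by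
  intro s hs
  obtain ⟨γ, hγ⟩ := Valued.mem_nhds.1 hs
  have h0 : MonoidWithZeroHom.ValueGroup₀.embedding γ.1 ≠ (0 : WithZero (Multiplicative ℤ)) := by
    simp
  obtain ⟨m, hm⟩ : ∃ m : ℤ, exp m = MonoidWithZeroHom.ValueGroup₀.embedding γ.1 :=
    ⟨_, exp_log h0⟩
  have := h (m.natAbs + 1)
  refine Filter.mem_map.2 ?_
  filter_upwards [this] with i hi
  refine hγ ?_
  simp only [Set.mem_ofPred_eq]
  rw [Valuation.restrict_lt_iff_lt_embedding, ← hm]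
  refine lt_of_le_of_lt hi ?_
  rw [exp_lt_exp]
  push_cast
  have := neg_abs_le m
  omega

/-- A family converges to `s` if it is small outside of finite sets whose partial sums tend
to `s`. -/
lemma hasSum_of_dle {ι : Type*} {g : ι → LaurentSeries Fq} {s : LaurentSeries Fq}
    (A : ℕ → Finset ι) (h1 : ∀ D, ∀ a ∉ A D, DLe (g a) (-(D : ℤ)))
    (h2 : Null fun D => ∑ a ∈ A D, g a - s) : HasSum g s := by
  classical
  refine tendsto_of_dle fun N => ?_
  obtain ⟨d₀, hd₀⟩ := h2 N
  set D := max d₀ N with hD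
  filter_upwards [Filter.eventually_ge_atTop (A D)] with F hF
  have e : ∑ a ∈ F, g a - s = ∑ a ∈ F \ A D, g a + (∑ a ∈ A D, g a - s) := by
    rw [← Finset.sum_sdiff hF]
    ring
  rw [e]
  refine (DLe.sum fun a ha => ?_).add (hd₀ D (le_max_left _ _))
  refine (h1 D a (Finset.mem_sdiff.1 ha).2).mono ?_
  have : N ≤ D := le_max_right _ _
  omega

end Laurent

/-! ### Sums over monic polynomials -/

section Sums

open WithZero

variable {Fq}

/-- The monic polynomials of degree less than `D`. -/
def monicsLT (Fq : Type) [Field Fq] [Fintype Fq] (D : ℕ) : Finset (Polynomial Fq) := by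
  classical exact (Finset.range D).biUnion (monics Fq)

lemma mem_monicsLT {D : ℕ} {a : Polynomial Fq} :
    a ∈ monicsLT Fq D ↔ a.Monic ∧ a.natDegree < D := by
  classical
  simp only [monicsLT, Finset.mem_biUnion, Finset.mem_range, mem_monics]
  constructor
  · rintro ⟨d, hd, h1, rfl⟩
    exact ⟨h1, hd⟩
  · rintro ⟨h1, h2⟩
    exact ⟨_, h2, h1, rfl⟩

lemma sum_monicsLT {M : Type*} [AddCommMonoid M] (D : ℕ) (f : Polynomial Fq → M) :
    ∑ a ∈ monicsLT Fq D, f a = ∑ d ∈ Finset.range D, ∑ a ∈ monics Fq d, f a := by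
  classical
  rw [monicsLT, Finset.sum_biUnion]
  intro i _ j _ hij
  refine Finset.disjoint_left.2 fun a h1 h2 => hij ?_
  rw [← (mem_monics.1 h1).2, (mem_monics.1 h2).2]

lemma dle_inv_monic {n : ℕ} (hn : 1 ≤ n) {a : Polynomial Fq} (ha : a.Monic) :
    DLe (Polynomial.aeval (theta Fq) a ^ n)⁻¹ (-(a.natDegree : ℤ)) := by
  have h1 := v_monic (v_theta Fq) (mem_monics.2 ⟨ha, rfl⟩)
  have h2 := v_inv_eq (v_pow_eq h1 n)
  refine (dle_of_v_eq h2).mono ?_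
  have : (1 : ℤ) ≤ n := by exact_mod_cast hn
  nlinarith

/-- The value `ζ(n)` as the limit of a telescoping sum. -/
lemma mzv_one {n : ℕ} (hn : 1 ≤ n) {T : ℕ → LaurentSeries Fq} (hT : Null T)
    (hS : ∀ d, T d - T (d + 1) = psum Fq (theta Fq) d n) : mzv Fq 1 ![n] = T 0 := by
  classical
  set f : {a : Fin 1 → Polynomial Fq //
      (∀ i, (a i).Monic) ∧ ∀ i j : Fin 1, i < j → (a j).degree < (a i).degree} → Polynomial Fq :=
    fun a => a.1 0 with hf
  have hinj : Function.Injective f := fun a b h => Subtype.ext (funext fun i => by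
    rw [Subsingleton.elim i 0]; exact h)
  set g : Polynomial Fq → LaurentSeries Fq :=
    fun a => (Polynomial.aeval (theta Fq) a ^ n)⁻¹ with hg
  have hsum : ∀ D, ∑ a ∈ monicsLT Fq D, g a = T 0 - T D := fun D => by
    rw [sum_monicsLT, ← Finset.sum_range_sub' T]
    exact Finset.sum_congr rfl fun d _ => (hS d).symm
  have key : HasSum (fun a => g (f a)) (T 0) := by
    refine hasSum_of_dle (fun D => (monicsLT Fq D).preimage f hinj.injOn) (fun D a ha => ?_) ?_
    · rw [Finset.mem_preimage, mem_monicsLT] at ha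
      refine (dle_inv_monic hn (a.2.1 0)).mono ?_
      have : ¬ (a.1 0).natDegree < D := fun h => ha ⟨a.2.1 0, h⟩
      omega
    · have e : (fun D => ∑ a ∈ (monicsLT Fq D).preimage f hinj.injOn, g (f a) - T 0) =
          fun D => - T D := by
        funext D
        rw [Finset.sum_preimage f _ _ g, hsum]
        · ring
        · intro a ha h
          refine absurd ⟨⟨fun _ => a, fun _ => (mem_monicsLT.1 ha).1, fun i j h => ?_⟩, rfl⟩ h
          exact absurd h (by rw [Subsingleton.elim i j]; exact lt_irrefl _)
      rw [e]
      intro N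
      obtain ⟨d₀, h⟩ := hT N
      exact ⟨d₀, fun d hd => (h d hd).neg⟩
  rw [mzv, ← key.tsum_eq]
  refine tsum_congr fun a => ?_
  simp [hg, hf]

/-- The value `ζ(n, n)` as the limit of a telescoping sum. -/
lemma mzv_two {n : ℕ} (hn : 1 ≤ n) {T U : ℕ → LaurentSeries Fq} (hT : Null T) (hU : Null U)
    (hS : ∀ d, T d - T (d + 1) = psum Fq (theta Fq) d n)
    (hSU : ∀ d, U d - U (d + 1) = psum Fq (theta Fq) d n * T (d + 1)) :
    mzv Fq 2 ![n, n] = U 0 := by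
  classical
  set f : {a : Fin 2 → Polynomial Fq //
      (∀ i, (a i).Monic) ∧ ∀ i j : Fin 2, i < j → (a j).degree < (a i).degree} →
      (Σ _ : Polynomial Fq, Polynomial Fq) := fun a => ⟨a.1 0, a.1 1⟩ with hf
  have hinj : Function.Injective f := fun a b h => by
    simp only [hf, Sigma.mk.injEq, heq_eq_eq] at h
    refine Subtype.ext (funext fun i => ?_)
    fin_cases i
    · exact h.1
    · exact h.2
  set g : (Σ _ : Polynomial Fq, Polynomial Fq) → LaurentSeries Fq :=
    fun a => (Polynomial.aeval (theta Fq) a.1 ^ n)⁻¹ * (Polynomial.aeval (theta Fq) a.2 ^ n)⁻¹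
    with hg
  set B : ℕ → Finset (Σ _ : Polynomial Fq, Polynomial Fq) := fun D =>
    (monicsLT Fq D).sigma fun a => monicsLT Fq a.natDegree with hB
  have hsum1 : ∀ D, ∑ a ∈ monicsLT Fq D, (Polynomial.aeval (theta Fq) a ^ n)⁻¹ = T 0 - T D :=
    fun D => by
      rw [sum_monicsLT, ← Finset.sum_range_sub' T]
      exact Finset.sum_congr rfl fun d _ => (hS d).symm
  have hsum : ∀ D, ∑ a ∈ B D, g a = U 0 - U D - T D * (T 0 - T D) := fun D => by
    rw [hB, Finset.sum_sigma, sum_monicsLT]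
    have h1 : ∀ d, ∑ a ∈ monics Fq d, ∑ b ∈ monicsLT Fq a.natDegree, g ⟨a, b⟩ =
        (T d - T (d + 1)) * (T 0 - T d) := fun d => by
      rw [hS, psum, Finset.sum_mul]
      refine Finset.sum_congr rfl fun a ha => ?_
      rw [(mem_monics.1 ha).2, ← hsum1, Finset.mul_sum]
    simp only [h1]
    induction D with
    | zero => simp
    | succ D ih =>
      rw [Finset.sum_range_succ, ih]
      have := hSU D
      rw [← hS] at this
      linear_combination -this
  have hpart : ∀ D, DLe (T 0 - T D) 0 := fun D => by
    rw [← hsum1]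
    refine DLe.sum fun a ha => (dle_inv_monic hn (mem_monicsLT.1 ha).1).mono (by omega)
  have key : HasSum (fun a => g (f a)) (U 0) := by
    refine hasSum_of_dle (fun D => (B D).preimage f hinj.injOn) (fun D a ha => ?_) ?_
    · have hlt : (a.1 1).natDegree < (a.1 0).natDegree :=
        Polynomial.natDegree_lt_natDegree (a.2.1 1).ne_zero (a.2.2 0 1 (by decide))
      rw [Finset.mem_preimage, hB, Finset.mem_sigma, mem_monicsLT, mem_monicsLT] at ha
      have : ¬ (a.1 0).natDegree < D := fun h => ha ⟨⟨a.2.1 0, h⟩, a.2.1 1, hlt⟩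
      refine ((dle_inv_monic hn (a.2.1 0)).mul (dle_inv_monic hn (a.2.1 1))).mono ?_
      omega
    · have e : (fun D => ∑ a ∈ (B D).preimage f hinj.injOn, g (f a) - U 0) =
          fun D => - U D - T D * (T 0 - T D) := by
        funext D
        rw [Finset.sum_preimage f _ _ g, hsum]
        · ring
        · rintro ⟨a, b⟩ ha h
          rw [hB, Finset.mem_sigma, mem_monicsLT, mem_monicsLT] at ha
          refine absurd ⟨⟨![a, b], ?_, ?_⟩, rfl⟩ h
          · intro i
            fin_cases i
            · exact ha.1.1
            · exact ha.2.1
          · intro i j hij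
            have hi : i = 0 := by omega
            have hj : j = 1 := by omega
            rw [hi, hj]
            exact Polynomial.degree_lt_degree ha.2.2
      rw [e]
      intro N
      obtain ⟨d₀, h⟩ := hT N
      obtain ⟨d₁, h'⟩ := hU N
      refine ⟨max d₀ d₁, fun d hd => ?_⟩
      refine (h' d ((le_max_right _ _).trans hd)).neg.sub ?_
      simpa using (h d ((le_max_left _ _).trans hd)).mul (hpart d)
  rw [mzv, ← key.tsum_eq]
  refine tsum_congr fun a => ?_
  simp [hg, hf, Fin.prod_univ_two, mul_comm]

lemma null_dle {K : Type*} [Field K] [CVal K] {T : ℕ → K} (hT : Null T) {N d : ℕ}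
    (h : ∀ e, d ≤ e → DLe (T e - T (e + 1)) (-(N : ℤ))) : DLe (T d) (-(N : ℤ)) := by
  obtain ⟨d₀, h₀⟩ := hT N
  have h1 : ∀ m, DLe (T d - T (d + m)) (-(N : ℤ)) := by
    intro m
    induction m with
    | zero => simpa using DLe.zero _
    | succ m ih =>
      have := ih.add (h (d + m) (by omega))
      rwa [sub_add_sub_cancel] at this
  have h2 := (h1 d₀).add (h₀ (d + d₀) (by omega))
  rwa [sub_add_cancel] at h2

end Sums

/-! ### The period -/

section Period

open WithZero PowerSeries

lemma DLe.mul_sub_one {K : Type*} [Field K] [CVal K] {a b : K} {c : ℤ} (hc : c ≤ 0)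
    (ha : DLe (a - 1) c) (hb : DLe (b - 1) c) : DLe (a * b - 1) c := by
  have e : a * b - 1 = (a - 1) * (b - 1) + ((a - 1) + (b - 1)) := by ring
  rw [e]
  exact ((ha.mul hb).mono (by omega)).add (ha.add hb)

lemma DLe.prod_sub_one {K : Type*} [Field K] [CVal K] {ι : Type*} {s : Finset ι} {f : ι → K}
    {c : ℤ} (hc : c ≤ 0) (h : ∀ i ∈ s, DLe (f i - 1) c) : DLe (∏ i ∈ s, f i - 1) c := by
  classical
  induction s using Finset.induction_on with
  | empty => simpa using DLe.zero c
  | insert a s ha ih =>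
    rw [Finset.prod_insert ha]
    exact DLe.mul_sub_one hc (h a (by simp)) (ih fun i hi => h i (by simp [hi]))

variable {Fq}

/-- The infinite product in the definition of the period is `1 / ω(θ)`. -/
lemma tprod_eq (hq : 3 ≤ Fintype.card Fq) {ω : (LaurentSeries Fq)⟦X⟧}
    (hω : IsOm Fq (theta Fq) ω) :
    (∏' i : ℕ, (1 - theta Fq ^ ((1 : ℤ) - (Fintype.card Fq : ℤ) ^ (i + 1)))⁻¹) =
      (ev (theta Fq) ω)⁻¹ := by
  classical
  set q := Fintype.card Fq with hqd
  set x := theta Fq with hxd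
  have hx : CVal.v x = WithZero.exp 1 := v_theta Fq
  have hx0 := x_ne_zero hx
  have hgrow : ∀ i : ℕ, (i : ℤ) + 2 ≤ (q : ℤ) ^ (i + 1) := by
    intro i
    induction i with
    | zero => have : (3 : ℤ) ≤ q := by exact_mod_cast hq
              simp; omega
    | succ i ih =>
      rw [pow_succ]
      have : (3 : ℤ) ≤ q := by exact_mod_cast hq
      push_cast
      nlinarith
  set f : ℕ → LaurentSeries Fq := fun i => 1 - (x ^ q ^ (i + 1))⁻¹ * x with hf
  have hfe : ∀ i : ℕ, (1 - x ^ ((1 : ℤ) - (q : ℤ) ^ (i + 1)))⁻¹ = (f i)⁻¹ := by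
    intro i
    rw [hf, zpow_sub₀ hx0, zpow_one]
    have : x ^ ((q : ℤ) ^ (i + 1)) = x ^ q ^ (i + 1) := by
      rw [← zpow_natCast]; push_cast; rfl
    rw [this, div_eq_mul_inv, mul_comm]
  have hsm : ∀ i : ℕ, DLe ((x ^ q ^ (i + 1))⁻¹ * x) (-(i : ℤ) - 1) := by
    intro i
    have h1 := v_mul_eq (v_inv_eq (v_pow_eq hx (q ^ (i + 1)))) hx
    refine (dle_of_v_eq h1).mono ?_
    have := hgrow i
    push_cast
    linarith
  have hvf : ∀ i, CVal.v (f i) = WithZero.exp 0 := by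
    intro i
    have := v_add_eq (a := (1 : LaurentSeries Fq)) (c := 0) (by simp) (hsm i).neg (by omega)
    rwa [← sub_eq_add_neg] at this
  have hf0 : ∀ i, f i ≠ 0 := fun i => ne_zero_of_v_eq (hvf i)
  have hfi : ∀ i : ℕ, DLe ((f i)⁻¹ - 1) (-(i : ℤ)) := by
    intro i
    have e : (f i)⁻¹ - 1 = (f i)⁻¹ * ((x ^ q ^ (i + 1))⁻¹ * x) := by
      have : (x ^ q ^ (i + 1))⁻¹ * x = 1 - f i := by simp [hf]
      rw [this, mul_sub, mul_one, inv_mul_cancel₀ (hf0 i)]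
    rw [e]
    refine ((dle_of_v_eq (v_inv_eq (hvf i))).mul (hsm i)).mono (by omega)
  have hw := hω.v_ev hq hx
  have hw0 := ne_zero_of_v_eq hw
  have key : HasProd (fun i => (f i)⁻¹) (ev x ω)⁻¹ := by
    refine tendsto_of_dle fun N => ?_
    filter_upwards [Filter.eventually_ge_atTop (Finset.range N)] with F hF
    have e : ∏ i ∈ F, (f i)⁻¹ - (ev x ω)⁻¹ =
        (ev x ω)⁻¹ * ((∏ i ∈ F \ Finset.range N, (f i)⁻¹) * ev x (twk Fq N ω) - 1) := by
      have h1 := hω.ev_iter hx N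
      have hp : ∏ i ∈ Finset.range N, f i ≠ 0 := Finset.prod_ne_zero_iff.2 fun i _ => hf0 i
      have h2 : ev x (twk Fq N ω) = (∏ i ∈ Finset.range N, (f i)⁻¹) * ev x ω := by
        rw [h1, Finset.prod_inv_distrib, inv_mul_cancel_left₀ hp]
      rw [h2, mul_sub, mul_one, ← Finset.prod_sdiff hF]
      congr 1
      rw [← mul_assoc (∏ i ∈ F \ Finset.range N, (f i)⁻¹), mul_comm (ev x ω)⁻¹,
        mul_inv_cancel_right₀ hw0]
    rw [e]
    have h3 : DLe (ev x (twk Fq N ω) - 1) (-(N : ℤ)) :=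
      (hω.near hx N).mono (by have := hgrow N; linarith)
    have h4 : DLe (∏ i ∈ F \ Finset.range N, (f i)⁻¹ - 1) (-(N : ℤ)) := by
      refine DLe.prod_sub_one (by omega) fun i hi => (hfi i).mono ?_
      simp only [Finset.mem_sdiff, Finset.mem_range] at hi
      omega
    refine ((dle_of_v_eq (v_inv_eq hw)).mul (DLe.mul_sub_one (by omega) h4 h3)).mono (by omega)
  rw [← key.tprod_eq]
  exact tprod_congr hfe

end Period

/-! ### The functions attached to `ζ(n)` and `ζ(n,n)` -/

section Pair

open WithZero PowerSeries

variable {Fq}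

/-- The functions whose values at `t = θ` are, up to algebraic factors and powers of the period,
the two zeta values. -/
lemma exists_pair {n : ℕ} (hn : 1 ≤ n) (hq : 3 ≤ Fintype.card Fq)
    {ω : (LaurentSeries Fq)⟦X⟧} (hω : IsOm Fq (theta Fq) ω) :
    ∃ V f₁ f₂, ∃ c : Polynomial Fq, IsPair Fq (theta Fq) ω n V f₁ f₂ ∧
      ev (theta Fq) f₁ =
        (ev (theta Fq) ω ^ n * Polynomial.aeval (theta Fq) c) * mzv Fq 1 ![n] ∧
      ev (theta Fq) f₂ =
        (ev (theta Fq) ω ^ n * Polynomial.aeval (theta Fq) c) ^ 2 * mzv Fq 2 ![n, n] := by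
  set x := theta Fq with hxd
  have hx : CVal.v x = WithZero.exp 1 := v_theta Fq
  have hxa : DLe x ((2 : ℤ) - 1) := dle_x hx
  obtain ⟨m, rfl⟩ : ∃ m, n = m + 1 := ⟨n - 1, by omega⟩
  obtain ⟨c, V, hc, hV, hS⟩ := rep_psum (𝔽 := Fq) hx m
  obtain ⟨f₁, f₂, k1, k2, e1, e2, T, U, hT, hU, hST, hSU, v1, v2⟩ :=
    exists_f Fq hq hx hω (n := m + 1) (V := V) (lt_of_le_of_lt hV (by nlinarith)) hc
      (S := fun d => psum Fq x d (m + 1)) (fun d => by rw [mul_assoc]; exact hS d)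
  have hT1 : ∀ d, DLe (T (d + 1)) (-1) := by
    intro d
    have := null_dle hT (N := 1) (d := d + 1) fun e he => by
      rw [hST]
      refine (dle_psum hx e (m + 1)).mono ?_
      push_cast
      have : (1 : ℤ) ≤ e := by exact_mod_cast (by omega : 1 ≤ e)
      nlinarith
    simpa using this
  have hU0 : DLe (U 0) (-1) := by
    have := null_dle hU (N := 1) (d := 0) fun e he => by
      rw [hSU]
      refine ((dle_psum hx e (m + 1)).mul (hT1 e)).mono ?_
      push_cast
      nlinarith [Int.natCast_nonneg e, Int.natCast_nonneg m,
        mul_nonneg (Int.natCast_nonneg m) (Int.natCast_nonneg e)]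
    simpa using this
  have hT0 : T 0 = 1 + T 1 := by
    have := hST 0
    simp only [psum_zero] at this
    rw [← this]; ring
  have one_not : ∀ a : LaurentSeries Fq, DLe a (-1) → 1 + a ≠ 0 := by
    intro a ha
    exact ne_zero_of_v_eq (v_add_eq (a := (1 : LaurentSeries Fq)) (c := 0) (by simp) ha (by omega))
  have hw0 : ev x ω ≠ 0 := ne_zero_of_v_eq (hω.v_ev hq hx)
  have hc0 : Polynomial.aeval x c ≠ 0 := fun h => hc (aeval_inj hx (by simpa using h))
  have hfac : ev x ω ^ (m + 1) * Polynomial.aeval x c ≠ 0 := mul_ne_zero (pow_ne_zero _ hw0) hc0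
  refine ⟨V, f₁, f₂, c, ⟨hω, hn, k1, k2, e1, e2, ?_, ?_⟩, ?_, ?_⟩
  · rw [v1]
    refine mul_ne_zero hfac ?_
    rw [hT0]
    exact one_not _ (hT1 0)
  · have c1 : Conv f₁ 2 := k1.mono (by omega)
    have c2 : Conv f₂ 2 := k2.mono (by omega)
    have e : ev x (f₁ ^ 2 - 2 * f₂) =
        (ev x ω ^ (m + 1) * Polynomial.aeval x c) ^ 2 * (T 0 ^ 2 - 2 * U 0) := by
      rw [two_mul, ev_sub hxa (c1.pow 2) (c2.add c2), ev_add hxa c2 c2, ev_pow hxa c1, v1, v2]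
      ring
    rw [e]
    refine mul_ne_zero (pow_ne_zero _ hfac) ?_
    have e' : T 0 ^ 2 - 2 * U 0 = 1 + (T 1 + T 1 + T 1 * T 1 - (U 0 + U 0)) := by
      rw [hT0]; ring
    rw [e']
    refine one_not _ ?_
    exact (((hT1 0).add (hT1 0)).add (((hT1 0).mul (hT1 0)).mono (by omega))).sub (hU0.add hU0)
  · rw [v1, mzv_one hn hT hST]
  · rw [v2, mzv_two hn hT hU hST hSU]

end Pair

/-! ### Passage to `k̄` -/

section Final

variable {Fq}

/-- Algebraic independence over `k` of a triple of elements of `k_∞` without polynomial relations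
over `𝔽_q[θ]`, and then over `k̄`. -/
lemma algIndep_kbar (y : Fin 3 → LaurentSeries Fq)
    (h : ∀ G : MvPolynomial (Fin 3) (Polynomial Fq), MvPolynomial.eval₂
      (Polynomial.aeval (theta Fq) : Polynomial Fq →ₐ[Fq] LaurentSeries Fq).toRingHom y G = 0 →
        G = 0) :
    AlgebraicIndependent (kbar Fq) fun i => algebraMap (Kinf Fq) (KinfBar Fq) (y i) := by
  set φ := algebraMap (Kinf Fq) (KinfBar Fq) with hφ
  set ρ : Polynomial Fq →+* KinfBar Fq :=
    φ.comp (Polynomial.aeval (theta Fq) : Polynomial Fq →ₐ[Fq] LaurentSeries Fq).toRingHom with hρ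
  set R := ρ.range with hR
  have hR1 : AlgebraicIndependent R fun i => φ (y i) := by
    rw [algebraicIndependent_iff]
    intro P hP
    obtain ⟨G, rfl⟩ := MvPolynomial.map_surjective _ ρ.rangeRestrict_surjective P
    rw [MvPolynomial.aeval_def, MvPolynomial.eval₂_map] at hP
    have : G = 0 := by
      refine h G (φ.injective ?_)
      rw [map_zero, MvPolynomial.hom_eval₂, ← hP]
      rfl
    rw [this, map_zero]
  have hgen : ∀ a : Fq, φ (algebraMap Fq (Kinf Fq) a) ∈ R := fun a =>
    ⟨Polynomial.C a, by simp [hρ]⟩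
  have hth : thetaBar Fq ∈ R := ⟨Polynomial.X, by simp [hρ, thetaBar, hφ]⟩
  have hle : R ≤ (kSub Fq).toSubring := by
    rintro _ ⟨p, rfl⟩
    change ρ p ∈ kSub Fq
    induction p using Polynomial.induction_on' with
    | add p r hp hr => rw [map_add]; exact add_mem hp hr
    | monomial i a =>
      have e : ρ (Polynomial.monomial i a) =
          φ (algebraMap Fq (Kinf Fq) a) * thetaBar Fq ^ i := by
        simp [hρ, thetaBar, Polynomial.aeval_monomial, hφ]
      have h1 : φ (algebraMap Fq (Kinf Fq) a) ∈ kSub Fq :=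
        Subfield.subset_closure (Or.inl ⟨a, rfl⟩)
      have h2 : thetaBar Fq ∈ kSub Fq := Subfield.subset_closure (Or.inr rfl)
      rw [e]
      exact mul_mem h1 (pow_mem h2 _)
  let _ : Algebra R (kSub Fq) := (Subring.inclusion hle).toAlgebra
  have : IsScalarTower R (kSub Fq) (KinfBar Fq) := IsScalarTower.of_algebraMap_eq fun _ => rfl
  have halg : ∀ a ∈ kSub Fq, IsAlgebraic R a := by
    intro a ha
    have hbase : ∀ r ∈ R, IsAlgebraic R r := fun r hr =>
      isAlgebraic_algebraMap (R := R) (A := KinfBar Fq) ⟨r, hr⟩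
    refine Subfield.closure_induction (p := fun a _ => IsAlgebraic R a) ?_ ?_ ?_ ?_ ?_ ?_ ha
    · rintro _ (⟨a, rfl⟩ | rfl)
      · exact hbase _ (hgen a)
      · exact hbase _ hth
    · exact isAlgebraic_one
    · exact fun a b _ _ h1 h2 => h1.add h2
    · exact fun a _ h1 => h1.neg
    · exact fun a _ h1 => h1.inv
    · exact fun a b _ _ h1 h2 => h1.mul h2
  have : Algebra.IsAlgebraic R (kSub Fq) := ⟨fun a =>
    (isAlgebraic_algebraMap_iff (R := R) (S := kSub Fq) (A := KinfBar Fq)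
      Subtype.val_injective).1 (halg _ a.2)⟩
  have h2 : AlgebraicIndependent (kSub Fq) fun i => φ (y i) := hR1.extendScalars _
  have : Algebra.IsAlgebraic (kSub Fq) (kbar Fq) := algebraicClosure.isAlgebraic _ _
  exact h2.extendScalars _

end Final

/-- If `n ≥ 1` and `2n` is "odd" (i.e. `q − 1 ∤ 2n`), then `π̃`, `ζ(n)`
and `ζ(n,n)` are algebraically independent over `k̄`. -/
theorem pitilde_zeta_algIndep_of_two_n_odd
    (n : ℕ) (hn : 1 ≤ n) (hodd : ¬ (Fintype.card Fq - 1) ∣ (2 * n))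
    (η : KinfBar Fq) (hη : η ^ (Fintype.card Fq - 1) = -thetaBar Fq) :
    AlgebraicIndependent (kbar Fq)
      ![pitilde Fq η,
        algebraMap (Kinf Fq) (KinfBar Fq) (mzv Fq 1 ![n]),
        algebraMap (Kinf Fq) (KinfBar Fq) (mzv Fq 2 ![n, n])] := by
  have hq2 := two_le_q Fq
  have hq : 3 ≤ Fintype.card Fq := by
    by_contra h
    have : Fintype.card Fq - 1 = 1 := by omega
    exact hodd (by rw [this]; exact one_dvd _)
  have hx := v_theta Fq
  obtain ⟨ω, hω⟩ := exists_omega Fq hx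
  obtain ⟨V, f₁, f₂, c, H, z1, z2⟩ := exists_pair hn hq hω
  set φ := algebraMap (Kinf Fq) (KinfBar Fq) with hφ
  have hind := algIndep_kbar ![ev (theta Fq) ω ^ n, ev (theta Fq) f₁, ev (theta Fq) f₂]
    (H.values hx hodd)
  have hw0 : ev (theta Fq) ω ≠ 0 := ne_zero_of_v_eq (hω.v_ev hq hx)
  have hpi : pitilde Fq η = η ^ Fintype.card Fq * (φ (ev (theta Fq) ω))⁻¹ := by
    rw [pitilde, tprod_eq hq hω, map_inv₀]
  have hth0 : thetaBar Fq ≠ 0 := by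
    rw [thetaBar, Ne, map_eq_zero]
    exact x_ne_zero hx
  have hη0 : η ≠ 0 := by
    rintro rfl
    rw [zero_pow (by omega)] at hη
    exact hth0 (neg_eq_zero.1 hη.symm)
  have hthk : thetaBar Fq ∈ kSub Fq := Subfield.subset_closure (Or.inr rfl)
  have hηk : η ∈ kbar Fq := by
    refine (mem_algebraicClosure_iff).2 ?_
    refine IsAlgebraic.of_pow (n := Fintype.card Fq - 1) (by omega) ?_
    rw [hη]
    exact (isAlgebraic_algebraMap (R := kSub Fq) (A := KinfBar Fq) ⟨_, hthk⟩).neg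
  have hck : φ (Polynomial.aeval (theta Fq) c) ∈ kbar Fq := by
    have h1 : ∀ p : Polynomial Fq, φ (Polynomial.aeval (theta Fq) p) ∈ kSub Fq := by
      intro p
      induction p using Polynomial.induction_on' with
      | add p r hp hr => rw [map_add, map_add]; exact add_mem hp hr
      | monomial i a =>
        rw [Polynomial.aeval_monomial, map_mul, map_pow]
        exact mul_mem (Subfield.subset_closure (Or.inl ⟨a, rfl⟩)) (pow_mem hthk _)
    exact (mem_algebraicClosure_iff).2
      (isAlgebraic_algebraMap (R := kSub Fq) (A := KinfBar Fq) ⟨_, h1 c⟩)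
  refine algIndep_of_mem_adjoin hind ?_
  set M := IntermediateField.adjoin (kbar Fq) (Set.range ![pitilde Fq η, φ (mzv Fq 1 ![n]),
    φ (mzv Fq 2 ![n, n])]) with hM
  have m0 : pitilde Fq η ∈ M := IntermediateField.subset_adjoin _ _ ⟨0, rfl⟩
  have m1 : φ (mzv Fq 1 ![n]) ∈ M := IntermediateField.subset_adjoin _ _ ⟨1, rfl⟩
  have m2 : φ (mzv Fq 2 ![n, n]) ∈ M := IntermediateField.subset_adjoin _ _ ⟨2, rfl⟩
  have mη : η ∈ M := M.algebraMap_mem ⟨η, hηk⟩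
  have mc : φ (Polynomial.aeval (theta Fq) c) ∈ M := M.algebraMap_mem ⟨_, hck⟩
  have mw : φ (ev (theta Fq) ω) ∈ M := by
    have hφw : φ (ev (theta Fq) ω) ≠ 0 := by rwa [Ne, map_eq_zero]
    have e : φ (ev (theta Fq) ω) = η ^ Fintype.card Fq * (pitilde Fq η)⁻¹ := by
      rw [hpi]
      have := pow_ne_zero (Fintype.card Fq) hη0
      field_simp
    rw [e]
    exact mul_mem (pow_mem mη _) (inv_mem m0)
  intro i
  fin_cases i
  · change φ (ev (theta Fq) ω ^ n) ∈ M
    rw [map_pow]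
    exact pow_mem mw n
  · change φ (ev (theta Fq) f₁) ∈ M
    rw [z1, map_mul, map_mul, map_pow]
    exact mul_mem (mul_mem (pow_mem mw n) mc) m1
  · change φ (ev (theta Fq) f₂) ∈ M
    rw [z2, map_mul, map_pow, map_mul, map_pow]
    exact mul_mem (pow_mem (mul_mem (pow_mem mw n) mc) 2) m2
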